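/- arXiv:1805.00340 — 3 statements merged into one kernel-verified Lean document; each statement's English description precedes it below -/
import Mathlib

section
/- For every integer k ≥ 2 there exists a constant τ (depending only on k) such that for all integers r ≥ k and all integers c_{k-1} > c_{k-2} > ... > c_1 ≥ 0, writing b = ∑_{i=1}^{k-1} C(c_i, i), one has ∑_{i=1}^{k-1} C(c_i, i+1) ≤ f(r, k, b) ≤ ∑_{i=1}^{k-1} C(c_i, i+1) + τ, where C(n,m) denotes the binomial coefficient. -/
/-- A pair `(𝒜, ℬ)` of families, where `𝒜` consists of `r`-element subsets of `ℕ` and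
`ℬ` of `(r-1)`-element subsets of `ℕ`, is `k`-valid if every `A ∈ 𝒜` has at least `k`
subsets of cardinality `r - 1` belonging to `ℬ`. -/
def ValidPair (r k : ℕ) (𝒜 ℬ : Finset (Finset ℕ)) : Prop :=
  (∀ A ∈ 𝒜, A.card = r) ∧ (∀ B ∈ ℬ, B.card = r - 1) ∧
    ∀ A ∈ 𝒜, k ≤ (ℬ.filter (fun B => B ⊆ A)).card

/-- `f r k b` is the maximum of `|𝒜|` over all `k`-valid pairs `(𝒜, ℬ)` with `|ℬ| = b`. -/
noncomputable def f (r k b : ℕ) : ℕ :=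
  sSup {a : ℕ | ∃ 𝒜 ℬ : Finset (Finset ℕ), ValidPair r k 𝒜 ℬ ∧ ℬ.card = b ∧ 𝒜.card = a}

/-!
Write `k = p + 1`, and call `x ∈ A` removable if `A \ {x} ∈ ℬ`, so that `k`-validity says that
every `A ∈ 𝒜` has more than `p` removable points. If all members of `𝒜` and `ℬ` contain a fixed set
`S` of size `r - k`, deleting `S` leaves `(p + 1)`-sets whose whole shadow lies in `ℬ`. The
Kruskal-Katona theorem then gives the maximum of `#𝒜`, which is the claimed sum when
`#ℬ = ∑ C(c_i, i)`; adding fresh points to an optimal pair of this kind proves the lower bound.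

For the upper bound, splitting `ℬ` into the members through a point `x` and the rest bounds `#𝒜` by
the leading term `n ^ (p + 1) / (p + 1)!` with `n ^ p / p! = #ℬ`, up to a factor `1 + η` and a
linear error. In a pair close to this bound, after discarding a small part, some point `x` turns
almost all of `ℬ` into members of `𝒜`. The link of `x` is then near-extremal with parameter `p - 1`,
and induction on `p` shows that all but `ε * #ℬ` members of `ℬ` contain a common `S` of size
`r - k`.

Let `q` be the number of members of `ℬ` that do not contain `S`. They support at most a constant
times `q ^ (1 + 1 / p)` members of `𝒜`, whereas removing them from the star of `S` lowers its
Kruskal-Katona maximum by a larger amount as soon as `q` exceeds a constant. Hence `q` is bounded,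
and with it the excess of `#𝒜` over the Kruskal-Katona maximum.
-/

open Finset
open scoped FinsetFamily Topology Nat

section ErasurePair

variable {α : Type*} [DecidableEq α]

/-- The points `x ∈ A` for which `A \ {x}` belongs to `ℬ`. -/
def removable (ℬ : Finset (Finset α)) (A : Finset α) : Finset α := {x ∈ A | A.erase x ∈ ℬ}

/-- `(𝒜, ℬ)` is `(p + 1)`-valid for sets of sizes `r + 1` and `r`, phrased through the points whose
removal leads into `ℬ`; both indices are shifted so that no subtraction occurs. -/
structure ErasurePair (r p : ℕ) (𝒜 ℬ : Finset (Finset α)) : Prop where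
  card_upper : ∀ A ∈ 𝒜, #A = r + 1
  card_lower : ∀ B ∈ ℬ, #B = r
  lt_card_removable : ∀ A ∈ 𝒜, p < #(removable ℬ A)

/-- The part of `𝒜` that still has more than `p` removable points after `ℬ` is shrunk to `ℬ'`. -/
def rich (p : ℕ) (𝒜 ℬ' : Finset (Finset α)) : Finset (Finset α) := {A ∈ 𝒜 | p < #(removable ℬ' A)}

variable {r p : ℕ} {𝒜 𝒜' ℬ ℬ' : Finset (Finset α)} {A S : Finset α} {x : α}

lemma mem_removable : x ∈ removable ℬ A ↔ x ∈ A ∧ A.erase x ∈ ℬ := mem_filter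

lemma removable_mono (h : ℬ ⊆ ℬ') : removable ℬ A ⊆ removable ℬ' A :=
  monotone_filter_right _ fun _ _ hx ↦ h hx

lemma card_filter_subset_eq_card_removable (hℬ : ∀ B ∈ ℬ, #B = r) (hA : #A = r + 1) :
    #{B ∈ ℬ | B ⊆ A} = #(removable ℬ A) := by
  suffices {B ∈ ℬ | B ⊆ A} = (removable ℬ A).image A.erase by
    rw [this, card_image_of_injOn]
    exact (erase_injOn A).mono fun x hx ↦ (mem_removable.1 hx).1
  ext B
  simp only [mem_filter, mem_image, mem_removable]
  constructor
  · rintro ⟨hB, hBA⟩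
    obtain ⟨x, hx⟩ : ∃ x, A \ B = {x} := by
      rw [← card_eq_one, card_sdiff_of_subset hBA, hA, hℬ B hB]; omega
    have hxA : x ∈ A := (mem_sdiff.1 (hx ▸ mem_singleton_self x)).1
    have herase : A.erase x = B := by
      rw [← sdiff_singleton_eq_erase, ← hx, Finset.sdiff_sdiff_eq_self hBA]
    exact ⟨x, ⟨hxA, herase ▸ hB⟩, herase⟩
  · rintro ⟨x, ⟨-, hB⟩, rfl⟩
    exact ⟨hB, erase_subset _ _⟩

lemma validPair_iff_erasurePair {𝒜 ℬ : Finset (Finset ℕ)} :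
    ValidPair (r + 1) (p + 1) 𝒜 ℬ ↔ ErasurePair r p 𝒜 ℬ := by
  constructor
  · rintro ⟨hU, hL, hk⟩
    exact ⟨hU, hL, fun A hA ↦ card_filter_subset_eq_card_removable hL (hU A hA) ▸ hk A hA⟩
  · rintro ⟨hU, hL, hk⟩
    refine ⟨hU, hL, fun A hA ↦ ?_⟩
    rw [card_filter_subset_eq_card_removable (r := r) hL (hU A hA)]
    exact hk A hA

lemma rich_subset : rich p 𝒜 ℬ ⊆ 𝒜 := filter_subset _ _

lemma rich_rich (h : ℬ' ⊆ ℬ) : rich p (rich p 𝒜 ℬ) ℬ' = rich p 𝒜 ℬ' := by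
  ext A
  simp only [rich, mem_filter, and_assoc, and_congr_right_iff, and_iff_right_iff_imp]
  exact fun _ hlt ↦ hlt.trans_le (card_le_card (removable_mono h))

/-- The double count behind stability: sets of `M` lying in `ℬ` and containing `S` are sets of `ℬ`
containing `S`. -/
lemma card_filter_not_add_card_inter_le (P : Finset α → Prop) [DecidablePred P]
    (ℬ M : Finset (Finset α)) :
    #{B ∈ ℬ | ¬P B} + #(M ∩ ℬ) ≤ #ℬ + #{A ∈ M | ¬P A} := by
  have hsub : M ∩ ℬ ⊆ {B ∈ ℬ | P B} ∪ {A ∈ M | ¬P A} := by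
    intro B hB
    by_cases hP : P B <;> simp_all
  have hunion := (card_le_card hsub).trans (card_union_le _ _)
  have hsplit : #{B ∈ ℬ | P B} + #{B ∈ ℬ | ¬P B} = #ℬ := card_filter_add_card_filter_not _
  omega

namespace ErasurePair

lemma restrict (h : ErasurePair r p 𝒜 ℬ) (h𝒜 : 𝒜' ⊆ 𝒜) (hℬ : ℬ' ⊆ ℬ)
    (hrem : ∀ A ∈ 𝒜', removable ℬ A ⊆ removable ℬ' A) : ErasurePair r p 𝒜' ℬ' where
  card_upper A hA := h.card_upper A (h𝒜 hA)
  card_lower B hB := h.card_lower B (hℬ hB)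
  lt_card_removable A hA := (h.lt_card_removable A (h𝒜 hA)).trans_le (card_le_card (hrem A hA))

lemma rich (h : ErasurePair r p 𝒜 ℬ) (hℬ : ℬ' ⊆ ℬ) : ErasurePair r p (rich p 𝒜 ℬ') ℬ' where
  card_upper _ hA := h.card_upper _ (rich_subset hA)
  card_lower B hB := h.card_lower B (hℬ hB)
  lt_card_removable _ hA := (mem_filter.1 hA).2

lemma rich_self (h : ErasurePair r p 𝒜 ℬ) : _root_.rich p 𝒜 ℬ = 𝒜 :=
  filter_true_of_mem h.lt_card_removable

lemma filter_not_subset (h : ErasurePair r p 𝒜 ℬ) (S : Finset α) :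
    ErasurePair r p {A ∈ 𝒜 | ¬S ⊆ A} {B ∈ ℬ | ¬S ⊆ B} := by
  refine h.restrict (filter_subset _ _) (filter_subset _ _) fun A hA x hx ↦ ?_
  rw [mem_removable] at *
  exact ⟨hx.1, mem_filter.2 ⟨hx.2, fun hS ↦ (mem_filter.1 hA).2 (hS.trans (erase_subset _ _))⟩⟩

lemma card_le_choose_two (h : ErasurePair r p 𝒜 ℬ) (hp : 1 ≤ p) : #𝒜 ≤ (#ℬ).choose 2 := by
  suffices 𝒜 ⊆ (ℬ.powersetCard 2).image (Finset.sup · id) from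
    (card_le_card this).trans (card_image_le.trans_eq (card_powersetCard _ _))
  intro A hA
  obtain ⟨x, hx, y, hy, hxy⟩ := one_lt_card.1 (hp.trans_lt (h.lt_card_removable A hA))
  rw [mem_removable] at hx hy
  refine mem_image.2 ⟨{A.erase x, A.erase y}, mem_powersetCard.2 ⟨?_, ?_⟩, ?_⟩
  · exact insert_subset hx.2 (singleton_subset_iff.2 hy.2)
  · exact card_pair fun heq ↦ hxy ((erase_inj A hx.1).1 heq)
  · rw [sup_insert, sup_singleton, id, id, sup_eq_union]
    exact subset_antisymm (union_subset (erase_subset _ _) (erase_subset _ _)) fun z hz ↦ by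
      by_cases hzx : z = x <;> simp_all

lemma nonMemberSubfamily (h : ErasurePair r p 𝒜 ℬ) (x : α) :
    ErasurePair r p (𝒜.nonMemberSubfamily x) (ℬ.nonMemberSubfamily x) := by
  refine h.restrict (filter_subset _ _) (filter_subset _ _) fun A hA y hy ↦ ?_
  rw [mem_nonMemberSubfamily] at hA
  rw [mem_removable] at *
  exact ⟨hy.1, mem_nonMemberSubfamily.2 ⟨hy.2, fun hx ↦ hA.2 (mem_of_mem_erase hx)⟩⟩

lemma card_lower_memberSubfamily (h : ErasurePair (r + 1) p 𝒜 ℬ) :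
    ∀ B ∈ ℬ.memberSubfamily x, #B = r := by
  intro B hB
  rw [mem_memberSubfamily] at hB
  simpa [card_insert_of_notMem hB.2] using h.card_lower _ hB.1

lemma card_upper_memberSubfamily (h : ErasurePair r p 𝒜 ℬ) :
    ∀ A ∈ 𝒜.memberSubfamily x, #A = r := by
  intro A hA
  rw [mem_memberSubfamily] at hA
  simpa [card_insert_of_notMem hA.2] using h.card_upper _ hA.1

/-- A removable point of `insert x A` other than `x` is removable for `A` in the link. -/
lemma removable_insert_erase_subset (hx : x ∉ A) :
    (removable ℬ (insert x A)).erase x ⊆ removable (ℬ.memberSubfamily x) A := by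
  intro y hy
  obtain ⟨hyx, hyA, hyB⟩ : y ≠ x ∧ y ∈ insert x A ∧ (insert x A).erase y ∈ ℬ := by
    simpa only [mem_erase, mem_removable] using hy
  rw [erase_insert_of_ne hyx.symm] at hyB
  exact mem_removable.2 ⟨mem_of_mem_insert_of_ne hyA hyx,
    mem_memberSubfamily.2 ⟨hyB, fun h ↦ hx (mem_of_mem_erase h)⟩⟩

lemma memberSubfamily (h : ErasurePair (r + 1) (p + 1) 𝒜 ℬ) (x : α) :
    ErasurePair r p (𝒜.memberSubfamily x) (ℬ.memberSubfamily x) where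
  card_upper := h.card_upper_memberSubfamily
  card_lower := h.card_lower_memberSubfamily
  lt_card_removable A hA := by
    rw [mem_memberSubfamily] at hA
    have hlt := h.lt_card_removable _ hA.1
    have herase := pred_card_le_card_erase (s := removable ℬ (insert x A)) (a := x)
    have hle := card_le_card (removable_insert_erase_subset (ℬ := ℬ) hA.2)
    omega

/-- Here the parameter does not drop: `x` itself is not a removable point of `insert x A`. -/
lemma memberSubfamily_sdiff (h : ErasurePair (r + 1) p 𝒜 ℬ) (x : α) :
    ErasurePair r p (𝒜.memberSubfamily x \ ℬ) (ℬ.memberSubfamily x) where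
  card_upper A hA := h.card_upper_memberSubfamily A (mem_sdiff.1 hA).1
  card_lower := h.card_lower_memberSubfamily
  lt_card_removable A hA := by
    rw [mem_sdiff, mem_memberSubfamily] at hA
    obtain ⟨⟨hA, hxA⟩, hAB⟩ := hA
    have hx : x ∉ removable ℬ (insert x A) := fun hx ↦
      hAB (erase_insert hxA ▸ (mem_removable.1 hx).2)
    calc p < #(removable ℬ (insert x A)) := h.lt_card_removable _ hA
      _ = #((removable ℬ (insert x A)).erase x) := by rw [erase_eq_of_notMem hx]
      _ ≤ _ := card_le_card (removable_insert_erase_subset hxA)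

lemma card_memberSubfamily_inter_le (x : α) (𝒜 ℬ : Finset (Finset α)) :
    #(𝒜.memberSubfamily x ∩ ℬ) ≤ #(ℬ.nonMemberSubfamily x) :=
  card_le_card fun A hA ↦ by
    rw [mem_inter, mem_memberSubfamily] at hA
    exact mem_nonMemberSubfamily.2 ⟨hA.2, hA.1.2⟩

lemma exists_nonempty_memberSubfamily_nonMemberSubfamily (h : ErasurePair r p 𝒜 ℬ) (hℬ : 2 ≤ #ℬ) :
    ∃ x, (ℬ.memberSubfamily x).Nonempty ∧ (ℬ.nonMemberSubfamily x).Nonempty := by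
  obtain ⟨B, hB, B', hB', hne⟩ := one_lt_card.1 (show 1 < #ℬ by omega)
  have hBB' : ¬B ⊆ B' := fun hs ↦
    hne (eq_of_subset_of_card_le hs (by rw [h.card_lower B hB, h.card_lower B' hB']))
  obtain ⟨x, hx, hx'⟩ := not_subset.1 hBB'
  exact ⟨x, ⟨B.erase x, mem_memberSubfamily.2 ⟨by rwa [insert_erase hx], notMem_erase _ _⟩⟩,
    B', mem_nonMemberSubfamily.2 ⟨hB', hx'⟩⟩

lemma exists_eq_add_one (h : ErasurePair r p 𝒜 ℬ) (hx : (ℬ.memberSubfamily x).Nonempty) :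
    ∃ r', r = r' + 1 := by
  obtain ⟨B, hB⟩ := hx
  rw [mem_memberSubfamily] at hB
  exact ⟨#B, by rw [← h.card_lower _ hB.1, card_insert_of_notMem hB.2]⟩

lemma card_le_member_add_rich (h : ErasurePair r p 𝒜 ℬ) (x : α) :
    #𝒜 ≤ #(𝒜.memberSubfamily x) + #(_root_.rich p 𝒜 (ℬ.nonMemberSubfamily x)) := by
  rw [← card_memberSubfamily_add_card_nonMemberSubfamily x 𝒜]
  gcongr
  exact fun A hA ↦ mem_filter.2
    ⟨(mem_nonMemberSubfamily.1 hA).1, (h.nonMemberSubfamily x).lt_card_removable A hA⟩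

/-- A member through `x` either loses `x` to land in `ℬ`, or has all its removable points
witnessed by members of `ℬ` through `x`. -/
lemma card_le_inter_add_nonMember_add_rich (h : ErasurePair r p 𝒜 ℬ) (x : α) :
    #𝒜 ≤ #(𝒜.memberSubfamily x ∩ ℬ) + #(𝒜.nonMemberSubfamily x) +
      #(_root_.rich p 𝒜 {B ∈ ℬ | x ∈ B}) := by
  have hrich : 𝒜.memberSubfamily x \ ℬ ⊆
      (_root_.rich p 𝒜 {B ∈ ℬ | x ∈ B}).memberSubfamily x := by
    intro A hA
    rw [mem_sdiff, mem_memberSubfamily] at hA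
    obtain ⟨⟨hA, hxA⟩, hAB⟩ := hA
    refine mem_memberSubfamily.2 ⟨mem_filter.2 ⟨hA, ?_⟩, hxA⟩
    refine (h.lt_card_removable _ hA).trans_le (card_le_card fun y hy ↦ ?_)
    rw [mem_removable] at *
    refine ⟨hy.1, mem_filter.2 ⟨hy.2, mem_erase.2 ⟨?_, mem_insert_self _ _⟩⟩⟩
    rintro rfl
    exact hAB (erase_insert hxA ▸ hy.2)
  have hle := card_le_card hrich
  have h𝒜 := card_memberSubfamily_add_card_nonMemberSubfamily x 𝒜
  have hR := card_memberSubfamily_add_card_nonMemberSubfamily x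
    (_root_.rich p 𝒜 {B ∈ ℬ | x ∈ B})
  have hsplit := card_inter_add_card_sdiff (𝒜.memberSubfamily x) ℬ
  omega

end ErasurePair

end ErasurePair

section LeadTerm

open Filter

/-- The positive solution `z` of `z ^ p / p! = y`, the leading-order inverse of `z ↦ z.choose p`. -/
noncomputable def binomRoot (p : ℕ) (y : ℝ) : ℝ := (p ! * y) ^ (1 / p : ℝ)

/-- With `n = binomRoot p y` this is `n ^ (p + 1) / (p + 1)!`, the leading term of
`n.choose (p + 1)` when `y` is `n.choose p`. -/
noncomputable def leadTerm (p : ℕ) (y : ℝ) : ℝ := y * binomRoot p y / (p + 1)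

variable {p : ℕ} {b s t y z δ η θ : ℝ}

lemma binomRoot_nonneg (hy : 0 ≤ y) : 0 ≤ binomRoot p y := by
  unfold binomRoot; positivity

lemma binomRoot_pos (hy : 0 < y) : 0 < binomRoot p y := by
  unfold binomRoot; positivity

lemma leadTerm_nonneg (hy : 0 ≤ y) : 0 ≤ leadTerm p y :=
  div_nonneg (mul_nonneg hy (binomRoot_nonneg hy)) (by positivity)

lemma binomRoot_one : binomRoot 1 y = y := by simp [binomRoot]

lemma binomRoot_pow (hp : 1 ≤ p) (hy : 0 ≤ y) : binomRoot p y ^ p = p ! * y := by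
  rw [binomRoot, one_div, Real.rpow_inv_natCast_pow (by positivity) (by omega)]

lemma binomRoot_le_iff (hp : 1 ≤ p) (hy : 0 ≤ y) (hz : 0 ≤ z) :
    binomRoot p y ≤ z ↔ p ! * y ≤ z ^ p := by
  rw [← binomRoot_pow hp hy, pow_le_pow_iff_left₀ (binomRoot_nonneg hy) hz (by omega)]

lemma le_binomRoot_iff (hp : 1 ≤ p) (hy : 0 ≤ y) (hz : 0 ≤ z) :
    z ≤ binomRoot p y ↔ z ^ p ≤ p ! * y := by
  rw [← binomRoot_pow hp hy, pow_le_pow_iff_left₀ hz (binomRoot_nonneg hy) (by omega)]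

lemma binomRoot_mono (hs : 0 ≤ s) (h : s ≤ b) : binomRoot p s ≤ binomRoot p b := by
  unfold binomRoot; gcongr

lemma tendsto_binomRoot_atTop (hp : 1 ≤ p) : Tendsto (binomRoot p) atTop atTop := by
  have hF : (0 : ℝ) < p ! := by positivity
  exact (tendsto_rpow_atTop (by positivity)).comp (tendsto_id.const_mul_atTop hF)

lemma binomRoot_le_of_le_pow_mul (hp : 1 ≤ p) (hs : 0 ≤ s) (hb : 0 ≤ b) (hδ : 0 ≤ δ)
    (h : s ≤ δ ^ p * b) : binomRoot p s ≤ δ * binomRoot p b := by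
  rw [binomRoot_le_iff hp hs (mul_nonneg hδ (binomRoot_nonneg hb)), mul_pow, binomRoot_pow hp hb]
  calc (p ! : ℝ) * s ≤ p ! * (δ ^ p * b) := by gcongr
    _ = δ ^ p * (p ! * b) := by ring

lemma mul_binomRoot_le_of_mul_le (hp : 1 ≤ p) (hb : 0 ≤ b) (hθ : 0 ≤ θ) (hθ1 : θ ≤ 1)
    (h : θ * b ≤ t) : θ * binomRoot p b ≤ binomRoot p t := by
  have hθb : 0 ≤ θ * b := by positivity
  rw [le_binomRoot_iff hp (hθb.trans h) (mul_nonneg hθ (binomRoot_nonneg hb)), mul_pow,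
    binomRoot_pow hp hb]
  calc θ ^ p * (p ! * b) ≤ θ * (p ! * b) := by
        gcongr; exact pow_le_of_le_one hθ hθ1 (by omega)
    _ = p ! * (θ * b) := by ring
    _ ≤ p ! * t := by gcongr

lemma binomRoot_le_of_le_half (hp : 1 ≤ p) (hs : 0 ≤ s) (h : s ≤ b / 2) :
    binomRoot p s ≤ (1 - 1 / (2 * p)) * binomRoot p b := by
  have hp' : (1 : ℝ) ≤ p := by exact_mod_cast hp
  have hle : (1 : ℝ) / (2 * p) ≤ 1 := by
    rw [div_le_one (by positivity)]; linarith
  refine binomRoot_le_of_le_pow_mul hp hs (by linarith) (by linarith) ?_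
  have bernoulli := one_add_mul_le_pow (a := -(1 / (2 * p : ℝ))) (by linarith) p
  have hhalf : 1 + (p : ℝ) * -(1 / (2 * p)) = 1 / 2 := by field_simp; norm_num
  rw [hhalf, ← sub_eq_add_neg] at bernoulli
  calc s ≤ 1 / 2 * b := by linarith
    _ ≤ _ := by gcongr; linarith

lemma le_leadTerm_sub_sub_of_le_half (hp : 1 ≤ p) (hs : 0 ≤ s) (ht : 0 ≤ t) (hb : b = s + t)
    (h : s ≤ b / 2) :
    s * binomRoot p b / (2 * p * (p + 1)) ≤ leadTerm p b - leadTerm p s - leadTerm p t := by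
  have hs' := binomRoot_le_of_le_half hp hs h
  have ht' : binomRoot p t ≤ binomRoot p b := binomRoot_mono ht (by linarith)
  calc s * binomRoot p b / (2 * p * (p + 1)) = s * (1 / (2 * p) * binomRoot p b) / (p + 1) := by
        field_simp
    _ ≤ (s * (binomRoot p b - binomRoot p s) + t * (binomRoot p b - binomRoot p t)) / (p + 1) := by
        have : 0 ≤ t * (binomRoot p b - binomRoot p t) := mul_nonneg ht (by linarith)
        have : s * (1 / (2 * p) * binomRoot p b) ≤ s * (binomRoot p b - binomRoot p s) := by
          gcongr; linarith
        gcongr; linarith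
    _ = _ := by unfold leadTerm; rw [hb]; ring

lemma add_one_mul_pow_mul_le (p : ℕ) (hy : 0 ≤ y) (hz : 0 ≤ z) :
    (p + 1) * y ^ p * z ≤ p * y ^ (p + 1) + z ^ (p + 1) := by
  induction p with
  | zero => simp
  | succ p ih =>
    push_cast
    have hmul : (p + 1) * y ^ p * z * z ≤ (p * y ^ (p + 1) + z ^ (p + 1)) * z := by gcongr
    have hsq : 0 ≤ (p + 1) * y ^ p * (y - z) ^ 2 := by positivity
    linear_combination hmul + hsq

/-- Convexity: the graph of `leadTerm p` lies above its tangent at `t`, of slope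
`binomRoot p t / p`. -/
lemma mul_binomRoot_div_le_leadTerm_sub (hp : 1 ≤ p) (ht : 0 ≤ t) (hb : 0 ≤ b) :
    (b - t) * binomRoot p t / p ≤ leadTerm p b - leadTerm p t := by
  have hb' : b = binomRoot p b ^ p / p ! := by rw [binomRoot_pow hp hb]; field_simp
  have ht' : t = binomRoot p t ^ p / p ! := by rw [binomRoot_pow hp ht]; field_simp
  have young := add_one_mul_pow_mul_le p (binomRoot_nonneg (p := p) hb)
    (binomRoot_nonneg (p := p) ht)
  unfold leadTerm
  set n := binomRoot p b
  set u := binomRoot p t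
  rw [hb', ht', ← sub_nonneg]
  have hdiff : n ^ p / (p ! : ℝ) * n / (p + 1) - u ^ p / (p ! : ℝ) * u / (p + 1)
      - (n ^ p / (p ! : ℝ) - u ^ p / (p ! : ℝ)) * u / p
      = (p * n ^ (p + 1) + u ^ (p + 1) - (p + 1) * n ^ p * u) / (p ! * (p * (p + 1))) := by
    field_simp; ring
  rw [hdiff]
  exact div_nonneg (by linarith) (by positivity)

lemma leadTerm_le_of_le_pow_mul (hp : 1 ≤ p) (hs : 0 ≤ s) (hb : 0 ≤ b) (hδ : 0 ≤ δ)
    (h : s ≤ δ ^ p * b) : leadTerm p s ≤ δ * (s * binomRoot p b / p) := by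
  have hn := binomRoot_nonneg (p := p) hb
  calc leadTerm p s ≤ s * (δ * binomRoot p b) / (p + 1) := by
        unfold leadTerm; gcongr; exact binomRoot_le_of_le_pow_mul hp hs hb hδ h
    _ ≤ s * (δ * binomRoot p b) / p := by gcongr; linarith
    _ = _ := by ring

lemma le_leadTerm_sub_of_le_pow_mul (hp : 1 ≤ p) (hs : 0 ≤ s) (hb : b = s + t) (hb0 : 0 ≤ b)
    (hδ : 0 ≤ δ) (hδ1 : δ ≤ 1) (h : s ≤ δ ^ p * b) :
    (1 - δ) * (s * binomRoot p b / p) ≤ leadTerm p b - leadTerm p t := by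
  have hδb : δ ^ p * b ≤ δ * b := by
    gcongr; exact pow_le_of_le_one hδ hδ1 (by omega)
  have ht : (1 - δ) * b ≤ t := by linarith
  have ht0 : 0 ≤ t := (mul_nonneg (by linarith) hb0).trans ht
  have htn := mul_binomRoot_le_of_mul_le hp hb0 (by linarith) (by linarith) ht
  calc (1 - δ) * (s * binomRoot p b / p) = s * ((1 - δ) * binomRoot p b) / p := by ring
    _ ≤ (b - t) * binomRoot p t / p := by rw [show b - t = s by linarith]; gcongr
    _ ≤ _ := mul_binomRoot_div_le_leadTerm_sub hp ht0 hb0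

lemma pow_mul_le_of_mul_binomRoot_le (hp : 1 ≤ p) (hs : 0 ≤ s) (hb : 0 ≤ b) (hθ : 0 ≤ θ)
    (h : θ * binomRoot (p + 1) b ≤ binomRoot p s) :
    θ ^ p * b ≤ s * binomRoot (p + 1) b / (p + 1) := by
  have hn := binomRoot_nonneg (p := p + 1) hb
  have hpow := binomRoot_pow (p := p + 1) (by omega) hb
  rw [le_binomRoot_iff hp hs (mul_nonneg hθ hn), mul_pow] at h
  set n := binomRoot (p + 1) b
  rw [Nat.factorial_succ, pow_succ] at hpow
  push_cast at hpow
  rw [le_div_iff₀ (by positivity)]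
  refine le_of_mul_le_mul_left (a := (p ! : ℝ)) ?_ (by positivity)
  calc (p ! : ℝ) * (θ ^ p * b * (p + 1)) = θ ^ p * ((p + 1) * p ! * b) := by ring
    _ = θ ^ p * n ^ p * n := by rw [← hpow]; ring
    _ ≤ p ! * s * n := by gcongr
    _ = p ! * (s * n) := by ring

lemma le_pow_mul_of_mul_le {n C : ℝ} (hb : 0 ≤ b) (hn : 0 < n) (hC : C ≤ δ ^ p * n)
    (h : s * n ≤ C * b) : s ≤ δ ^ p * b := by
  refine le_of_mul_le_mul_right (h.trans ?_) hn
  calc C * b ≤ δ ^ p * n * b := by gcongr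
    _ = δ ^ p * b * n := by ring

lemma exists_pos_forall_mul_one_sub (p : ℕ) (hη : 0 < η) :
    ∃ δ > 0, δ ≤ 1 / 2 ∧ 1 ≤ (1 + η) * ((1 - 2 * δ) * (1 - δ) ^ p) := by
  have hcont : Continuous fun δ : ℝ ↦ (1 + η) * ((1 - 2 * δ) * (1 - δ) ^ p) := by fun_prop
  have hlim := hcont.tendsto 0
  have hev := (hlim.eventually_const_lt (u := 1) (by norm_num [hη])).filter_mono
    (nhdsWithin_le_nhds (s := Set.Ioi 0))
  obtain ⟨δ, hδ, hδ0, hδ1⟩ := (hev.and (Ioc_mem_nhdsGT (show (0 : ℝ) < 1 / 2 by norm_num))).exists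
  exact ⟨δ, hδ0, hδ1, hδ.le⟩

lemma le_surplus_of_le_pow_mul (hp : 1 ≤ p) (hs : 0 < s) (hb : b = s + t) (hb0 : 0 ≤ b)
    (hδ0 : 0 ≤ δ) (hδ1 : δ ≤ 1 / 2) (hη : 0 ≤ η) (hδ : 1 ≤ (1 + η) * ((1 - 2 * δ) * (1 - δ) ^ p))
    (hsmall : s ≤ δ ^ (p + 1) * b)
    (hlink : leadTerm (p + 1) b - leadTerm (p + 1) t < leadTerm p s) :
    b ≤ (1 + η) * (leadTerm (p + 1) b - leadTerm (p + 1) s - leadTerm (p + 1) t) := by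
  have hKs := leadTerm_le_of_le_pow_mul (by omega) hs.le hb0 hδ0 hsmall
  have hKt := le_leadTerm_sub_of_le_pow_mul (by omega) hs.le hb hb0 hδ0 (by linarith) hsmall
  have hroot : (1 - δ) * binomRoot (p + 1) b ≤ binomRoot p s := by
    have hlt := hKt.trans_lt hlink
    unfold leadTerm at hlt
    push_cast at hlt
    rw [mul_div_assoc', div_lt_div_iff_of_pos_right (by positivity)] at hlt
    refine (lt_of_mul_lt_mul_left ?_ hs.le).le
    linarith
  have hQ := pow_mul_le_of_mul_binomRoot_le hp hs.le hb0 (by linarith) hroot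
  calc b = 1 * b := (one_mul b).symm
    _ ≤ (1 + η) * ((1 - 2 * δ) * (1 - δ) ^ p) * b := by gcongr
    _ = (1 + η) * ((1 - 2 * δ) * ((1 - δ) ^ p * b)) := by ring
    _ ≤ (1 + η) * ((1 - 2 * δ) * (s * binomRoot (p + 1) b / (p + 1))) := by
        have : 0 ≤ 1 - 2 * δ := by linarith
        gcongr
    _ ≤ _ := by push_cast at hKs hKt; gcongr; linarith

/-- The numerical heart of the induction for the upper bound: for a splitting `b = s + t`, either
the surplus of `leadTerm (p + 1)` pays for the `t` sets that may land in `ℬ`, or the link can be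
bounded with parameter `p`. -/
lemma eventually_leadTerm_split (hp : 1 ≤ p) (hη : 0 < η) :
    ∀ᶠ b : ℝ in atTop, ∀ s t, 0 < s → 0 < t → b = s + t →
      t + (1 + η) * (leadTerm (p + 1) s + leadTerm (p + 1) t) ≤ (1 + η) * leadTerm (p + 1) b ∨
        leadTerm p s + leadTerm (p + 1) t ≤ leadTerm (p + 1) b := by
  obtain ⟨δ, hδ0, hδ1, hδ⟩ := exists_pos_forall_mul_one_sub p hη
  set C : ℝ := 2 * (p + 1 : ℕ) * ((p + 1 : ℕ) + 1)
  have hC0 : 0 < C := by positivity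
  filter_upwards [(tendsto_binomRoot_atTop (p := p + 1) (by omega)).eventually_ge_atTop
    (C / δ ^ (p + 1))] with b hn s t hs ht hb
  have hb0 : 0 < b := by linarith
  have hn0 := binomRoot_pos (p := p + 1) hb0
  have hCn : C ≤ δ ^ (p + 1) * binomRoot (p + 1) b := (div_le_iff₀' (by positivity)).1 hn
  rw [or_iff_not_imp_right, not_le]
  intro hlink
  suffices t ≤ (1 + η) * (leadTerm (p + 1) b - leadTerm (p + 1) s - leadTerm (p + 1) t) by linarith
  rcases le_total t (b / 2) with htb | htb
  · have hsurplus := le_leadTerm_sub_sub_of_le_half (p := p + 1) (by omega) ht.le hs.le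
      (by linarith) htb
    have hCn' : C ≤ binomRoot (p + 1) b :=
      hCn.trans (mul_le_of_le_one_left hn0.le (pow_le_one₀ hδ0.le (by linarith)))
    have : t ≤ t * binomRoot (p + 1) b / C := by rw [le_div_iff₀ hC0]; gcongr
    nlinarith
  · have hsurplus := le_leadTerm_sub_sub_of_le_half (p := p + 1) (by omega) hs.le ht.le hb
      (by linarith)
    rcases le_total b (leadTerm (p + 1) b - leadTerm (p + 1) s - leadTerm (p + 1) t)
      with hbig | hbig
    · nlinarith
    · have hsmall : s ≤ δ ^ (p + 1) * b :=
        le_pow_mul_of_mul_le hb0.le hn0 hCn ((div_le_iff₀' hC0).1 (hsurplus.trans hbig))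
      have := le_surplus_of_le_pow_mul hp hs hb hb0.le hδ0.le hδ1 hη.le hδ hsmall
        (by linarith)
      linarith

end LeadTerm

section UpperBound

open Filter

/-- Every pair of parameter `p` on the ground set `α` satisfies `#𝒜 ≤ (1 + η) * leadTerm p #ℬ` up to
the linear error `C * #ℬ`. -/
def LeadTermBound (α : Type*) [DecidableEq α] (p : ℕ) (η C : ℝ) : Prop :=
  ∀ ⦃r : ℕ⦄ ⦃𝒜 ℬ : Finset (Finset α)⦄, ErasurePair r p 𝒜 ℬ →
    (#𝒜 : ℝ) ≤ (1 + η) * leadTerm p #ℬ + C * #ℬ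

variable {α : Type*} [DecidableEq α] {p r : ℕ} {𝒜 ℬ : Finset (Finset α)} {η η' C : ℝ}

lemma LeadTermBound.mono (h : LeadTermBound α p η C) (hη : η ≤ η') : LeadTermBound α p η' C :=
  fun _ _ ℬ hV ↦ (h hV).trans <| by
    have := leadTerm_nonneg (p := p) (#ℬ).cast_nonneg
    gcongr

lemma ErasurePair.card_le_sq_half (h : ErasurePair r p 𝒜 ℬ) (hp : 1 ≤ p) :
    (#𝒜 : ℝ) ≤ #ℬ * #ℬ / 2 := by
  have hle : (#𝒜 : ℝ) ≤ ((#ℬ).choose 2 : ℕ) := by exact_mod_cast h.card_le_choose_two hp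
  rw [Nat.cast_choose_two] at hle
  have : (0 : ℝ) ≤ #ℬ := Nat.cast_nonneg _
  linarith

lemma leadTermBound_one (hη : 0 ≤ η) : LeadTermBound α 1 η 0 := by
  intro r 𝒜 ℬ hV
  have hle := hV.card_le_sq_half le_rfl
  have hlead : leadTerm 1 #ℬ = (#ℬ : ℝ) * #ℬ / 2 := by rw [leadTerm, binomRoot_one]; norm_num
  have : 0 ≤ η * leadTerm 1 #ℬ := mul_nonneg hη (leadTerm_nonneg (Nat.cast_nonneg _))
  linarith

/-- One step of the induction on `#ℬ`: split `ℬ` into the members through a point and the rest. -/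
lemma ErasurePair.card_le_of_split (hη : 0 ≤ η) {C' : ℝ} (hC : C' ≤ C)
    (hlink : LeadTermBound α p η C') (h : ErasurePair r (p + 1) 𝒜 ℬ) (hℬ : 2 ≤ #ℬ)
    (hsplit : ∀ s t : ℝ, 0 < s → 0 < t → #ℬ = s + t →
      t + (1 + η) * (leadTerm (p + 1) s + leadTerm (p + 1) t) ≤ (1 + η) * leadTerm (p + 1) #ℬ ∨
        leadTerm p s + leadTerm (p + 1) t ≤ leadTerm (p + 1) #ℬ)
    (ih : ∀ ⦃r' : ℕ⦄ ⦃𝒜' ℬ' : Finset (Finset α)⦄, ErasurePair r' (p + 1) 𝒜' ℬ' → #ℬ' < #ℬ →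
      (#𝒜' : ℝ) ≤ (1 + η) * leadTerm (p + 1) #ℬ' + C * #ℬ') :
    (#𝒜 : ℝ) ≤ (1 + η) * leadTerm (p + 1) #ℬ + C * #ℬ := by
  obtain ⟨x, hs, ht⟩ := h.exists_nonempty_memberSubfamily_nonMemberSubfamily hℬ
  obtain ⟨r, rfl⟩ := h.exists_eq_add_one hs
  have hcard := card_memberSubfamily_add_card_nonMemberSubfamily x ℬ
  have hs0 := hs.card_pos
  have ht0 := ht.card_pos
  have hdel := ih (h.nonMemberSubfamily x) (by omega)
  have hstar := ih (h.memberSubfamily_sdiff x) (by omega)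
  have hlink := hlink (h.memberSubfamily x)
  have h𝒜 : (#(𝒜.memberSubfamily x) : ℝ) + #(𝒜.nonMemberSubfamily x) = #𝒜 := by
    exact_mod_cast card_memberSubfamily_add_card_nonMemberSubfamily x 𝒜
  have hinter : (#(𝒜.memberSubfamily x ∩ ℬ) : ℝ) + #(𝒜.memberSubfamily x \ ℬ) =
      #(𝒜.memberSubfamily x) := by exact_mod_cast card_inter_add_card_sdiff _ _
  have hle : (#(𝒜.memberSubfamily x ∩ ℬ) : ℝ) ≤ #(ℬ.nonMemberSubfamily x) := by
    exact_mod_cast ErasurePair.card_memberSubfamily_inter_le x 𝒜 ℬ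
  have hb : (#ℬ : ℝ) = #(ℬ.memberSubfamily x) + #(ℬ.nonMemberSubfamily x) := by
    exact_mod_cast hcard.symm
  have hCb : C * (#ℬ : ℝ) = C * #(ℬ.memberSubfamily x) + C * #(ℬ.nonMemberSubfamily x) := by
    rw [hb]; ring
  rcases hsplit _ _ (by exact_mod_cast hs0) (by exact_mod_cast ht0) hb with hcase | hcase
  · linarith
  · have hC's : C' * #(ℬ.memberSubfamily x) ≤ C * #(ℬ.memberSubfamily x) := by gcongr
    have := mul_le_mul_of_nonneg_left hcase (show 0 ≤ 1 + η by linarith)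
    linarith

lemma exists_leadTermBound_succ (hp : 1 ≤ p) (hη : 0 < η) (h : LeadTermBound α p η C) :
    ∃ C', 0 ≤ C' ∧ LeadTermBound α (p + 1) η C' := by
  obtain ⟨b₀, hb₀⟩ := eventually_atTop.1 <|
    tendsto_natCast_atTop_atTop.eventually (eventually_leadTerm_split hp hη)
  have hC0 : 0 ≤ max C (b₀ + 2) := le_max_of_le_right (by positivity)
  refine ⟨max C (b₀ + 2), hC0, fun r 𝒜 ℬ hV ↦ ?_⟩
  induction hn : #ℬ using Nat.strong_induction_on generalizing r 𝒜 ℬ with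
  | _ n ih =>
  subst hn
  rcases lt_or_ge #ℬ (b₀ + 2) with hsmall | hlarge
  · have hle := hV.card_le_sq_half (by omega)
    have hlead : 0 ≤ (1 + η) * leadTerm (p + 1) #ℬ :=
      mul_nonneg (by linarith) (leadTerm_nonneg (Nat.cast_nonneg _))
    have hb : (#ℬ : ℝ) ≤ max C (b₀ + 2) := le_max_of_le_right (by exact_mod_cast hsmall.le)
    have := mul_le_mul_of_nonneg_right hb (Nat.cast_nonneg (α := ℝ) #ℬ)
    linarith [mul_nonneg (Nat.cast_nonneg (α := ℝ) #ℬ) (Nat.cast_nonneg (α := ℝ) #ℬ)]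
  · exact hV.card_le_of_split hη.le (le_max_left _ _) h (by omega) (hb₀ _ (by omega))
      fun r' 𝒜' ℬ' hV' hlt ↦ ih _ hlt r' 𝒜' ℬ' hV' rfl

variable (α) in
theorem exists_leadTermBound (hp : 1 ≤ p) (hη : 0 < η) : ∃ C, 0 ≤ C ∧ LeadTermBound α p η C := by
  induction p, hp using Nat.le_induction with
  | base => exact ⟨0, le_rfl, leadTermBound_one hη.le⟩
  | succ p hp ih =>
    obtain ⟨C, -, hC⟩ := ih
    exact exists_leadTermBound_succ hp hη hC

end UpperBound

section Cleaning

open Filter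

lemma eventually_const_mul_le_leadTerm {p : ℕ} (hp : 1 ≤ p) (C : ℝ) {ε : ℝ} (hε : 0 < ε) :
    ∀ᶠ b : ℝ in atTop, C * b ≤ ε * leadTerm p b := by
  filter_upwards [(tendsto_binomRoot_atTop hp).eventually_ge_atTop (C * (p + 1) / ε),
    eventually_ge_atTop 0] with b hn hb
  rw [div_le_iff₀ hε] at hn
  rw [leadTerm, mul_div_assoc', le_div_iff₀ (by positivity)]
  nlinarith

lemma mul_le_of_mul_leadTerm_le {p : ℕ} {b b₀ θ : ℝ} (hb₀ : 0 ≤ b₀) (hle : b₀ ≤ b) (hb : 0 < b)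
    (h : θ * leadTerm p b ≤ leadTerm p b₀) : θ * b ≤ b₀ := by
  have hn := binomRoot_pos (p := p) hb
  refine le_of_mul_le_mul_right (a := binomRoot p b / (p + 1)) ?_ (by positivity)
  calc θ * b * (binomRoot p b / (p + 1)) = θ * leadTerm p b := by unfold leadTerm; ring
    _ ≤ b₀ * binomRoot p b₀ / (p + 1) := h
    _ ≤ b₀ * binomRoot p b / (p + 1) := by have := binomRoot_mono (p := p) hb₀ hle; gcongr
    _ = _ := by ring

/-- Passing from `ℬ` to any smaller `ℬ'` costs almost as many members of `𝒜` as the leading term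
predicts. -/
def Clean {α : Type*} [DecidableEq α] (p : ℕ) (ζ : ℝ) (𝒜 ℬ : Finset (Finset α)) : Prop :=
  ∀ ℬ' ⊆ ℬ, (1 - ζ) * (leadTerm p #ℬ - leadTerm p #ℬ') ≤ (#𝒜 : ℝ) - #(rich p 𝒜 ℬ')

variable {α : Type*} [DecidableEq α] {p r : ℕ} {𝒜 ℬ : Finset (Finset α)} {ζ C : ℝ}

/-- `ℬ₀` maximises `#(rich p 𝒜 ℬ₀) - (1 - ζ) * leadTerm p #ℬ₀`. -/
lemma ErasurePair.exists_clean (hζ : 0 < ζ) (hC : 0 ≤ C) (hU : LeadTermBound α p (ζ ^ 2) C)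
    (hV : ErasurePair r p 𝒜 ℬ) (hℬ : ℬ.Nonempty) (hCb : C * #ℬ ≤ ζ ^ 2 * leadTerm p #ℬ)
    (h𝒜 : (1 - ζ ^ 2) * leadTerm p #ℬ ≤ #𝒜) :
    ∃ 𝒜₀ ⊆ 𝒜, ∃ ℬ₀ ⊆ ℬ, ErasurePair r p 𝒜₀ ℬ₀ ∧ Clean p ζ 𝒜₀ ℬ₀ ∧
      (1 - 3 * ζ) * #ℬ ≤ (#ℬ₀ : ℝ) := by
  obtain ⟨ℬ₀, hsub, hmax⟩ := exists_max_image ℬ.powerset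
    (fun ℬ' ↦ (#(_root_.rich p 𝒜 ℬ') : ℝ) - (1 - ζ) * leadTerm p #ℬ') ⟨ℬ, mem_powerset_self _⟩
  rw [mem_powerset] at hsub
  refine ⟨_root_.rich p 𝒜 ℬ₀, rich_subset, ℬ₀, hsub, hV.rich hsub, fun ℬ' hℬ' ↦ ?_, ?_⟩
  · rw [rich_rich hℬ']
    have := hmax ℬ' (mem_powerset.2 (hℬ'.trans hsub))
    linarith
  · have hfull := hmax ℬ (mem_powerset_self _)
    rw [hV.rich_self] at hfull
    have hbound := hU (hV.rich hsub)
    have hle : (#ℬ₀ : ℝ) ≤ #ℬ := by exact_mod_cast card_le_card hsub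
    have hb : (0 : ℝ) < #ℬ := by exact_mod_cast hℬ.card_pos
    have hCb₀ : C * #ℬ₀ ≤ C * #ℬ := by gcongr
    have hK := leadTerm_nonneg (p := p) hb.le
    have hmain : (1 - 2 * ζ) * leadTerm p #ℬ ≤ (1 + ζ) * leadTerm p #ℬ₀ := by
      refine le_of_mul_le_mul_left ?_ hζ
      linarith
    refine mul_le_of_mul_leadTerm_le (p := p) (Nat.cast_nonneg _) hle hb ?_
    refine le_of_mul_le_mul_left (hmain.trans' ?_) (show 0 < 1 + ζ by linarith)
    have : 0 ≤ ζ ^ 2 * leadTerm p #ℬ := by positivity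
    linarith

lemma le_clean_surplus_of_le_half {z w b : ℝ} (hp : 1 ≤ p) (hz : 0 ≤ z) (hw : 0 ≤ w)
    (hb : b = z + w) (h : z ≤ b / 2) (hζ : 0 ≤ ζ) (hζp : 32 * p * ζ ≤ 1) :
    z * binomRoot p b / (4 * p * (p + 1)) ≤
      (1 - ζ) * (leadTerm p b - leadTerm p w) - (1 + ζ) * leadTerm p z := by
  have hp' : (1 : ℝ) ≤ p := by exact_mod_cast hp
  have hsurplus := le_leadTerm_sub_sub_of_le_half hp hz hw hb h
  have hn := binomRoot_nonneg (p := p) (show 0 ≤ b by linarith)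
  have hKz : leadTerm p z ≤ z * binomRoot p b / (p + 1) := by
    unfold leadTerm
    have := binomRoot_mono (p := p) hz (show z ≤ b by linarith)
    gcongr
  have hζ1 : ζ ≤ 1 / 32 := by nlinarith
  set T := z * binomRoot p b / (4 * p * (p + 1)) with hT
  have hT0 : 0 ≤ T := by positivity
  rw [show z * binomRoot p b / (2 * p * (p + 1)) = 2 * T by rw [hT]; field_simp; norm_num]
    at hsurplus
  rw [show z * binomRoot p b / (p + 1) = 4 * p * T by rw [hT]; field_simp] at hKz
  have hmain : (1 - ζ) * (2 * T) ≤ (1 - ζ) * (leadTerm p b - leadTerm p z - leadTerm p w) :=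
    mul_le_mul_of_nonneg_left hsurplus (by linarith)
  have hKz' : 2 * ζ * leadTerm p z ≤ 2 * ζ * (4 * p * T) := by gcongr
  have hpζT : 32 * p * ζ * T ≤ 1 * T := by gcongr
  have hζT : ζ * T ≤ 1 / 32 * T := by gcongr
  linarith

/-- The two hypotheses on `D` are what cleanliness and the upper bound give for the star and for
the deletion of a point. The star turns out to be the small part. -/
lemma eventually_le_of_clean_split (hp : 1 ≤ p) {δ : ℝ} (hδ : 0 < δ) (hδ1 : δ ≤ 1) (hζ : 0 ≤ ζ)
    (hζp : 32 * p * ζ ≤ 1) (hζδ : 8 * ζ ≤ δ) (hC : 0 ≤ C) :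
    ∀ᶠ b : ℝ in atTop, ∀ s t D, 0 < s → 0 < t → b = s + t → D ≤ t →
      (1 - ζ) * (leadTerm p b - leadTerm p t) - (1 + ζ) * leadTerm p s ≤ D + C * s →
      (1 - ζ) * (leadTerm p b - leadTerm p s) - (1 + ζ) * leadTerm p t ≤ D + C * t →
      (1 - δ) * (s * binomRoot p b / p) ≤ D := by
  have hp' : (1 : ℝ) ≤ p := by exact_mod_cast hp
  set d : ℝ := δ / 8 with hd
  set M : ℝ := 4 * p * (p + 1)
  have hM : 0 < M := by positivity
  have hroot := tendsto_binomRoot_atTop hp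
  filter_upwards [hroot.eventually_gt_atTop (2 * M * (1 + C)),
    hroot.eventually_ge_atTop (2 * M / d ^ p), hroot.eventually_ge_atTop (C * p / d)]
    with b hnM hnd hnC s t D hs ht hb hDt hstar hdel
  rw [div_le_iff₀ (by positivity)] at hnd hnC
  have hb0 : 0 < b := by linarith
  have hn := binomRoot_pos (p := p) hb0
  have hmul {z : ℝ} (hz : 0 < z) : 2 * ((1 + C) * z) < z * binomRoot p b / M := by
    rw [lt_div_iff₀ hM]; nlinarith
  rcases le_total t (b / 2) with htb | htb
  · have := le_clean_surplus_of_le_half hp ht.le hs.le (by linarith) htb hζ hζp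
    linarith [hmul ht, mul_pos (show 0 < 1 + C by linarith) ht]
  have hsurplus := le_clean_surplus_of_le_half hp hs.le ht.le hb (by linarith) hζ hζp
  have hsmall : s ≤ d ^ p * b := by
    refine le_pow_mul_of_mul_le hb0.le hn (hnd.trans_eq (mul_comm _ _)) ?_
    have hle : s * binomRoot p b / M ≤ 2 * b := by linarith [hmul hs]
    rw [div_le_iff₀ hM] at hle
    linarith
  have hKs := leadTerm_le_of_le_pow_mul hp hs.le hb0.le (by positivity) hsmall
  have hKt := le_leadTerm_sub_of_le_pow_mul hp hs.le hb hb0.le (by positivity) (by linarith) hsmall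
  have hCs : C * s ≤ d * (s * binomRoot p b / p) := by
    rw [mul_div_assoc', le_div_iff₀ (by linarith)]; nlinarith
  set Q := s * binomRoot p b / p
  have hQ : 0 ≤ Q := by positivity
  have hζ1 : ζ ≤ 1 := by linarith
  have hKt' := mul_le_mul_of_nonneg_left hKt (sub_nonneg.2 hζ1)
  have hKs' := mul_le_mul_of_nonneg_left hKs (show 0 ≤ 1 + ζ by linarith)
  have hζQ : ζ * Q ≤ d * Q := by gcongr; linarith
  rw [show δ = 8 * d by rw [hd]; ring]
  linarith [mul_nonneg (show 0 ≤ d by positivity) hQ]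

/-- `x` lies in some member of `ℬ`, and adding `x` turns as many members of `ℬ` into members of `𝒜`
as it does when `𝒜` and `ℬ` are all the sets of sizes `p + 1` and `p` in a ground set, up to a
factor `1 - δ`. -/
def IsPivot {α : Type*} [DecidableEq α] (p : ℕ) (δ : ℝ) (𝒜 ℬ : Finset (Finset α)) (x : α) : Prop :=
  (ℬ.memberSubfamily x).Nonempty ∧
    (1 - δ) * (#(ℬ.memberSubfamily x) * binomRoot p #ℬ / p) ≤ #(𝒜.memberSubfamily x ∩ ℬ)

lemma card_filter_mem_eq_card_memberSubfamily (x : α) (ℬ : Finset (Finset α)) :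
    #{B ∈ ℬ | x ∈ B} = #(ℬ.memberSubfamily x) :=
  (card_image_of_injOn ((erase_injOn' x).mono fun _ hB ↦ (mem_filter.1 hB).2)).symm

lemma exists_forall_clean_pivot (hp : 1 ≤ p) {δ : ℝ} (hδ : 0 < δ) (hδ1 : δ ≤ 1) (hζ : 0 ≤ ζ)
    (hζp : 32 * p * ζ ≤ 1) (hζδ : 8 * ζ ≤ δ) (hC : 0 ≤ C) (hU : LeadTermBound α p ζ C) :
    ∃ b₀ : ℕ, ∀ ⦃r : ℕ⦄ ⦃𝒜 ℬ : Finset (Finset α)⦄, ErasurePair r p 𝒜 ℬ → Clean p ζ 𝒜 ℬ →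
      b₀ ≤ #ℬ → ∃ x, IsPivot p δ 𝒜 ℬ x := by
  obtain ⟨b₀, hb₀⟩ := eventually_atTop.1 <| tendsto_natCast_atTop_atTop.eventually <|
    eventually_le_of_clean_split hp hδ hδ1 hζ hζp hζδ hC
  refine ⟨b₀ + 2, fun r 𝒜 ℬ hV hclean hb ↦ ?_⟩
  obtain ⟨x, hs, ht⟩ := hV.exists_nonempty_memberSubfamily_nonMemberSubfamily (by omega)
  obtain ⟨r, rfl⟩ := hV.exists_eq_add_one hs
  have hstar := hclean {B ∈ ℬ | x ∈ B} (filter_subset _ _)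
  rw [card_filter_mem_eq_card_memberSubfamily] at hstar
  have hdel := hclean (ℬ.nonMemberSubfamily x) (filter_subset _ _)
  have hboundStar := hU (hV.memberSubfamily_sdiff x)
  have hboundDel := hU (hV.nonMemberSubfamily x)
  have hlostStar : (#𝒜 : ℝ) ≤ #(𝒜.memberSubfamily x) + #(rich p 𝒜 (ℬ.nonMemberSubfamily x)) := by
    exact_mod_cast hV.card_le_member_add_rich x
  have hlostDel : (#𝒜 : ℝ) ≤ #(𝒜.memberSubfamily x ∩ ℬ) + #(𝒜.nonMemberSubfamily x) +
      #(rich p 𝒜 {B ∈ ℬ | x ∈ B}) := by exact_mod_cast hV.card_le_inter_add_nonMember_add_rich x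
  have hinter : (#(𝒜.memberSubfamily x ∩ ℬ) : ℝ) + #(𝒜.memberSubfamily x \ ℬ) =
      #(𝒜.memberSubfamily x) := by exact_mod_cast card_inter_add_card_sdiff _ _
  refine ⟨x, hs, hb₀ #ℬ (by omega) _ #(ℬ.nonMemberSubfamily x) _ (by exact_mod_cast hs.card_pos)
    (by exact_mod_cast ht.card_pos) ?_ ?_ (by linarith) (by linarith)⟩
  · exact_mod_cast (card_memberSubfamily_add_card_nonMemberSubfamily x ℬ).symm
  · exact_mod_cast ErasurePair.card_memberSubfamily_inter_le x 𝒜 ℬ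

variable (α) in
lemma exists_near_extremal_pivot (hp : 1 ≤ p) {δ : ℝ} (hδ : 0 < δ) (hδ1 : δ ≤ 1 / 2) :
    ∃ η > (0 : ℝ), ∀ N : ℕ, ∃ b₁ : ℕ, ∀ ⦃r : ℕ⦄ ⦃𝒜 ℬ : Finset (Finset α)⦄, ErasurePair r p 𝒜 ℬ →
      b₁ ≤ #ℬ → (1 - η) * leadTerm p #ℬ ≤ #𝒜 → ∃ 𝒜₀ ⊆ 𝒜, ∃ ℬ₀ ⊆ ℬ, ∃ x, ErasurePair r p 𝒜₀ ℬ₀ ∧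
        (1 - δ) * #ℬ ≤ (#ℬ₀ : ℝ) ∧ N ≤ #ℬ₀ ∧ IsPivot p δ 𝒜₀ ℬ₀ x := by
  have hp' : (1 : ℝ) ≤ p := by exact_mod_cast hp
  set ζ : ℝ := min (1 / (32 * p)) (δ / 8)
  have hζ0 : 0 < ζ := lt_min (by positivity) (by positivity)
  have hζp : 32 * p * ζ ≤ 1 := (le_div_iff₀' (by positivity)).1 (min_le_left _ _)
  have hζδ : ζ ≤ δ / 8 := min_le_right _ _
  obtain ⟨C, hC, hU⟩ := exists_leadTermBound α hp (η := ζ ^ 2) (by positivity)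
  obtain ⟨b₀, hpivot⟩ := exists_forall_clean_pivot hp hδ (by linarith) hζ0.le hζp (by linarith) hC
    (hU.mono (show ζ ^ 2 ≤ ζ by nlinarith))
  obtain ⟨b₂, hb₂⟩ := eventually_atTop.1 <| tendsto_natCast_atTop_atTop.eventually <|
    eventually_const_mul_le_leadTerm hp C (ε := ζ ^ 2) (by positivity)
  refine ⟨ζ ^ 2, by positivity, fun N ↦ ⟨b₂ + 2 * (N + b₀) + 1, fun r 𝒜 ℬ hV hb h𝒜 ↦ ?_⟩⟩
  obtain ⟨𝒜₀, h𝒜₀, ℬ₀, hℬ₀, hV₀, hclean, hcard⟩ := hV.exists_clean hζ0 hC hU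
    (card_pos.1 (by omega)) (hb₂ _ (by omega)) h𝒜
  have hlarge : (1 - δ) * #ℬ ≤ (#ℬ₀ : ℝ) := hcard.trans' (by gcongr; linarith)
  have hbig : N + b₀ ≤ #ℬ₀ := by
    have : (2 * (N + b₀) : ℝ) ≤ #ℬ := by exact_mod_cast (by omega : 2 * (N + b₀) ≤ #ℬ)
    have : (N + b₀ : ℝ) ≤ #ℬ₀ := by nlinarith
    exact_mod_cast this
  obtain ⟨x, hx⟩ := hpivot hV₀ hclean (by omega)
  exact ⟨𝒜₀, h𝒜₀, ℬ₀, hℬ₀, x, hV₀, hlarge, by omega, hx⟩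

end Cleaning

section Stability

open Filter

/-- Quantitative stability: if `#ℬ ≥ b₁` and `#𝒜` is within a factor `1 - η` of the leading term,
then all but `ε * #ℬ` members of `ℬ` contain a common set of size `r - p`. -/
def StableAt (α : Type*) [DecidableEq α] (p : ℕ) (ε η : ℝ) (b₁ : ℕ) : Prop :=
  ∀ ⦃r : ℕ⦄ ⦃𝒜 ℬ : Finset (Finset α)⦄,
    ErasurePair r p 𝒜 ℬ → b₁ ≤ #ℬ → (1 - η) * leadTerm p #ℬ ≤ #𝒜 →
      ∃ S : Finset α, #S + p = r ∧ #{B ∈ ℬ | ¬S ⊆ B} ≤ ε * #ℬ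

/-- Near-extremal pairs with parameter `p` are nearly contained in a star. -/
def Stable (α : Type*) [DecidableEq α] (p : ℕ) : Prop :=
  ∀ ε > (0 : ℝ), ∃ η > (0 : ℝ), ∃ b₁ : ℕ, StableAt α p ε η b₁

variable {α : Type*} [DecidableEq α] {p r : ℕ} {𝒜 ℬ : Finset (Finset α)}

lemma ErasurePair.subset_of_memberSubfamily_eq_singleton {x : α} {S : Finset α}
    (hV : ErasurePair (r + 1) 1 𝒜 ℬ) (hS : ℬ.memberSubfamily x = {S}) :
    ∀ A ∈ 𝒜.memberSubfamily x, S ⊆ A := by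
  intro A hA
  obtain ⟨y, hy⟩ := card_pos.1 ((hV.memberSubfamily x).lt_card_removable A hA)
  rw [mem_removable, hS, mem_singleton] at hy
  exact hy.2 ▸ erase_subset _ _

lemma card_filter_not_le_of_le_card_inter {M ℬ₀ : Finset (Finset α)} (P : Finset α → Prop)
    [DecidablePred P] (hℬ₀ : ℬ₀ ⊆ ℬ) {β θ : ℝ} (hβ : #{A ∈ M | ¬P A} ≤ β * #ℬ₀)
    (hθ : θ * #ℬ₀ ≤ #(M ∩ ℬ₀)) (hθβ : 0 ≤ θ - β) {δ : ℝ} (hδ : (1 - δ) * #ℬ ≤ (#ℬ₀ : ℝ)) :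
    #{B ∈ ℬ | ¬P B} ≤ (1 - (θ - β) * (1 - δ)) * #ℬ := by
  have hcount : (#{B ∈ ℬ | ¬P B} : ℝ) + #(M ∩ ℬ) ≤ #ℬ + #{A ∈ M | ¬P A} := by
    exact_mod_cast card_filter_not_add_card_inter_le P ℬ M
  have hinter : (#(M ∩ ℬ₀) : ℝ) ≤ #(M ∩ ℬ) := by
    exact_mod_cast card_le_card (inter_subset_inter_left hℬ₀)
  linarith [mul_le_mul_of_nonneg_left hδ hθβ]

lemma stable_one : Stable α 1 := by
  intro ε hε
  set δ : ℝ := min (1 / 4) (ε / 4)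
  have hδ0 : 0 < δ := lt_min (by norm_num) (by positivity)
  have hδ1 : δ ≤ 1 / 4 := min_le_left _ _
  have hδε : δ ≤ ε / 4 := min_le_right _ _
  obtain ⟨η, hη, hpivot⟩ := exists_near_extremal_pivot α le_rfl hδ0 (by linarith)
  obtain ⟨b₁, hb₁⟩ := hpivot 1
  refine ⟨η, hη, b₁, fun r 𝒜 ℬ hV hb h𝒜 ↦ ?_⟩
  obtain ⟨𝒜₀, -, ℬ₀, hℬ₀, x, hV₀, hcard, hpos, hx, hle⟩ := hb₁ hV hb h𝒜
  obtain ⟨r, rfl⟩ := hV₀.exists_eq_add_one hx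
  rw [binomRoot_one, Nat.cast_one, div_one] at hle
  have hpos' : (1 : ℝ) ≤ #ℬ₀ := by exact_mod_cast hpos
  have hinter : (#(𝒜₀.memberSubfamily x ∩ ℬ₀) : ℝ) ≤ #ℬ₀ := by
    exact_mod_cast card_le_card inter_subset_right
  have hsingle : #(ℬ₀.memberSubfamily x) = 1 := by
    refine le_antisymm (not_lt.1 fun hlt ↦ ?_) hx.card_pos
    have htwo : (2 : ℝ) ≤ #(ℬ₀.memberSubfamily x) := by exact_mod_cast hlt
    nlinarith [mul_le_mul_of_nonneg_right htwo (show (0 : ℝ) ≤ #ℬ₀ by linarith)]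
  obtain ⟨S, hS⟩ := card_eq_one.1 hsingle
  refine ⟨S, by rw [hV₀.card_lower_memberSubfamily S (hS ▸ mem_singleton_self S)], ?_⟩
  have hbad : #{A ∈ 𝒜₀.memberSubfamily x | ¬S ⊆ A} = 0 := by
    simpa [filter_eq_empty_iff] using hV₀.subset_of_memberSubfamily_eq_singleton hS
  rw [hsingle, Nat.cast_one, one_mul] at hle
  refine (card_filter_not_le_of_le_card_inter (S ⊆ ·) hℬ₀ (β := 0) (by simp [hbad]) hle
    (by linarith) hcard).trans ?_
  gcongr
  nlinarith

lemma mul_binomRoot_le_binomRoot_succ {s b θ : ℝ} (hp : 1 ≤ p) (hs : 0 < s) (hb : 0 < b)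
    (hθ : 0 ≤ θ) (hθ1 : θ ≤ 1) (h : θ * (s * binomRoot (p + 1) b / (p + 1)) ≤ b) :
    θ * binomRoot p s ≤ binomRoot (p + 1) b := by
  have hn := binomRoot_pos (p := p + 1) hb
  have hs' := binomRoot_pow hp hs.le
  have hb' := binomRoot_pow (p := p + 1) (by omega) hb.le
  rw [Nat.factorial_succ, pow_succ] at hb'
  push_cast at hb'
  set n := binomRoot (p + 1) b
  refine le_of_pow_le_pow_left₀ (n := p) (by omega) hn.le ?_
  rw [mul_pow, hs']
  refine le_of_mul_le_mul_right ?_ hn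
  rw [mul_div_assoc', div_le_iff₀ (by positivity)] at h
  calc θ ^ p * (p ! * s) * n ≤ θ * (p ! * s) * n := by
        gcongr; exact pow_le_of_le_one hθ hθ1 (by omega)
    _ = p ! * (θ * (s * n)) := by ring
    _ ≤ p ! * (b * (p + 1)) := by gcongr
    _ = n ^ p * n := by rw [hb']; ring

lemma mul_binomRoot_le_of_le_leadTerm {s δ C n : ℝ} (hs : 0 < s) (hδ : 0 ≤ δ) (hn : 0 ≤ n)
    (h : (1 - δ) * (s * n / (p + 1)) ≤ (1 + δ) * leadTerm p s + C * s)
    (hC : (p + 1) * C ≤ δ * n) : (1 - 3 * δ) * n ≤ binomRoot p s := by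
  have hmul : (1 - δ) * n ≤ (1 + δ) * binomRoot p s + (p + 1) * C := by
    refine le_of_mul_le_mul_left (a := s / (p + 1)) ?_ (by positivity)
    calc s / (p + 1) * ((1 - δ) * n) = (1 - δ) * (s * n / (p + 1)) := by ring
      _ ≤ (1 + δ) * leadTerm p s + C * s := h
      _ = _ := by unfold leadTerm; field_simp
  refine le_of_mul_le_mul_left (a := 1 + δ) ?_ (by linarith)
  have : 0 ≤ δ * δ * n := by positivity
  linarith

lemma leadTerm_bounds_of_pivot {s b D δ : ℝ} (hp : 1 ≤ p) (hs : 0 < s) (hb : 0 < b) (hδ : 0 < δ)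
    (hδ1 : δ ≤ 1 / 6) (hpivot : (1 - δ) * (s * binomRoot (p + 1) b / (p + 1)) ≤ D) (hDb : D ≤ b) :
    (1 - 2 * δ) * leadTerm p s ≤ D ∧ leadTerm p s ≤ 4 * b := by
  have hroot := mul_binomRoot_le_binomRoot_succ hp hs hb (by linarith) (by linarith)
    (hpivot.trans hDb)
  have hK : (1 - δ) * leadTerm p s ≤ s * binomRoot (p + 1) b / (p + 1) := by
    calc (1 - δ) * leadTerm p s = s * ((1 - δ) * binomRoot p s) / (p + 1) := by
          unfold leadTerm; ring
      _ ≤ _ := by gcongr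
  have hK0 := leadTerm_nonneg (p := p) hs.le
  have hsq : (1 - δ) * ((1 - δ) * leadTerm p s) ≤ D :=
    (mul_le_mul_of_nonneg_left hK (by linarith)).trans hpivot
  constructor
  · linarith [mul_nonneg (mul_nonneg hδ.le hδ.le) hK0]
  · have : 1 / 2 * (1 / 2 * leadTerm p s) ≤ (1 - δ) * ((1 - δ) * leadTerm p s) := by
      gcongr <;> linarith
    linarith

lemma one_sub_mul_le_of_pivot {s b D δ : ℝ} (hp : 1 ≤ p) (hs : 0 ≤ s) (hb : 0 ≤ b) (hδ : 0 ≤ δ)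
    (hδ1 : δ ≤ 1 / 6) (hpivot : (1 - δ) * (s * binomRoot (p + 1) b / (p + 1)) ≤ D)
    (hroot : (1 - 3 * δ) * binomRoot (p + 1) b ≤ binomRoot p s) :
    (1 - 4 * p * δ) * b ≤ D := by
  have hp' : (1 : ℝ) ≤ p := by exact_mod_cast hp
  have hpow := pow_mul_le_of_mul_binomRoot_le hp hs hb (by linarith) hroot
  have bernoulli := one_add_mul_le_pow (a := -(3 * δ)) (by linarith) p
  rw [← sub_eq_add_neg] at bernoulli
  have hcoeff : 1 - 4 * p * δ ≤ (1 - δ) * (1 + p * -(3 * δ)) := by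
    have : δ ≤ p * δ := le_mul_of_one_le_left hδ hp'
    have : 0 ≤ 3 * p * δ * δ := by positivity
    linarith
  have hδ' : 0 ≤ 1 - δ := by linarith
  calc (1 - 4 * p * δ) * b ≤ (1 - δ) * (1 + p * -(3 * δ)) * b := by gcongr
    _ ≤ (1 - δ) * (1 - 3 * δ) ^ p * b := by gcongr
    _ = (1 - δ) * ((1 - 3 * δ) ^ p * b) := by ring
    _ ≤ _ := (mul_le_mul_of_nonneg_left hpow hδ').trans hpivot

/-- The members avoiding `S` form a pair of their own, to which the upper bound applies. -/
lemma ErasurePair.card_filter_not_subset_le {δ C ε : ℝ} (hδ1 : δ ≤ 1) (hC : 0 ≤ C)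
    (hU : LeadTermBound α p δ C) (hV : ErasurePair r p 𝒜 ℬ) {S : Finset α}
    (hS : #{B ∈ ℬ | ¬S ⊆ B} ≤ ε * #ℬ) :
    #{A ∈ 𝒜 | ¬S ⊆ A} ≤ ε * (2 * leadTerm p #ℬ + C * #ℬ) := by
  have hbound := hU (hV.filter_not_subset S)
  set q : ℝ := ((#{B ∈ ℬ | ¬S ⊆ B} : ℕ) : ℝ)
  have hqb : q ≤ #ℬ := Nat.cast_le.2 (card_filter_le _ _)
  have hq0 : 0 ≤ q := Nat.cast_nonneg _
  have hroot := binomRoot_mono (p := p) hq0 hqb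
  have hroot0 := binomRoot_nonneg (p := p) (hq0.trans hqb)
  have hK : leadTerm p q ≤ ε * leadTerm p #ℬ := by
    calc leadTerm p q ≤ q * binomRoot p #ℬ / (p + 1) := by unfold leadTerm; gcongr
      _ ≤ ε * #ℬ * binomRoot p #ℬ / (p + 1) := by gcongr
      _ = _ := by unfold leadTerm; ring
  have hK0 := leadTerm_nonneg (p := p) hq0
  calc _ ≤ (1 + δ) * leadTerm p q + C * q := hbound
    _ ≤ 2 * (ε * leadTerm p #ℬ) + C * (ε * #ℬ) := by gcongr; linarith
    _ = _ := by ring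

lemma ErasurePair.link_bounds_of_isPivot {x : α} {δ C : ℝ} (hp : 1 ≤ p) (hδ : 0 < δ)
    (hδ1 : δ ≤ 1 / 6) (hU : LeadTermBound α p δ C) (hV : ErasurePair (r + 1) (p + 1) 𝒜 ℬ)
    (hx : IsPivot (p + 1) δ 𝒜 ℬ x) (hCn : (p + 1) * C ≤ δ * binomRoot (p + 1) #ℬ) :
    (1 - 3 * δ) * binomRoot (p + 1) #ℬ ≤ binomRoot p #(ℬ.memberSubfamily x) ∧
      (1 - 2 * δ) * leadTerm p #(ℬ.memberSubfamily x) ≤ #(𝒜.memberSubfamily x) ∧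
      2 * leadTerm p #(ℬ.memberSubfamily x) + C * #(ℬ.memberSubfamily x) ≤ 10 * #ℬ ∧
      (1 - 4 * p * δ) * #ℬ ≤ #(𝒜.memberSubfamily x ∩ ℬ) := by
  obtain ⟨hpos, hpivot⟩ := hx
  push_cast at hpivot
  have hlink := hU (hV.memberSubfamily x)
  have hD : (#(𝒜.memberSubfamily x ∩ ℬ) : ℝ) ≤ #(𝒜.memberSubfamily x) := by
    exact_mod_cast card_le_card inter_subset_left
  have hDb : (#(𝒜.memberSubfamily x ∩ ℬ) : ℝ) ≤ #ℬ := by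
    exact_mod_cast card_le_card inter_subset_right
  have hs : (0 : ℝ) < #(ℬ.memberSubfamily x) := by exact_mod_cast hpos.card_pos
  have hb : (0 : ℝ) < #ℬ := by
    exact_mod_cast hpos.card_pos.trans_le card_image_le |>.trans_le (card_filter_le _ _)
  set s : ℝ := (#(ℬ.memberSubfamily x) : ℝ)
  have hn := binomRoot_nonneg (p := p + 1) hb.le
  have hroot := mul_binomRoot_le_of_le_leadTerm hs hδ.le hn (hpivot.trans (hD.trans hlink)) hCn
  obtain ⟨hK, hKb⟩ := leadTerm_bounds_of_pivot hp hs hb hδ hδ1 hpivot hDb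
  refine ⟨hroot, hK.trans hD, ?_, one_sub_mul_le_of_pivot hp hs.le hb.le hδ.le hδ1 hpivot hroot⟩
  have hCs : C * s ≤ δ * (s * binomRoot (p + 1) #ℬ / (p + 1)) := by
    rw [mul_div_assoc', le_div_iff₀ (by positivity)]
    nlinarith
  have hsn : δ * (s * binomRoot (p + 1) #ℬ / (p + 1)) ≤ #ℬ :=
    (hpivot.trans hDb).trans' (by gcongr; linarith)
  linarith

/-- The link of a pivot is itself near-extremal, so it has a core by induction; as most members of
`ℬ` lie in the link, this is a core of the whole pair. -/
lemma ErasurePair.exists_core_of_isPivot {x : α} {δ C ε η : ℝ} {b₁ : ℕ} (hp : 1 ≤ p) (hδ : 0 < δ)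
    (hδ1 : δ ≤ 1 / 10) (hδη : 2 * δ ≤ η) (hC : 0 ≤ C) (hU : LeadTermBound α p δ C) (hε : 0 ≤ ε)
    (hlink : StableAt α p ε η b₁) (hV : ErasurePair (r + 1) (p + 1) 𝒜 ℬ)
    (hx : IsPivot (p + 1) δ 𝒜 ℬ x) (hCn : (p + 1) * C ≤ δ * binomRoot (p + 1) #ℬ)
    (hn : 2 * binomRoot p b₁ < binomRoot (p + 1) #ℬ) :
    ∃ S : Finset α, #S + (p + 1) = r + 1 ∧
      #{A ∈ 𝒜.memberSubfamily x | ¬S ⊆ A} ≤ 10 * ε * #ℬ ∧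
      (1 - 4 * p * δ) * #ℬ ≤ #(𝒜.memberSubfamily x ∩ ℬ) := by
  obtain ⟨hν, hM, hbad, hD⟩ := hV.link_bounds_of_isPivot hp hδ (by linarith) hU hx hCn
  have hs : b₁ ≤ #(ℬ.memberSubfamily x) := by
    by_contra! hlt
    have hle : binomRoot p #(ℬ.memberSubfamily x) ≤ binomRoot p b₁ :=
      binomRoot_mono (Nat.cast_nonneg _) (by exact_mod_cast hlt.le)
    have := binomRoot_nonneg (p := p) (Nat.cast_nonneg (α := ℝ) b₁)
    nlinarith
  obtain ⟨S, hScard, hS⟩ := hlink (hV.memberSubfamily x) hs <| hM.trans' <| by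
    have := leadTerm_nonneg (p := p) (Nat.cast_nonneg (α := ℝ) #(ℬ.memberSubfamily x))
    gcongr
  refine ⟨S, by omega, ?_, hD⟩
  calc _ ≤ _ := (hV.memberSubfamily x).card_filter_not_subset_le (by linarith) hC hU hS
    _ ≤ ε * (10 * #ℬ) := by gcongr
    _ = _ := by ring

lemma stable_succ (hp : 1 ≤ p) (ih : Stable α p) : Stable α (p + 1) := by
  intro ε hε
  set m : ℝ := min 1 ε
  have hm : 0 < m := lt_min one_pos hε
  have hm1 : m ≤ 1 := min_le_left _ _
  obtain ⟨η₁, hη₁, b₁, hlink⟩ := ih (m / 20) (by positivity)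
  set δ : ℝ := min (min (1 / 10) (η₁ / 2)) (m / (10 * p))
  have hδ0 : 0 < δ := lt_min (lt_min (by norm_num) (by positivity)) (by positivity)
  have hδ1 : δ ≤ 1 / 10 := (min_le_left _ _).trans (min_le_left _ _)
  have hδη : δ ≤ η₁ / 2 := (min_le_left _ _).trans (min_le_right _ _)
  have hδm : δ * (10 * p) ≤ m := (le_div_iff₀ (by positivity)).1 (min_le_right _ _)
  have hδp : δ ≤ p * δ := le_mul_of_one_le_left hδ0.le (by exact_mod_cast hp)
  obtain ⟨C, hC, hU⟩ := exists_leadTermBound α hp hδ0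
  obtain ⟨η, hη, hpivot⟩ := exists_near_extremal_pivot α (p := p + 1) (by omega) hδ0 (by linarith)
  have hroot := (tendsto_binomRoot_atTop (p := p + 1) (by omega)).comp tendsto_natCast_atTop_atTop
  obtain ⟨N, hN⟩ := eventually_atTop.1 <| (hroot.eventually_ge_atTop ((p + 1) * C / δ)).and
    (hroot.eventually_gt_atTop (2 * binomRoot p b₁))
  obtain ⟨b₂, hb₂⟩ := hpivot N
  refine ⟨η, hη, b₂, fun r 𝒜 ℬ hV hb h𝒜 ↦ ?_⟩
  obtain ⟨𝒜₀, -, ℬ₀, hℬ₀, x, hV₀, hcard, hNb, hx⟩ := hb₂ hV hb h𝒜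
  obtain ⟨r, rfl⟩ := hV₀.exists_eq_add_one hx.1
  obtain ⟨hCn, hn⟩ := hN _ hNb
  obtain ⟨S, hScard, hβ, hD⟩ := hV₀.exists_core_of_isPivot hp hδ0 hδ1 (by linarith) hC hU
    (by positivity) hlink hx ((div_le_iff₀' hδ0).1 hCn) hn
  refine ⟨S, hScard, ?_⟩
  refine (card_filter_not_le_of_le_card_inter (S ⊆ ·) hℬ₀ hβ hD (by linarith) hcard).trans ?_
  gcongr
  have : 0 ≤ (4 * p * δ + 10 * (m / 20)) * δ := by positivity
  linarith [min_le_right 1 ε]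

lemma stable (α : Type*) [DecidableEq α] {p : ℕ} (hp : 1 ≤ p) : Stable α p := by
  induction p, hp using Nat.le_induction with
  | base => exact stable_one
  | succ p hp ih => exact stable_succ hp ih

end Stability

section Cascade

open Colex

/-- The `(m + 1)`-sets below `a` together with the members of `Y` enlarged by `a`. When `Y` is an
initial segment of the colexicographic order on `m`-sets below `a`, this is the initial segment on
`(m + 1)`-sets whose cascade representation has the additional leading digit `a`. -/
def addDigit (a m : ℕ) (Y : Finset (Finset ℕ)) : Finset (Finset ℕ) :=
  powersetCard (m + 1) (range a) ∪ Y.image (insert a)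

/-- The family obtained from a family `X` of `e`-sets by adding the digits `d 0, …, d (j - 1)`. -/
def cascade (d : ℕ → ℕ) (X : Finset (Finset ℕ)) (e : ℕ) : ℕ → Finset (Finset ℕ)
  | 0 => X
  | j + 1 => addDigit (d j) (j + e) (cascade d X e j)

variable {a b m e : ℕ} {d : ℕ → ℕ} {X Y Z : Finset (Finset ℕ)}

lemma card_image_insert_of_notMem {α : Type*} [DecidableEq α] {𝒜 : Finset (Finset α)} {a : α}
    (h : ∀ A ∈ 𝒜, a ∉ A) : #(𝒜.image (insert a)) = #𝒜 :=
  card_image_of_injOn fun A hA B hB hAB ↦ by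
    rw [← erase_insert (h A hA), ← erase_insert (h B hB)]
    exact congrArg (erase · a) hAB

lemma notMem_of_subset_powersetCard_range (hY : Y ⊆ powersetCard m (range a)) :
    ∀ s ∈ Y, a ∉ s :=
  fun _ hs ha ↦ notMem_range_self ((mem_powersetCard.1 (hY hs)).1 ha)

lemma addDigit_subset (hab : a < b) (hY : Y ⊆ powersetCard m (range a)) :
    addDigit a m Y ⊆ powersetCard (m + 1) (range b) := by
  have hrange : range a ⊆ range b := range_subset_range.2 hab.le
  refine union_subset (powersetCard_mono hrange) (image_subset_iff.2 fun s hs ↦ ?_)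
  obtain ⟨hsa, hcard⟩ := mem_powersetCard.1 (hY hs)
  rw [mem_powersetCard, card_insert_of_notMem (notMem_of_subset_powersetCard_range hY s hs), hcard]
  exact ⟨insert_subset (mem_range.2 hab) (hsa.trans hrange), rfl⟩

lemma card_addDigit (hY : Y ⊆ powersetCard m (range a)) :
    #(addDigit a m Y) = #Y + a.choose (m + 1) := by
  rw [addDigit, card_union_of_disjoint, card_powersetCard, card_range, add_comm,
    card_image_insert_of_notMem (notMem_of_subset_powersetCard_range hY)]
  refine disjoint_left.2 fun s hs hs' ↦ ?_
  obtain ⟨t, -, rfl⟩ := mem_image.1 hs'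
  exact notMem_range_self ((mem_powersetCard.1 hs).1 (mem_insert_self a t))

lemma isInitSeg_addDigit (hY : Y ⊆ powersetCard m (range a)) (h : IsInitSeg Y m) :
    IsInitSeg (addDigit a m Y) (m + 1) := by
  refine ⟨fun s hs ↦ (mem_powersetCard.1 (addDigit_subset a.lt_succ_self hY hs)).2, ?_⟩
  rintro s t hs ⟨hts, ht⟩
  rw [addDigit, mem_union] at hs ⊢
  rcases hs with hs | hs
  · have hsa := (mem_powersetCard.1 hs).1
    exact .inl (mem_powersetCard.2 ⟨fun x hx ↦ mem_range.2 <|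
      forall_lt_mono hts.le (fun y hy ↦ mem_range.1 (hsa hy)) x hx, ht⟩)
  · obtain ⟨s, hsY, rfl⟩ := mem_image.1 hs
    have has := notMem_of_subset_powersetCard_range hY s hsY
    have hle : ∀ x ∈ t, x ≤ a := forall_le_mono hts.le fun y hy ↦ by
      rcases mem_insert.1 hy with rfl | hy
      · exact le_rfl
      · exact (mem_range.1 ((mem_powersetCard.1 (hY hsY)).1 hy)).le
    by_cases hat : a ∈ t
    · refine .inr (mem_image.2 ⟨t.erase a, h.2 hsY ⟨?_, ?_⟩, insert_erase hat⟩)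
      · rwa [← toColex_sdiff_lt_toColex_sdiff (singleton_subset_iff.2 hat)
          (singleton_subset_iff.2 (mem_insert_self a s)), sdiff_singleton_eq_erase,
          sdiff_singleton_eq_erase, erase_insert has] at hts
      · rw [card_erase_of_mem hat, ht, Nat.add_sub_cancel]
    · exact .inl (mem_powersetCard.2 ⟨fun x hx ↦ mem_range.2 <|
        (hle x hx).lt_of_ne fun hxa ↦ hat (hxa ▸ hx), ht⟩)

lemma shadow_addDigit_subset (hY : Y ⊆ powersetCard (m + 1) (range a)) (h : ∂ Y ⊆ Z) :
    ∂ (addDigit a (m + 1) Y) ⊆ addDigit a m Z := by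
  intro B hB
  obtain ⟨A, hA, x, hx, rfl⟩ := mem_shadow_iff.1 hB
  rw [addDigit, mem_union] at hA ⊢
  rcases hA with hA | hA
  · obtain ⟨hAa, hcard⟩ := mem_powersetCard.1 hA
    exact .inl (mem_powersetCard.2 ⟨(erase_subset x A).trans hAa,
      by rw [card_erase_of_mem hx, hcard, Nat.add_sub_cancel]⟩)
  · obtain ⟨s, hs, rfl⟩ := mem_image.1 hA
    by_cases hxa : x = a
    · rw [hxa, erase_insert (notMem_of_subset_powersetCard_range hY s hs)]
      exact .inl (hY hs)
    · rw [erase_insert_of_ne (Ne.symm hxa)]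
      exact .inr (mem_image_of_mem _ (h (erase_mem_shadow hs (mem_of_mem_insert_of_ne hx hxa))))

lemma addDigit_subset_shadow (hY : Y ⊆ powersetCard (m + 1) (range a)) (hne : Y.Nonempty)
    (h : Z ⊆ ∂ Y) : addDigit a m Z ⊆ ∂ (addDigit a (m + 1) Y) := by
  intro B hB
  rw [addDigit, mem_union] at hB
  simp only [mem_shadow_iff_insert_mem, addDigit, mem_union] at h ⊢
  rcases hB with hB | hB
  · obtain ⟨hBa, hcard⟩ := mem_powersetCard.1 hB
    rcases hBa.eq_or_ssubset with rfl | hlt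
    · obtain ⟨s, hs⟩ := hne
      obtain ⟨hsa, hs_card⟩ := mem_powersetCard.1 (hY hs)
      have hs_eq : s = range a := eq_of_subset_of_card_le hsa (hcard.trans hs_card.symm).le
      exact ⟨a, notMem_range_self, .inr (hs_eq ▸ mem_image_of_mem _ hs)⟩
    · obtain ⟨x, hxa, hxB⟩ := exists_of_ssubset hlt
      exact ⟨x, hxB, .inl (mem_powersetCard.2
        ⟨insert_subset hxa hBa, by rw [card_insert_of_notMem hxB, hcard]⟩)⟩
  · obtain ⟨s, hs, rfl⟩ := mem_image.1 hB
    obtain ⟨x, hxs, hxY⟩ := mem_shadow_iff_insert_mem.1 (h hs)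
    have hxa : x ≠ a := fun hxa ↦
      notMem_of_subset_powersetCard_range hY _ hxY (hxa ▸ mem_insert_self x s)
    refine ⟨x, by simp [hxa, hxs], .inr ?_⟩
    rw [insert_comm]
    exact mem_image_of_mem _ hxY

lemma cascade_subset (hd : StrictMono d) (hX : X ⊆ powersetCard e (range (d 0))) (j : ℕ) :
    cascade d X e j ⊆ powersetCard (j + e) (range (d j)) := by
  induction j with
  | zero => simpa only [cascade, zero_add] using hX
  | succ j ih =>
    rw [cascade, Nat.add_right_comm]
    exact addDigit_subset (hd j.lt_succ_self) ih

lemma card_cascade (hd : StrictMono d) (hX : X ⊆ powersetCard e (range (d 0))) (j : ℕ) :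
    #(cascade d X e j) = #X + ∑ i ∈ range j, (d i).choose (i + e + 1) := by
  induction j with
  | zero => simp only [cascade, range_zero, sum_empty, add_zero]
  | succ j ih => rw [cascade, card_addDigit (cascade_subset hd hX j), ih, sum_range_succ, add_assoc]

lemma isInitSeg_cascade (hd : StrictMono d) (hX : X ⊆ powersetCard e (range (d 0)))
    (h : IsInitSeg X e) (j : ℕ) : IsInitSeg (cascade d X e j) (j + e) := by
  induction j with
  | zero => simpa only [cascade, zero_add] using h
  | succ j ih =>
    rw [cascade, Nat.add_right_comm]
    exact isInitSeg_addDigit (cascade_subset hd hX j) ih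

lemma shadow_cascade_subset (hd : StrictMono d) (hX : X ⊆ powersetCard (e + 1) (range (d 0)))
    (h : ∂ X ⊆ Y) (j : ℕ) : ∂ (cascade d X (e + 1) j) ⊆ cascade d Y e j := by
  induction j with
  | zero => exact h
  | succ j ih => exact shadow_addDigit_subset (cascade_subset hd hX j) ih

lemma cascade_subset_shadow (hd : StrictMono d) (hX : X ⊆ powersetCard (e + 1) (range (d 0)))
    (hne : X.Nonempty) (h : Y ⊆ ∂ X) (j : ℕ) :
    cascade d Y e j ⊆ ∂ (cascade d X (e + 1) j) := by
  induction j with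
  | zero => exact h
  | succ j ih =>
    refine addDigit_subset_shadow (cascade_subset hd hX j) (card_pos.1 ?_) ih
    rw [card_cascade hd hX]
    exact Nat.add_pos_left hne.card_pos _

end Cascade

section KruskalKatona

open Colex

variable {α β : Type*} [DecidableEq α] [DecidableEq β] {p : ℕ} {d : ℕ → ℕ}

lemma shadow_map_mapEmbedding (g : α ↪ β) (𝒜 : Finset (Finset α)) :
    ∂ (𝒜.map (mapEmbedding g).toEmbedding) = (∂ 𝒜).map (mapEmbedding g).toEmbedding := by
  ext B
  simp only [mem_shadow_iff, mem_map, RelEmbedding.coe_toEmbedding, mapEmbedding_apply]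
  constructor
  · rintro ⟨_, ⟨A, hA, rfl⟩, y, hy, rfl⟩
    obtain ⟨x, hx, rfl⟩ := mem_map.1 hy
    exact ⟨A.erase x, ⟨A, hA, x, hx, rfl⟩, map_erase g A x⟩
  · rintro ⟨_, ⟨A, hA, x, hx, rfl⟩, rfl⟩
    exact ⟨A.map g, ⟨A, hA, rfl⟩, g x, mem_map_of_mem g hx, (map_erase g A x).symm⟩

lemma exists_map_valEmbedding_eq {n : ℕ} {𝒜 : Finset (Finset ℕ)} (h : ∀ A ∈ 𝒜, A ⊆ range n) :
    ∃ 𝒜' : Finset (Finset (Fin n)),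
      𝒜'.map (mapEmbedding Fin.valEmbedding).toEmbedding = 𝒜 := by
  suffices 𝒜 ⊆ univ.map (mapEmbedding Fin.valEmbedding).toEmbedding by
    obtain ⟨𝒜', -, h𝒜'⟩ := subset_map_iff.1 this
    exact ⟨𝒜', h𝒜'.symm⟩
  exact fun A hA ↦ mem_map.2
    ⟨A.attachFin fun x hx ↦ mem_range.1 (h A hA hx), mem_univ _, map_valEmbedding_attachFin _⟩

lemma exists_forall_subset_range (𝒜 : Finset (Finset ℕ)) : ∃ n, ∀ A ∈ 𝒜, A ⊆ range n :=
  ⟨(𝒜.sup id).sup id + 1, fun _ hA _ hx ↦ mem_range.2 <| Nat.lt_succ_of_le <|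
    le_sup (f := id) (mem_sup.2 ⟨_, hA, hx⟩)⟩

lemma card_shadow_le_of_isInitSeg {r : ℕ} {𝒜 𝒞 : Finset (Finset ℕ)}
    (h𝒜 : (𝒜 : Set (Finset ℕ)).Sized r) (h𝒞𝒜 : #𝒞 ≤ #𝒜) (h𝒞 : IsInitSeg 𝒞 r) :
    #(∂ 𝒞) ≤ #(∂ 𝒜) := by
  obtain ⟨n, hn⟩ := exists_forall_subset_range (𝒜 ∪ 𝒞)
  obtain ⟨𝒜, rfl⟩ := exists_map_valEmbedding_eq fun A hA ↦ hn A (mem_union_left _ hA)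
  obtain ⟨𝒞, rfl⟩ := exists_map_valEmbedding_eq fun A hA ↦ hn A (mem_union_right _ hA)
  simp only [shadow_map_mapEmbedding, card_map] at h𝒞𝒜 ⊢
  refine kruskal_katona (r := r) (fun s hs ↦ ?_) h𝒞𝒜 ⟨fun s hs ↦ ?_, fun s t hs ht ↦ ?_⟩
  · simpa using h𝒜 (mem_map_of_mem _ hs)
  · simpa using h𝒞.1 (mem_map_of_mem _ hs)
  · refine (mem_map' _).1 (h𝒞.2 (mem_map_of_mem _ hs) ⟨?_, by simpa using ht.2⟩)
    simpa [map_eq_image, toColex_image_lt_toColex_image Fin.val_strictMono] using ht.1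

lemma card_le_of_card_shadow_le_of_pos (hd : StrictMono d) (hd0 : 0 < d 0)
    {𝒜 : Finset (Finset ℕ)} (h𝒜 : (𝒜 : Set (Finset ℕ)).Sized (p + 1))
    (h : #(∂ 𝒜) ≤ ∑ i ∈ range p, (d i).choose (i + 1)) :
    #𝒜 ≤ ∑ i ∈ range p, (d i).choose (i + 2) := by
  by_contra! hlt
  have hX : {{0}} ⊆ powersetCard 1 (range (d 0)) := by simpa [mem_powersetCard] using hd0
  have hinit : IsInitSeg ({{0}} : Finset (Finset ℕ)) 1 := by
    refine ⟨fun s hs ↦ by simp_all, fun s t hs ⟨hts, ht⟩ ↦ ?_⟩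
    obtain ⟨x, rfl⟩ := card_eq_one.1 ht
    simp_all [toColex_lt_singleton]
  have hupper := card_cascade hd hX p
  have hlower := card_cascade hd (X := {∅}) (e := 0) (by simp) p
  rw [card_singleton, add_comm] at hupper hlower
  have hshadow := card_shadow_le_of_isInitSeg h𝒜 (hupper.trans_le hlt)
    (isInitSeg_cascade hd hX hinit p)
  have hsub := card_le_card (cascade_subset_shadow hd hX (singleton_nonempty _)
    (shadow_singleton 0).superset p)
  exact absurd (hlower ▸ hsub.trans (hshadow.trans h)) (Nat.lt_irrefl _)

lemma card_le_of_card_shadow_le (hd : StrictMono d) {𝒜 : Finset (Finset ℕ)}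
    (h𝒜 : (𝒜 : Set (Finset ℕ)).Sized (p + 1))
    (h : #(∂ 𝒜) ≤ ∑ i ∈ range p, (d i).choose (i + 1)) :
    #𝒜 ≤ ∑ i ∈ range p, (d i).choose (i + 2) := by
  have hmono : StrictMono fun i ↦ max (d i) (i + 1) := fun i j hij ↦ by
    have := hd hij
    dsimp only
    omega
  refine (card_le_of_card_shadow_le_of_pos hmono (by simp) h𝒜 (h.trans ?_)).trans_eq ?_
  · exact sum_le_sum fun i _ ↦ Nat.choose_le_choose _ (le_max_left _ _)
  · refine sum_congr rfl fun i _ ↦ ?_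
    rcases le_total (d i) (i + 1) with hi | hi
    · rw [max_eq_right hi, Nat.choose_eq_zero_of_lt (by omega), Nat.choose_eq_zero_of_lt (by omega)]
    · rw [max_eq_left hi]

lemma exists_strictMono_extend {c : ℕ} (hd : StrictMonoOn d (Set.Iio p)) (hc : ∀ i < p, d i < c) :
    ∃ d' : ℕ → ℕ, StrictMono d' ∧ (∀ i < p, d' i = d i) ∧ d' p = c := by
  refine ⟨fun i ↦ if i < p then d i else c + (i - p), strictMono_nat_of_lt_succ fun i ↦ ?_,
    fun i hi ↦ if_pos hi, by simp⟩
  rcases lt_trichotomy (i + 1) p with hi | hi | hi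
  · simpa [hi, i.lt_succ_self.trans hi] using hd (i.lt_succ_self.trans hi) hi i.lt_succ_self
  · simpa [← hi] using hc i (by omega)
  · simp only [show ¬i < p by omega, show ¬i + 1 < p by omega, if_false]
    omega

lemma lt_of_choose_lt_choose {a b k : ℕ} (h : a.choose k < b.choose k) : a < b :=
  lt_of_not_ge fun hba ↦ h.not_ge (Nat.choose_le_choose k hba)

lemma exists_choose_le_lt_choose_succ {p : ℕ} (hp : 1 ≤ p) (b : ℕ) :
    ∃ c : ℕ, c.choose p ≤ b ∧ b < (c + 1).choose p := by
  obtain ⟨p, rfl⟩ := Nat.exists_eq_add_of_le' hp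
  induction b with
  | zero => exact ⟨p, (Nat.choose_succ_self p).le, by simp⟩
  | succ b ih =>
    obtain ⟨c, hcb, hbc⟩ := ih
    rcases (Nat.succ_le_of_lt hbc).lt_or_eq with hlt | heq
    · exact ⟨c, hcb.trans b.le_succ, hlt⟩
    · have hpc : p + 1 ≤ c + 1 := by
        by_contra! h
        simp [Nat.choose_eq_zero_of_lt h] at hbc
      refine ⟨c + 1, heq.ge, ?_⟩
      rw [Nat.choose_succ_succ', ← heq]
      exact Nat.lt_add_of_pos_left (Nat.choose_pos (by omega))

lemma exists_eq_sum_choose {c s : ℕ} (hs : s < c.choose p) :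
    ∃ d : ℕ → ℕ, StrictMono d ∧ (∀ i < p, d i < c) ∧ s = ∑ i ∈ range p, (d i).choose (i + 1) := by
  induction p generalizing c s with
  | zero => exact ⟨id, strictMono_id, by simp, by simpa using hs⟩
  | succ p ih =>
    obtain ⟨a, has, hsa⟩ := exists_choose_le_lt_choose_succ (Nat.le_add_left 1 p) s
    rw [Nat.choose_succ_succ'] at hsa
    obtain ⟨d, hd, hda, hsum⟩ := ih (show s - a.choose (p + 1) < a.choose p by omega)
    obtain ⟨d', hd', hdd', rfl⟩ := exists_strictMono_extend (hd.strictMonoOn _) hda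
    have hpc : d' p < c := lt_of_choose_lt_choose (has.trans_lt hs)
    refine ⟨d', hd', fun i hi ↦ (hd'.monotone (by omega)).trans_lt hpc, ?_⟩
    rw [sum_range_succ, sum_congr rfl fun i hi ↦ by rw [hdd' i (mem_range.1 hi)], ← hsum]
    omega

end KruskalKatona

section MaxOfShadow

/-- The largest size of a family of `(p + 1)`-sets of naturals with at most `b` sets in its
shadow. Since the supremum is taken in `ℕ`, this is meaningful only for `1 ≤ p`. -/
noncomputable def maxOfShadow (p b : ℕ) : ℕ :=
  sSup {a | ∃ 𝒜 : Finset (Finset ℕ), (𝒜 : Set (Finset ℕ)).Sized (p + 1) ∧ #(∂ 𝒜) ≤ b ∧ #𝒜 = a}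

lemma erasurePair_of_shadow_subset {α : Type*} [DecidableEq α] {p : ℕ} {𝒜 ℬ : Finset (Finset α)}
    (h𝒜 : (𝒜 : Set (Finset α)).Sized (p + 1)) (hℬ : (ℬ : Set (Finset α)).Sized p)
    (h : ∂ 𝒜 ⊆ ℬ) : ErasurePair p p 𝒜 ℬ where
  card_upper _ hA := h𝒜 hA
  card_lower _ hB := hℬ hB
  lt_card_removable A hA := by
    rw [removable, filter_true_of_mem fun x hx ↦ h (erase_mem_shadow hA hx), h𝒜 hA]
    exact p.lt_succ_self

lemma ErasurePair.shadow_subset {α : Type*} [DecidableEq α] {p : ℕ} {𝒜 ℬ : Finset (Finset α)}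
    (h : ErasurePair p p 𝒜 ℬ) : ∂ 𝒜 ⊆ ℬ := by
  intro B hB
  obtain ⟨A, hA, x, hx, rfl⟩ := mem_shadow_iff.1 hB
  have hall : removable ℬ A = A :=
    eq_of_subset_of_card_le (filter_subset _ _) (h.card_upper A hA ▸ h.lt_card_removable A hA)
  exact (mem_removable.1 (hall.symm ▸ hx)).2

variable {p b c s u N : ℕ} {d : ℕ → ℕ}

lemma bddAbove_card_of_card_shadow_le (hp : 1 ≤ p) (b : ℕ) :
    BddAbove {a | ∃ 𝒜 : Finset (Finset ℕ),
      (𝒜 : Set (Finset ℕ)).Sized (p + 1) ∧ #(∂ 𝒜) ≤ b ∧ #𝒜 = a} := by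
  refine ⟨b.choose 2, ?_⟩
  rintro _ ⟨𝒜, h𝒜, hb, rfl⟩
  exact ((erasurePair_of_shadow_subset h𝒜 h𝒜.shadow Subset.rfl).card_le_choose_two hp).trans
    (Nat.choose_le_choose 2 hb)

lemma card_le_maxOfShadow (hp : 1 ≤ p) {𝒜 : Finset (Finset ℕ)}
    (h𝒜 : (𝒜 : Set (Finset ℕ)).Sized (p + 1)) (hb : #(∂ 𝒜) ≤ b) : #𝒜 ≤ maxOfShadow p b :=
  le_csSup (bddAbove_card_of_card_shadow_le hp b) ⟨𝒜, h𝒜, hb, rfl⟩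

lemma exists_card_eq_maxOfShadow (hp : 1 ≤ p) (b : ℕ) :
    ∃ 𝒜 : Finset (Finset ℕ),
      (𝒜 : Set (Finset ℕ)).Sized (p + 1) ∧ #(∂ 𝒜) ≤ b ∧ #𝒜 = maxOfShadow p b := by
  refine Nat.sSup_mem ?_ (bddAbove_card_of_card_shadow_le hp b)
  exact ⟨0, ∅, by simp [Set.Sized], Nat.zero_le b, rfl⟩

lemma ErasurePair.card_le_maxOfShadow (hp : 1 ≤ p) {𝒜 ℬ : Finset (Finset ℕ)}
    (h : ErasurePair p p 𝒜 ℬ) : #𝒜 ≤ maxOfShadow p #ℬ :=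
  _root_.card_le_maxOfShadow hp (fun _ hA ↦ h.card_upper _ hA) (card_le_card h.shadow_subset)

lemma monotone_maxOfShadow (hp : 1 ≤ p) : Monotone (maxOfShadow p) := fun a b hab ↦ by
  obtain ⟨𝒜, h𝒜, ha, hcard⟩ := exists_card_eq_maxOfShadow hp a
  exact hcard ▸ card_le_maxOfShadow hp h𝒜 (ha.trans hab)

lemma shadow_union {α : Type*} [DecidableEq α] (𝒜 ℬ : Finset (Finset α)) :
    ∂ (𝒜 ∪ ℬ) = ∂ 𝒜 ∪ ∂ ℬ := sup_union

lemma sized_map_mapEmbedding {α β : Type*} {𝒜 : Finset (Finset α)} {r : ℕ}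
    (h : (𝒜 : Set (Finset α)).Sized r) (g : α ↪ β) :
    (𝒜.map (mapEmbedding g).toEmbedding : Set (Finset β)).Sized r := by
  intro B hB
  obtain ⟨A, hA, rfl⟩ := mem_map.1 (mem_coe.1 hB)
  exact (card_map g).trans (h hA)

lemma disjoint_map_mapEmbedding {α β : Type*} {g h : α ↪ β} (hgh : ∀ x y, g x ≠ h y)
    {𝒜 ℬ : Finset (Finset α)} (h𝒜 : ∀ A ∈ 𝒜, A.Nonempty) :
    Disjoint (𝒜.map (mapEmbedding g).toEmbedding) (ℬ.map (mapEmbedding h).toEmbedding) := by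
  refine disjoint_left.2 fun s hs ht ↦ ?_
  obtain ⟨A, hA, rfl⟩ := mem_map.1 hs
  obtain ⟨B, -, hBA⟩ := mem_map.1 ht
  obtain ⟨x, hx⟩ := h𝒜 A hA
  have hgx : g x ∈ B.map h := (show B.map h = A.map g from hBA) ▸ mem_map_of_mem g hx
  obtain ⟨y, -, hyx⟩ := mem_map.1 hgx
  exact hgh x y hyx.symm

lemma maxOfShadow_add_le (hp : 1 ≤ p) (a b : ℕ) :
    maxOfShadow p a + maxOfShadow p b ≤ maxOfShadow p (a + b) := by
  obtain ⟨𝒜, h𝒜, ha, h𝒜card⟩ := exists_card_eq_maxOfShadow hp a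
  obtain ⟨ℬ, hℬ, hb, hℬcard⟩ := exists_card_eq_maxOfShadow hp b
  let even : ℕ ↪ ℕ := ⟨(2 * ·), fun m n h ↦ by dsimp only at h; omega⟩
  let odd : ℕ ↪ ℕ := ⟨(2 * · + 1), fun m n h ↦ by dsimp only at h; omega⟩
  have hdisj := disjoint_map_mapEmbedding (g := even) (h := odd)
    (fun m n h ↦ by change 2 * m = 2 * n + 1 at h; omega) (ℬ := ℬ)
    fun A hA ↦ card_pos.1 (by rw [h𝒜 hA]; exact p.succ_pos)
  have hle := card_le_maxOfShadow (b := a + b) hp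
    (𝒜 := 𝒜.map (mapEmbedding even).toEmbedding ∪ ℬ.map (mapEmbedding odd).toEmbedding)
    (by
      rw [coe_union]
      exact Set.sized_union.2 ⟨sized_map_mapEmbedding h𝒜 even, sized_map_mapEmbedding hℬ odd⟩)
    (by
      simp only [shadow_union, shadow_map_mapEmbedding]
      exact (card_union_le _ _).trans (by simpa only [card_map] using add_le_add ha hb))
  simpa only [card_union_of_disjoint hdisj, card_map, h𝒜card, hℬcard] using hle

lemma maxOfShadow_sum_choose_of_strictMono (hp : 1 ≤ p) (hd : StrictMono d) :
    maxOfShadow p (∑ i ∈ range p, (d i).choose (i + 1)) = ∑ i ∈ range p, (d i).choose (i + 2) := by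
  apply le_antisymm
  · obtain ⟨𝒜, h𝒜, hb, hcard⟩ :=
      exists_card_eq_maxOfShadow hp (∑ i ∈ range p, (d i).choose (i + 1))
    exact hcard ▸ card_le_of_card_shadow_le hd h𝒜 hb
  · have hshadow := card_le_card (shadow_cascade_subset hd (X := ∅) (Y := ∅) (e := 0)
      (empty_subset _) (by simp) p)
    have hlower := card_cascade hd (X := ∅) (e := 0) (empty_subset _) p
    have hupper := card_cascade hd (X := ∅) (e := 1) (empty_subset _) p
    rw [card_empty, zero_add] at hlower hupper
    exact hupper ▸ card_le_maxOfShadow hp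
      (fun s hs ↦ (mem_powersetCard.1 (cascade_subset hd (empty_subset _) p hs)).2)
      (hshadow.trans_eq hlower)

lemma maxOfShadow_sum_choose (hp : 1 ≤ p) (hd : StrictMonoOn d (Set.Iio p)) :
    maxOfShadow p (∑ i ∈ range p, (d i).choose (i + 1)) = ∑ i ∈ range p, (d i).choose (i + 2) := by
  obtain ⟨d', hd', hdd', -⟩ := exists_strictMono_extend hd (c := (range p).sup d + 1)
    fun i hi ↦ Nat.lt_succ_of_le (le_sup (mem_range.2 hi))
  have hcongr : ∀ e, ∑ i ∈ range p, (d i).choose (i + e) = ∑ i ∈ range p, (d' i).choose (i + e) :=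
    fun e ↦ sum_congr rfl fun i hi ↦ by rw [hdd' i (mem_range.1 hi)]
  rw [hcongr, hcongr, maxOfShadow_sum_choose_of_strictMono hp hd']

lemma maxOfShadow_sum_choose_add_choose (hd : StrictMonoOn d (Set.Iio p)) (hc : ∀ i < p, d i < c) :
    maxOfShadow (p + 1) (∑ i ∈ range p, (d i).choose (i + 1) + c.choose (p + 1)) =
      ∑ i ∈ range p, (d i).choose (i + 2) + c.choose (p + 2) := by
  obtain ⟨d', hd', hdd', rfl⟩ := exists_strictMono_extend hd hc
  have hcongr : ∀ e, ∑ i ∈ range p, (d i).choose (i + e) = ∑ i ∈ range p, (d' i).choose (i + e) :=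
    fun e ↦ sum_congr rfl fun i hi ↦ by rw [hdd' i (mem_range.1 hi)]
  rw [hcongr, hcongr, ← sum_range_succ, ← sum_range_succ]
  exact maxOfShadow_sum_choose_of_strictMono p.succ_pos hd'

lemma maxOfShadow_zero (hp : 1 ≤ p) : maxOfShadow p 0 = 0 := by
  simpa [Nat.choose_eq_zero_of_lt] using maxOfShadow_sum_choose hp (strictMono_id.strictMonoOn _)

lemma maxOfShadow_choose (hp : 1 ≤ p) (c : ℕ) : maxOfShadow p (c.choose p) = c.choose (p + 1) := by
  obtain ⟨p, rfl⟩ := Nat.exists_eq_add_of_le' hp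
  rcases lt_or_ge c p with hcp | hpc
  · rw [Nat.choose_eq_zero_of_lt (by omega), Nat.choose_eq_zero_of_lt (by omega),
      maxOfShadow_zero hp]
  · simpa [Nat.choose_eq_zero_of_lt] using maxOfShadow_sum_choose_add_choose
      (strictMono_id.strictMonoOn (Set.Iio p)) fun i hi ↦ hi.trans_le hpc

lemma maxOfShadow_choose_add (hp : 1 ≤ p) (hs : s ≤ c.choose p) :
    maxOfShadow (p + 1) (c.choose (p + 1) + s) = c.choose (p + 2) + maxOfShadow p s := by
  rcases hs.lt_or_eq with hs | rfl
  · obtain ⟨d, hd, hdc, rfl⟩ := exists_eq_sum_choose hs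
    rw [add_comm (c.choose _), add_comm (c.choose _),
      maxOfShadow_sum_choose_add_choose (hd.strictMonoOn _) hdc,
      maxOfShadow_sum_choose_of_strictMono hp hd]
  · rw [maxOfShadow_choose hp, add_comm (c.choose (p + 1)), ← Nat.choose_succ_succ',
      maxOfShadow_choose p.succ_pos, Nat.choose_succ_succ', add_comm]

lemma maxOfShadow_add_half_le (hp : 1 ≤ p) (hcN : c.choose (p + 1) ≤ N)
    (hNc : N < (c + 1).choose (p + 1)) (hu : u ≤ c.choose p) :
    maxOfShadow (p + 1) N + maxOfShadow p (u / 2) ≤ maxOfShadow (p + 1) (N + u) := by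
  have hmono := monotone_maxOfShadow hp
  obtain ⟨s, rfl⟩ := Nat.exists_eq_add_of_le hcN
  have hs : s < c.choose p := by rw [Nat.choose_succ_succ'] at hNc; omega
  rw [maxOfShadow_choose_add hp hs.le]
  rcases le_or_gt (s + u) (c.choose p) with hsu | hsu
  · rw [add_assoc (c.choose (p + 1)), maxOfShadow_choose_add hp hsu]
    have := maxOfShadow_add_le hp s u
    have := hmono (u.div_le_self 2)
    omega
  · obtain ⟨w, hw⟩ := Nat.exists_eq_add_of_le hsu.le
    obtain ⟨v, hv⟩ := Nat.exists_eq_add_of_le hs.le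
    have hwc : w ≤ (c + 1).choose p :=
      (show w ≤ c.choose p by omega).trans (Nat.choose_le_choose p c.le_succ)
    rw [add_assoc (c.choose (p + 1)), hw, ← add_assoc (c.choose (p + 1)),
      add_comm (c.choose (p + 1)), ← Nat.choose_succ_succ',
      maxOfShadow_choose_add hp hwc, Nat.choose_succ_succ' c (p + 1), ← maxOfShadow_choose hp]
    change c.choose (p + 2) + _ + _ ≤ _ + c.choose (p + 2) + _
    have hsplit := maxOfShadow_add_le hp s v
    rw [← hv] at hsplit
    rcases le_or_gt (u / 2) v with huv | huv
    · have := hmono huv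
      omega
    · have := hmono (show u / 2 ≤ w by omega)
      have := hmono hs.le
      omega

lemma maxOfShadow_add_mul_le (hp : 1 ≤ p) (hcN : c.choose (p + 1) ≤ N) (hu : u ≤ c.choose p)
    (j : ℕ) :
    maxOfShadow (p + 1) N + j * maxOfShadow p (u / 2) ≤ maxOfShadow (p + 1) (N + j * u) := by
  induction j with
  | zero => simp
  | succ j ih =>
    obtain ⟨c', hc'N, hNc'⟩ := exists_choose_le_lt_choose_succ (Nat.le_add_left 1 p) (N + j * u)
    have hcc' : c ≤ c' := Nat.le_of_lt_succ <|
      lt_of_choose_lt_choose ((hcN.trans (Nat.le_add_right _ _)).trans_lt hNc')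
    have := maxOfShadow_add_half_le hp hc'N hNc' (hu.trans (Nat.choose_le_choose p hcc'))
    rw [add_one_mul, add_one_mul, ← add_assoc, ← add_assoc]
    omega

end MaxOfShadow

section Gain

open Filter

variable {p b c m q N : ℕ} {C δ η κ : ℝ}

lemma tendsto_choose_atTop (hp : 1 ≤ p) : Tendsto (fun c : ℕ ↦ c.choose p) atTop atTop :=
  tendsto_atTop_atTop_of_monotone (Nat.choose_mono p) fun b ↦
    have ⟨c, _, hbc⟩ := exists_choose_le_lt_choose_succ hp b
    ⟨c + 1, hbc.le⟩

lemma binomRoot_choose_le (hp : 1 ≤ p) (c : ℕ) : binomRoot p (c.choose p) ≤ c := by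
  rw [binomRoot_le_iff hp (Nat.cast_nonneg _) (Nat.cast_nonneg _), mul_comm,
    ← le_div_iff₀ (by positivity)]
  exact Nat.choose_le_pow_div p c

lemma sub_le_binomRoot_choose (hp : 1 ≤ p) (hpc : p ≤ c) :
    (c : ℝ) + 1 - p ≤ binomRoot p (c.choose p) := by
  have hpc' : (p : ℝ) ≤ c := by exact_mod_cast hpc
  have hcast : ((c + 1 - p : ℕ) : ℝ) = c + 1 - p := by push_cast [hpc.trans c.le_succ]; rfl
  rw [le_binomRoot_iff hp (Nat.cast_nonneg _) (by linarith), mul_comm,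
    ← div_le_iff₀ (by positivity), ← hcast]
  exact Nat.pow_le_choose p c

lemma leadTerm_mul_le_choose (hp : 1 ≤ p) (hpc : p ≤ c) (hb : b ≤ (c + 1).choose p) :
    leadTerm p b * (((c : ℝ) + 1 - p) * (c - p)) ≤ c.choose (p + 1) * ((c : ℝ) + 1) ^ 2 := by
  have hpc' : (p : ℝ) ≤ c := by exact_mod_cast hpc
  have hstep : (c.choose (p + 1) : ℝ) * (p + 1) = c.choose p * ((c : ℝ) - p) := by
    rw [← Nat.cast_sub hpc]
    exact_mod_cast Nat.choose_succ_right_eq c p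
  have hrow : (c.choose p : ℝ) * (c + 1) = (c + 1).choose p * ((c : ℝ) + 1 - p) := by
    rw [← Nat.cast_add_one, ← Nat.cast_sub (hpc.trans c.le_succ)]
    exact_mod_cast Nat.choose_mul_succ_eq c p
  have hb' : (b : ℝ) ≤ (c + 1).choose p := by exact_mod_cast hb
  have hroot : binomRoot p b ≤ c + 1 := by
    exact_mod_cast (binomRoot_mono b.cast_nonneg hb').trans (binomRoot_choose_le hp (c + 1))
  have hnonneg : 0 ≤ ((c : ℝ) + 1 - p) * (c - p) := mul_nonneg (by linarith) (by linarith)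
  calc leadTerm p b * (((c : ℝ) + 1 - p) * (c - p))
      ≤ (c + 1).choose p * ((c : ℝ) + 1) / (p + 1) * ((c + 1 - p) * (c - p)) := by
        unfold leadTerm; gcongr; exact binomRoot_nonneg b.cast_nonneg
    _ = (c + 1).choose p * ((c : ℝ) + 1 - p) * (c - p) * (c + 1) / (p + 1) := by ring
    _ = c.choose p * ((c : ℝ) - p) * (c + 1) ^ 2 / (p + 1) := by rw [← hrow]; ring
    _ = c.choose (p + 1) * ((c : ℝ) + 1) ^ 2 := by rw [← hstep]; field_simp

lemma eventually_leadTerm_le_maxOfShadow (hp : 1 ≤ p) (hη : 0 < η) :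
    ∀ᶠ b : ℕ in atTop, (1 - η) * leadTerm p b ≤ maxOfShadow p b := by
  obtain ⟨c₀, hc₀⟩ := exists_nat_ge ((2 * p + 1) / η)
  filter_upwards [eventually_ge_atTop ((max c₀ p).choose p)] with b hb
  obtain ⟨c, hcb, hbc⟩ := exists_choose_le_lt_choose_succ hp b
  have hc : max c₀ p ≤ c := Nat.le_of_lt_succ (lt_of_choose_lt_choose (hb.trans_lt hbc))
  have hlarge : 2 * p + 1 ≤ η * ((c : ℝ) + 1) := by
    have : (c₀ : ℝ) ≤ c := by exact_mod_cast (le_max_left _ _).trans hc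
    rw [div_le_iff₀' hη] at hc₀
    exact hc₀.trans (by gcongr; linarith)
  have hratio : (1 - η) * ((c : ℝ) + 1) ^ 2 ≤ (c + 1 - p) * (c - p) := by
    nlinarith [sq_nonneg (p : ℝ), p.cast_nonneg (α := ℝ)]
  have hlead : (1 - η) * leadTerm p b ≤ c.choose (p + 1) := by
    refine le_of_mul_le_mul_right ?_ (show 0 < ((c : ℝ) + 1) ^ 2 by positivity)
    calc (1 - η) * leadTerm p b * ((c : ℝ) + 1) ^ 2
        = leadTerm p b * ((1 - η) * ((c : ℝ) + 1) ^ 2) := by ring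
      _ ≤ leadTerm p b * ((c + 1 - p) * (c - p)) :=
        mul_le_mul_of_nonneg_left hratio (leadTerm_nonneg b.cast_nonneg)
      _ ≤ _ := leadTerm_mul_le_choose hp ((le_max_right _ _).trans hc) hbc.le
  have hmono := monotone_maxOfShadow hp hcb
  rw [maxOfShadow_choose hp] at hmono
  exact hlead.trans (by exact_mod_cast hmono)

lemma exists_mul_binomRoot_le_maxOfShadow_half (hp : 1 ≤ p) :
    ∃ κ : ℝ, 0 < κ ∧ κ ≤ 1 ∧
      ∀ᶠ m : ℕ in atTop, κ * (m * binomRoot p m) ≤ maxOfShadow p (m / 2) := by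
  refine ⟨1 / (18 * (p + 1)), by positivity, ?_, ?_⟩
  · rw [div_le_one (by positivity)]
    linarith [p.cast_nonneg (α := ℝ)]
  filter_upwards [(Nat.tendsto_div_const_atTop two_ne_zero).eventually
    (eventually_leadTerm_le_maxOfShadow hp one_half_pos), eventually_ge_atTop 2] with m hm hm2
  have hthird : 1 / 3 * (m : ℝ) ≤ (m / 2 : ℕ) := by
    have : (m : ℝ) ≤ 3 * (m / 2 : ℕ) := by exact_mod_cast (show m ≤ 3 * (m / 2) by omega)
    linarith
  have hroot := mul_binomRoot_le_of_mul_le hp m.cast_nonneg (by norm_num) (by norm_num) hthird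
  have hnonneg := binomRoot_nonneg (p := p) m.cast_nonneg
  refine le_trans ?_ hm
  calc 1 / (18 * (p + 1)) * ((m : ℝ) * binomRoot p m)
      = (1 - 1 / 2) * (1 / 3 * m * (1 / 3 * binomRoot p m) / (p + 1)) := by field_simp; ring
    _ ≤ (1 - 1 / 2) * leadTerm p (m / 2 : ℕ) := by unfold leadTerm; gcongr

lemma binomRoot_succ_le_mul (hp : 1 ≤ p) (hδ : 0 ≤ δ) {y : ℝ} (hy : 0 ≤ y)
    (h : p + 1 ≤ δ ^ (p + 1) * binomRoot p y) : binomRoot (p + 1) y ≤ δ * binomRoot p y := by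
  have hroot := binomRoot_nonneg (p := p) hy
  rw [binomRoot_le_iff p.succ_pos hy (mul_nonneg hδ hroot)]
  calc ((p + 1)! : ℝ) * y = (p + 1) * binomRoot p y ^ p := by
        rw [binomRoot_pow hp hy, Nat.factorial_succ]; push_cast; ring
    _ ≤ δ ^ (p + 1) * binomRoot p y * binomRoot p y ^ p := by gcongr
    _ = (δ * binomRoot p y) ^ (p + 1) := by ring

lemma binomRoot_succ_le_mul_choose (hp : 1 ≤ p) (hpc : 2 * p ≤ c + 1) (hδ : 0 ≤ δ)
    (hN : N ≤ (c + 1).choose (p + 1)) (hq : (q : ℝ) ≤ δ ^ (p + 1) * N) :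
    binomRoot (p + 1) q ≤ 2 * δ * binomRoot p (c.choose p) := by
  have hN' : (N : ℝ) ≤ (c + 1).choose (p + 1) := by exact_mod_cast hN
  have hpc' : (2 * p : ℝ) ≤ c + 1 := by exact_mod_cast hpc
  have hc : (c : ℝ) + 1 ≤ 2 * binomRoot p (c.choose p) := by
    linarith [sub_le_binomRoot_choose hp (show p ≤ c by omega)]
  calc binomRoot (p + 1) q ≤ δ * binomRoot (p + 1) N :=
        binomRoot_le_of_le_pow_mul p.succ_pos q.cast_nonneg N.cast_nonneg hδ hq
    _ ≤ δ * (c + 1 : ℕ) := by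
        gcongr
        exact (binomRoot_mono N.cast_nonneg hN').trans (binomRoot_choose_le p.succ_pos _)
    _ ≤ δ * (2 * binomRoot p (c.choose p)) := by push_cast; gcongr
    _ = _ := by ring

/-- `q` new shadow sets are added in `q / m ≥ q / (2 * m)` batches of size `m`. -/
lemma maxOfShadow_add_mul_binomRoot_le (hp : 1 ≤ p) (hκ : 0 ≤ κ) (hm : 0 < m) (hmq : m ≤ q)
    (hmc : m ≤ c.choose p) (hcN : c.choose (p + 1) ≤ N)
    (hhalf : κ * (m * binomRoot p m) ≤ maxOfShadow p (m / 2)) :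
    maxOfShadow (p + 1) N + κ / 2 * (q * binomRoot p m) ≤ maxOfShadow (p + 1) (N + q) := by
  have hbatch := (maxOfShadow_add_mul_le hp hcN hmc (q / m)).trans <|
    monotone_maxOfShadow p.succ_pos (Nat.add_le_add_left (q.div_mul_le_self m) N)
  have hbatch' : (maxOfShadow (p + 1) N : ℝ) + (q / m : ℕ) * maxOfShadow p (m / 2) ≤
      maxOfShadow (p + 1) (N + q) := by exact_mod_cast hbatch
  have hq : (q : ℝ) ≤ 2 * (q / m : ℕ) * m := by
    have := Nat.lt_div_mul_add (a := q) hm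
    have := Nat.mul_le_mul_right m ((Nat.one_le_div_iff hm).2 hmq)
    exact_mod_cast (show q ≤ 2 * (q / m) * m by nlinarith)
  have hroot := binomRoot_nonneg (p := p) m.cast_nonneg
  have hgain : κ / 2 * (q * binomRoot p m) ≤ (q / m : ℕ) * maxOfShadow p (m / 2) :=
    calc κ / 2 * (q * binomRoot p m) ≤ κ / 2 * (2 * (q / m : ℕ) * m * binomRoot p m) := by gcongr
      _ = (q / m : ℕ) * (κ * (m * binomRoot p m)) := by ring
      _ ≤ _ := by gcongr
  linarith

lemma binomRoot_succ_le_mul_min (hp : 1 ≤ p) (hpc : 2 * p ≤ c + 1) (hδ : 0 ≤ δ)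
    (hN : N ≤ (c + 1).choose (p + 1)) (hq : (q : ℝ) ≤ δ ^ (p + 1) * N)
    (hroot : p + 1 ≤ δ ^ (p + 1) * binomRoot p (min q (c.choose p) : ℕ)) :
    binomRoot (p + 1) q ≤ 2 * δ * binomRoot p (min q (c.choose p) : ℕ) := by
  rcases le_total q (c.choose p) with hqc | hqc
  · rw [min_eq_left hqc] at hroot ⊢
    have := binomRoot_succ_le_mul hp hδ q.cast_nonneg hroot
    linarith [mul_nonneg hδ (binomRoot_nonneg (p := p) q.cast_nonneg)]
  · rw [min_eq_right hqc]
    exact binomRoot_succ_le_mul_choose hp hpc hδ hN hq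

lemma mul_add_leadTerm_add_maxOfShadow_le (hp : 1 ≤ p) (hκ : 0 ≤ κ) (hpc : 2 * p ≤ c + 1)
    (hcN : c.choose (p + 1) ≤ N) (hNc : N ≤ (c + 1).choose (p + 1))
    (hq : (q : ℝ) ≤ (κ / 8) ^ (p + 1) * N) (hm : m = min q (c.choose p)) (hm0 : 0 < m)
    (hhalf : κ * (m * binomRoot p m) ≤ maxOfShadow p (m / 2))
    (hC : 4 * C ≤ κ * binomRoot p m) (hroot : p + 1 ≤ (κ / 8) ^ (p + 1) * binomRoot p m) :
    C * q + 2 * leadTerm (p + 1) q + maxOfShadow (p + 1) N ≤ maxOfShadow (p + 1) (N + q) := by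
  subst hm
  have hbatch := maxOfShadow_add_mul_binomRoot_le hp hκ hm0 (min_le_left _ _)
    (min_le_right _ _) hcN hhalf
  have hsmall := binomRoot_succ_le_mul_min hp hpc (by positivity) hNc hq hroot
  set n := binomRoot p (min q (c.choose p) : ℕ)
  have hlead : 2 * leadTerm (p + 1) q ≤ q * binomRoot (p + 1) q := by
    have := mul_nonneg q.cast_nonneg (binomRoot_nonneg (p := p + 1) q.cast_nonneg)
    rw [leadTerm, mul_div_assoc', div_le_iff₀ (by positivity)]
    push_cast
    nlinarith [p.cast_nonneg (α := ℝ)]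
  have hcost : C * q + q * binomRoot (p + 1) q ≤ κ / 2 * (q * n) :=
    calc C * q + q * binomRoot (p + 1) q ≤ κ * n / 4 * q + q * (2 * (κ / 8) * n) := by
          gcongr; linarith
      _ = κ / 2 * (q * n) := by ring
  linarith

/-- Moving `q` sets away from the bulk of the shadow loses more than those sets can support. -/
lemma exists_mul_add_leadTerm_add_maxOfShadow_le (hp : 1 ≤ p) (C : ℝ) :
    ∃ ε > (0 : ℝ), ∃ b₀ q₀ : ℕ, ∀ b q : ℕ, b₀ ≤ b → q₀ ≤ q → (q : ℝ) ≤ ε * b →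
      C * q + 2 * leadTerm (p + 1) q + maxOfShadow (p + 1) (b - q) ≤ maxOfShadow (p + 1) b := by
  obtain ⟨κ, hκ, hκ1, hhalf⟩ := exists_mul_binomRoot_le_maxOfShadow_half hp
  have hδ : 0 < (κ / 8) ^ (p + 1) := by positivity
  have hδ1 : (κ / 8) ^ (p + 1) ≤ 1 := pow_le_one₀ (by positivity) (by linarith)
  have hroot : Tendsto (fun m : ℕ ↦ binomRoot p m) atTop atTop :=
    (tendsto_binomRoot_atTop hp).comp tendsto_natCast_atTop_atTop
  obtain ⟨m₀, hm₀⟩ := eventually_atTop.1 <| hhalf.and <| (eventually_gt_atTop 0).and <|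
    ((hroot.const_mul_atTop hκ).eventually_ge_atTop (4 * C)).and <|
    (hroot.const_mul_atTop hδ).eventually_ge_atTop (p + 1 : ℝ)
  obtain ⟨c₀, hc₀⟩ := eventually_atTop.1 <|
    ((tendsto_choose_atTop hp).eventually_ge_atTop m₀).and (eventually_ge_atTop (2 * p))
  refine ⟨(κ / 8) ^ (p + 1) / 2, by positivity, 2 * c₀.choose (p + 1), m₀, fun b q hb hq hqb ↦ ?_⟩
  have hqb2 : 2 * (q : ℝ) ≤ b := by nlinarith [b.cast_nonneg (α := ℝ)]
  have hqb2' : 2 * q ≤ b := by exact_mod_cast hqb2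
  obtain ⟨N, rfl⟩ := Nat.exists_eq_add_of_le' (show q ≤ b by omega)
  rw [Nat.add_sub_cancel]
  obtain ⟨c, hcN, hNc⟩ := exists_choose_le_lt_choose_succ p.succ_pos N
  have hcc : c₀ ≤ c := Nat.le_of_lt_succ <|
    lt_of_choose_lt_choose (lt_of_le_of_lt (show c₀.choose (p + 1) ≤ N by omega) hNc)
  obtain ⟨hm, hm0, hmC, hmδ⟩ := hm₀ _ (le_min hq (hc₀ c hcc).1)
  refine mul_add_leadTerm_add_maxOfShadow_le hp hκ.le ((hc₀ c hcc).2.trans c.le_succ) hcN hNc.le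
    ?_ rfl hm0 hm hmC hmδ
  push_cast at hqb hqb2
  nlinarith

end Gain

section Star

variable {α : Type*} [DecidableEq α] {p r s : ℕ} {𝒜 ℬ : Finset (Finset α)} {S : Finset α} {x : α}

lemma card_image_sdiff_of_subset (h : ∀ A ∈ 𝒜, S ⊆ A) : #(𝒜.image (· \ S)) = #𝒜 :=
  card_image_of_injOn fun A hA B hB hAB ↦ by
    rw [← sdiff_union_of_subset (h A hA), ← sdiff_union_of_subset (h B hB)]
    exact congrArg (· ∪ S) hAB

lemma ErasurePair.image_sdiff (h : ErasurePair r p 𝒜 ℬ) (hr : #S + s = r)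
    (h𝒜 : ∀ A ∈ 𝒜, S ⊆ A) (hℬ : ∀ B ∈ ℬ, S ⊆ B) :
    ErasurePair s p (𝒜.image (· \ S)) (ℬ.image (· \ S)) where
  card_upper := forall_mem_image.2 fun A hA ↦ by
    rw [card_sdiff_of_subset (h𝒜 A hA), h.card_upper A hA]; omega
  card_lower := forall_mem_image.2 fun B hB ↦ by
    rw [card_sdiff_of_subset (hℬ B hB), h.card_lower B hB]; omega
  lt_card_removable := forall_mem_image.2 fun A hA ↦ by
    refine (h.lt_card_removable A hA).trans_le (card_le_card fun x hx ↦ ?_)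
    obtain ⟨hxA, hxℬ⟩ := mem_removable.1 hx
    have hxS : x ∉ S := fun hxS ↦ notMem_erase x A (hℬ _ hxℬ hxS)
    exact mem_removable.2 ⟨mem_sdiff.2 ⟨hxA, hxS⟩, mem_image.2 ⟨_, hxℬ, erase_sdiff_comm ..⟩⟩

/-- A removable point in `S` recovers `A` as `B ∪ S` from a set `B ∈ ℬ` not containing `S`. -/
lemma card_filter_removable_inter_le (S : Finset α) (𝒜 ℬ : Finset (Finset α)) :
    #{A ∈ 𝒜 | S ⊆ A ∧ ¬Disjoint S (removable ℬ A)} ≤ #{B ∈ ℬ | ¬S ⊆ B} := by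
  refine (card_le_card fun A hA ↦ ?_).trans (card_image_le (f := (· ∪ S)))
  obtain ⟨-, hSA, hmeet⟩ := mem_filter.1 hA
  obtain ⟨y, hyS, hy⟩ := not_disjoint_iff.1 hmeet
  refine mem_image.2 ⟨A.erase y, mem_filter.2
    ⟨(mem_removable.1 hy).2, fun hS ↦ notMem_erase y A (hS hyS)⟩, ?_⟩
  rw [erase_union_of_mem hyS, union_eq_left.2 hSA]

lemma ErasurePair.filter_subset_disjoint (h : ErasurePair r p 𝒜 ℬ) (S : Finset α) :
    ErasurePair r p {A ∈ 𝒜 | S ⊆ A ∧ Disjoint S (removable ℬ A)} {B ∈ ℬ | S ⊆ B} := by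
  refine h.restrict (filter_subset _ _) (filter_subset _ _) fun A hA x hx ↦ ?_
  obtain ⟨-, hSA, hdisj⟩ := mem_filter.1 hA
  obtain ⟨hxA, hxℬ⟩ := mem_removable.1 hx
  exact mem_removable.2
    ⟨hxA, mem_filter.2 ⟨hxℬ, subset_erase.2 ⟨hSA, fun hxS ↦ disjoint_left.1 hdisj hxS hx⟩⟩⟩

lemma ErasurePair.image_insert (h : ErasurePair r p 𝒜 ℬ) (h𝒜 : ∀ A ∈ 𝒜, x ∉ A)
    (hℬ : ∀ B ∈ ℬ, x ∉ B) :
    ErasurePair (r + 1) p (𝒜.image (insert x)) (ℬ.image (insert x)) where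
  card_upper := forall_mem_image.2 fun A hA ↦ by
    rw [card_insert_of_notMem (h𝒜 A hA), h.card_upper A hA]
  card_lower := forall_mem_image.2 fun B hB ↦ by
    rw [card_insert_of_notMem (hℬ B hB), h.card_lower B hB]
  lt_card_removable := forall_mem_image.2 fun A hA ↦ by
    refine (h.lt_card_removable A hA).trans_le (card_le_card fun y hy ↦ ?_)
    obtain ⟨hyA, hyℬ⟩ := mem_removable.1 hy
    have hyx : x ≠ y := fun hxy ↦ h𝒜 A hA (hxy ▸ hyA)
    exact mem_removable.2
      ⟨mem_insert_of_mem hyA, mem_image.2 ⟨_, hyℬ, (erase_insert_of_ne hyx).symm⟩⟩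

lemma ErasurePair.exists_add [Infinite α] (h : ErasurePair r p 𝒜 ℬ) (t : ℕ) :
    ∃ 𝒜' ℬ', ErasurePair (α := α) (r + t) p 𝒜' ℬ' ∧ #𝒜' = #𝒜 ∧ #ℬ' = #ℬ := by
  induction t with
  | zero => exact ⟨𝒜, ℬ, h, rfl, rfl⟩
  | succ t ih =>
    obtain ⟨𝒜', ℬ', h', h𝒜', hℬ'⟩ := ih
    obtain ⟨x, hx⟩ := Infinite.exists_notMem_finset ((𝒜' ∪ ℬ').sup id)
    have hfresh : ∀ A ∈ 𝒜' ∪ ℬ', x ∉ A := fun A hA hxA ↦ hx (mem_sup.2 ⟨A, hA, hxA⟩)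
    have h𝒜x A (hA : A ∈ 𝒜') : x ∉ A := hfresh A (mem_union_left _ hA)
    have hℬx B (hB : B ∈ ℬ') : x ∉ B := hfresh B (mem_union_right _ hB)
    exact ⟨_, _, h'.image_insert h𝒜x hℬx, (card_image_insert_of_notMem h𝒜x).trans h𝒜',
      (card_image_insert_of_notMem hℬx).trans hℬ'⟩

end Star

section Main

variable {p r : ℕ} {𝒜 ℬ : Finset (Finset ℕ)}

lemma ErasurePair.card_le_add_maxOfShadow (hp : 1 ≤ p) (h : ErasurePair r p 𝒜 ℬ)
    {S : Finset ℕ} (hS : #S + p = r) :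
    #𝒜 ≤ #{A ∈ 𝒜 | ¬S ⊆ A} + #{B ∈ ℬ | ¬S ⊆ B} + maxOfShadow p (#ℬ - #{B ∈ ℬ | ¬S ⊆ B}) := by
  have hupper : #{A ∈ 𝒜 | S ⊆ A} + #{A ∈ 𝒜 | ¬S ⊆ A} = #𝒜 := card_filter_add_card_filter_not _
  have hlower : #{B ∈ ℬ | S ⊆ B} + #{B ∈ ℬ | ¬S ⊆ B} = #ℬ := card_filter_add_card_filter_not _
  have hsplit := card_filter_add_card_filter_not (s := {A ∈ 𝒜 | S ⊆ A})
    fun A ↦ Disjoint S (removable ℬ A)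
  rw [filter_filter, filter_filter] at hsplit
  have hmeet := card_filter_removable_inter_le S 𝒜 ℬ
  have hstar := ((h.filter_subset_disjoint S).image_sdiff hS
    (fun A hA ↦ (mem_filter.1 hA).2.1) fun B hB ↦ (mem_filter.1 hB).2).card_le_maxOfShadow hp
  rw [card_image_sdiff_of_subset fun A hA ↦ (mem_filter.1 hA).2.1,
    card_image_sdiff_of_subset fun B hB ↦ (mem_filter.1 hB).2, Nat.eq_sub_of_add_eq hlower] at hstar
  omega

lemma exists_card_le_maxOfShadow_succ_add (hp : 1 ≤ p) :
    ∃ τ, ∀ ⦃r 𝒜 ℬ⦄, ErasurePair (α := ℕ) r (p + 1) 𝒜 ℬ → #𝒜 ≤ maxOfShadow (p + 1) #ℬ + τ := by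
  have hp' : 1 ≤ p + 1 := p.succ_pos
  obtain ⟨C, -, hbound⟩ := exists_leadTermBound ℕ hp' one_pos
  obtain ⟨ε, hε, b₀, q₀, hgain⟩ := exists_mul_add_leadTerm_add_maxOfShadow_le hp (C + 1)
  obtain ⟨η, hη, b₁, hstable⟩ := stable ℕ hp' ε hε
  obtain ⟨b₂, hlarge⟩ := Filter.eventually_atTop.1 <|
    eventually_leadTerm_le_maxOfShadow hp' hη
  set b₃ := max b₀ (max b₁ b₂)
  refine ⟨b₃.choose 2 + (q₀.choose 2 + q₀), fun r 𝒜 ℬ h ↦ ?_⟩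
  by_contra! hlt
  have hb : b₃ ≤ #ℬ := by
    by_contra! hb
    have := h.card_le_choose_two hp'
    have := Nat.choose_le_choose 2 hb.le
    omega
  have hext : (1 - η) * leadTerm (p + 1) #ℬ ≤ #𝒜 :=
    (hlarge _ (by omega)).trans (Nat.cast_le.2 (by omega))
  obtain ⟨S, hS, hfew⟩ := hstable h (by omega) hext
  have hstar := h.card_le_add_maxOfShadow hp' hS
  have hrest := h.filter_not_subset S
  set q := #{B ∈ ℬ | ¬S ⊆ B}
  rcases lt_or_ge q q₀ with hq | hq
  · have : #{A ∈ 𝒜 | ¬S ⊆ A} ≤ q.choose 2 := hrest.card_le_choose_two hp'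
    have := Nat.choose_le_choose 2 hq.le
    have := monotone_maxOfShadow hp' (Nat.sub_le #ℬ q)
    omega
  · have hstar' : (#𝒜 : ℝ) ≤ #{A ∈ 𝒜 | ¬S ⊆ A} + q + maxOfShadow (p + 1) (#ℬ - q) := by
      exact_mod_cast hstar
    have hlt' : (maxOfShadow (p + 1) #ℬ : ℝ) < #𝒜 := Nat.cast_lt.2 (by omega)
    linarith [hgain #ℬ q (by omega) hq hfew, hbound hrest]

theorem exists_card_le_maxOfShadow_add (hp : 1 ≤ p) :
    ∃ τ, ∀ ⦃r 𝒜 ℬ⦄, ErasurePair (α := ℕ) r p 𝒜 ℬ → #𝒜 ≤ maxOfShadow p #ℬ + τ := by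
  obtain rfl | hp := hp.eq_or_lt
  · refine ⟨0, fun r 𝒜 ℬ h ↦ ?_⟩
    have := maxOfShadow_choose le_rfl #ℬ
    rw [Nat.choose_one_right] at this
    exact this ▸ h.card_le_choose_two le_rfl
  · obtain ⟨p, rfl⟩ := Nat.exists_eq_add_of_le' hp.le
    exact exists_card_le_maxOfShadow_succ_add (Nat.lt_of_succ_lt_succ hp)

lemma exists_erasurePair_card_eq_maxOfShadow (hp : 1 ≤ p) (b : ℕ) :
    ∃ 𝒜 ℬ, ErasurePair (α := ℕ) p p 𝒜 ℬ ∧ #ℬ = b ∧ #𝒜 = maxOfShadow p b := by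
  obtain ⟨𝒜, h𝒜, hb, hcard⟩ := exists_card_eq_maxOfShadow hp b
  obtain ⟨n, hn⟩ := exists_forall_subset_range (∂ 𝒜)
  obtain ⟨m, hm, hnm⟩ := (((tendsto_choose_atTop hp).eventually_ge_atTop b).and
    (Filter.eventually_ge_atTop n)).exists
  have hsub : ∂ 𝒜 ⊆ powersetCard p (range m) := fun B hB ↦
    mem_powersetCard.2 ⟨(hn B hB).trans (range_mono hnm), h𝒜.shadow hB⟩
  obtain ⟨ℬ, h𝒜ℬ, hℬ, rfl⟩ := exists_subsuperset_card_eq hsub hb (by simpa using hm)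
  exact ⟨𝒜, ℬ, erasurePair_of_shadow_subset h𝒜 (fun B hB ↦ (mem_powersetCard.1 (hℬ hB)).2) h𝒜ℬ,
    rfl, hcard⟩

theorem exists_maxOfShadow_le_f_le_add (hp : 1 ≤ p) :
    ∃ τ, ∀ r b, p ≤ r →
      maxOfShadow p b ≤ f (r + 1) (p + 1) b ∧ f (r + 1) (p + 1) b ≤ maxOfShadow p b + τ := by
  obtain ⟨τ, hτ⟩ := exists_card_le_maxOfShadow_add hp
  refine ⟨τ, fun r b hpr ↦ ?_⟩
  have hupper : maxOfShadow p b + τ ∈ upperBounds {a | ∃ 𝒜 ℬ : Finset (Finset ℕ),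
      ValidPair (r + 1) (p + 1) 𝒜 ℬ ∧ #ℬ = b ∧ #𝒜 = a} := by
    rintro _ ⟨𝒜, ℬ, h, rfl, rfl⟩
    exact hτ (validPair_iff_erasurePair.1 h)
  refine ⟨?_, csSup_le' hupper⟩
  obtain ⟨𝒜, ℬ, h, rfl, h𝒜⟩ := exists_erasurePair_card_eq_maxOfShadow hp b
  obtain ⟨t, rfl⟩ := Nat.exists_eq_add_of_le hpr
  obtain ⟨𝒜', ℬ', h', h𝒜', hℬ'⟩ := h.exists_add t
  exact le_csSup ⟨_, hupper⟩ ⟨𝒜', ℬ', validPair_iff_erasurePair.2 h', hℬ', h𝒜'.trans h𝒜⟩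

end Main

theorem stmt_1 :
    ∀ k : ℕ, 2 ≤ k → ∃ τ : ℕ, ∀ r : ℕ, k ≤ r → ∀ c : ℕ → ℕ,
      StrictMonoOn c (Set.Icc 1 (k - 1)) →
      (∑ i ∈ Finset.Icc 1 (k - 1), (c i).choose (i + 1)) ≤
          f r k (∑ i ∈ Finset.Icc 1 (k - 1), (c i).choose i) ∧
        f r k (∑ i ∈ Finset.Icc 1 (k - 1), (c i).choose i) ≤
          (∑ i ∈ Finset.Icc 1 (k - 1), (c i).choose (i + 1)) + τ := by
  intro k hk
  obtain ⟨p, rfl⟩ := Nat.exists_eq_add_of_le' (one_le_two.trans hk)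
  have hp : 1 ≤ p := Nat.le_of_succ_le_succ hk
  obtain ⟨τ, hτ⟩ := exists_maxOfShadow_le_f_le_add hp
  refine ⟨τ, fun r hr c hc ↦ ?_⟩
  obtain ⟨r, rfl⟩ := Nat.exists_eq_add_of_le' (hp.trans (p.le_succ.trans hr))
  rw [Nat.add_sub_cancel] at hc ⊢
  have hd : StrictMonoOn (fun i ↦ c (i + 1)) (Set.Iio p) := fun i hi j hj hij ↦
    hc ⟨by omega, hi⟩ ⟨by omega, hj⟩ (Nat.succ_lt_succ hij)
  have hshift (g : ℕ → ℕ) : ∑ i ∈ Icc 1 p, g i = ∑ i ∈ range p, g (i + 1) := by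
    rw [range_eq_Ico, sum_Ico_add' g 0 p 1]; rfl
  have hmax := maxOfShadow_sum_choose hp hd
  rw [hshift, hshift, ← hmax]
  exact hτ r _ (Nat.le_of_succ_le_succ hr)
end

section
/- For all integers r ≥ 3 and c_2 > c_1 ≥ 0 with c_2 ≥ 29, one has f(r, 3, C(c_2,2) + c_1) = C(c_2,3) + C(c_1,2), where C(n,m) denotes the binomial coefficient. -/
/-!
The maximum is attained by initial segments of the colexicographic order, joined with `r - 3`
fixed points. For the upper bound, induct on `r` and on `|ℬ|`. Let `x` have maximal degree `s` in
`ℬ` and let `t` members of `ℬ` avoid `x`. The members of `𝒜` avoiding `x` form a valid pair with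
these `t` sets. A member of `𝒜` through `x` leaves, on deleting `x`, a set with either at least
three facets in the link of `ℬ`, or exactly two, and in the latter case the set itself belongs to
`ℬ`. So there are at most `t` sets of the second kind, and adding one facet for each makes them
obey the bound for `r - 1` as well.

Further bounds come from counting pairs of facets, since two facets of a set determine it as their
union, and from weighting such pairs by the size of their intersection, which is what controls `𝒜`
when `s` is small. If both `s` and `t` are large, the convexity of the piecewise linear
interpolation `chord` absorbs all errors, except when `s` lies roughly between `4 * c / 3` and
`2 * c`, where `c` is the triangular root of `|ℬ|`; there two applications of the inequality
`extremal n + C(m, 2) ≤ extremal (n + m)`, valid for `m < triRoot (n + m)`, suffice. For `|ℬ|`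
below `C(25, 2)` the induction only yields the bound `chord / 2`, which is the claimed value at
triangular numbers.
-/

section Triangular

theorem two_mul_cast_choose_two (n : ℕ) : 2 * (n.choose 2 : ℤ) = n * (n - 1) := by
  induction n with
  | zero => simp
  | succ n ih =>
    rw [Nat.choose_succ_succ' n 1, Nat.choose_one_right]
    push_cast
    linarith

theorem six_mul_cast_choose_three (n : ℕ) : 6 * (n.choose 3 : ℤ) = n * (n - 1) * (n - 2) := by
  induction n with
  | zero => simp
  | succ n ih =>
    rw [Nat.choose_succ_succ' n 2]
    push_cast
    linarith [two_mul_cast_choose_two n]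

theorem choose_two_succ (n : ℕ) : (n + 1).choose 2 = n + n.choose 2 := by
  rw [Nat.choose_succ_succ' n 1, Nat.choose_one_right]

/-- The triangular root of `n`: the unique `c` with `c.choose 2 ≤ n < (c + 1).choose 2`. The
closed formula makes it efficient to evaluate. -/
def triRoot (n : ℕ) : ℕ := (Nat.sqrt (8 * n + 1) + 1) / 2

theorem le_triRoot_iff {c n : ℕ} : c ≤ triRoot n ↔ c.choose 2 ≤ n := by
  have h_choose := two_mul_cast_choose_two c
  rcases Nat.eq_zero_or_pos c with rfl | hc
  · simp
  have h_sqrt : c ≤ triRoot n ↔ (2 * c - 1) * (2 * c - 1) ≤ 8 * n + 1 := by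
    rw [← Nat.le_sqrt, triRoot]
    omega
  rw [h_sqrt]
  zify [show 1 ≤ 2 * c by omega]
  constructor <;> intro h <;> linarith

theorem triRoot_lt_iff {c n : ℕ} : triRoot n < c ↔ n < c.choose 2 := by
  simpa only [not_le] using le_triRoot_iff.not

theorem triRoot_mono {m n : ℕ} (h : m ≤ n) : triRoot m ≤ triRoot n :=
  le_triRoot_iff.2 ((le_triRoot_iff.1 le_rfl).trans h)

theorem one_le_triRoot (n : ℕ) : 1 ≤ triRoot n :=
  le_triRoot_iff.2 (Nat.zero_le n)

theorem triRoot_mul_sub_one_le (n : ℕ) : (triRoot n : ℤ) * (triRoot n - 1) ≤ 2 * n := by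
  have h : (triRoot n).choose 2 ≤ n := le_triRoot_iff.1 le_rfl
  linarith [two_mul_cast_choose_two (triRoot n)]

theorem le_triRoot_mul_add_one (n : ℕ) : 2 * (n : ℤ) + 2 ≤ triRoot n * (triRoot n + 1) := by
  have h : n < (triRoot n + 1).choose 2 := triRoot_lt_iff.1 (Nat.lt_succ_self _)
  have h_choose := two_mul_cast_choose_two (triRoot n + 1)
  push_cast at h_choose
  linarith

/-- The excess of `n` over the largest triangular number not exceeding `n`. -/
def triRem (n : ℕ) : ℕ := n - (triRoot n).choose 2

theorem choose_triRoot_add_triRem (n : ℕ) : (triRoot n).choose 2 + triRem n = n :=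
  Nat.add_sub_of_le (le_triRoot_iff.1 le_rfl)

theorem two_mul_eq_triRoot_add_triRem (n : ℕ) :
    2 * (n : ℤ) = triRoot n * (triRoot n - 1) + 2 * triRem n := by
  have h := choose_triRoot_add_triRem n
  zify at h
  linarith [two_mul_cast_choose_two (triRoot n)]

theorem triRem_lt_triRoot (n : ℕ) : triRem n < triRoot n := by
  zify
  linarith [two_mul_eq_triRoot_add_triRem n, le_triRoot_mul_add_one n]

theorem triRoot_choose_two_add {c k : ℕ} (h : k < c) : triRoot (c.choose 2 + k) = c := by
  refine le_antisymm (Nat.lt_succ_iff.1 (triRoot_lt_iff.2 ?_))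
    (le_triRoot_iff.2 (Nat.le_add_right _ _))
  rw [choose_two_succ]
  omega

end Triangular

section Bounds

/-- The claimed maximum `C(c, 3) + C(k, 2)` for `n = C(c, 2) + k` sets, where `k < c`. -/
def extremal (n : ℕ) : ℕ := (triRoot n).choose 3 + (triRem n).choose 2

theorem extremal_choose_two_add {c k : ℕ} (h : k < c) :
    extremal (c.choose 2 + k) = c.choose 3 + k.choose 2 := by
  rw [extremal, triRem, triRoot_choose_two_add h, Nat.add_sub_cancel_left]

/-- Twice the piecewise linear interpolation of `C(c, 2) ↦ C(c, 3)`, a convex majorant of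
`extremal`. On the piece starting at `C(c, 2)` the slope of the interpolation is `(c - 1) / 2`. -/
def chord (n : ℕ) : ℕ := 2 * (triRoot n).choose 3 + triRem n * (triRoot n - 1)

theorem six_mul_chord (n : ℕ) :
    6 * (chord n : ℤ) = 6 * (triRoot n - 1) * n - ((triRoot n : ℤ) ^ 3 - triRoot n) := by
  rw [chord]
  push_cast [one_le_triRoot n]
  linear_combination 2 * six_mul_cast_choose_three (triRoot n)
    - 3 * ((triRoot n : ℤ) - 1) * two_mul_eq_triRoot_add_triRem n

theorem affine_le_six_mul_chord (c n : ℕ) :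
    6 * ((c : ℤ) - 1) * n - ((c : ℤ) ^ 3 - c) ≤ 6 * chord n := by
  rw [six_mul_chord]
  have h_low := triRoot_mul_sub_one_le n
  have h_high := le_triRoot_mul_add_one n
  generalize triRoot n = C at *
  rcases lt_trichotomy c C with h | rfl | h
  · have h_fac : 0 ≤ 6 * (n : ℤ) + 1 - (C ^ 2 + C * c + c ^ 2) := by nlinarith
    nlinarith
  · rfl
  · have h_fac : 6 * (n : ℤ) + 1 - (C ^ 2 + C * c + c ^ 2) ≤ 0 := by nlinarith
    nlinarith

theorem chord_add_le_chord (M m : ℕ) :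
    (chord M : ℤ) + (triRoot M - 1) * m ≤ chord (M + m) := by
  have h := affine_le_six_mul_chord (triRoot M) (M + m)
  push_cast at h
  linarith [six_mul_chord M]

theorem chord_mono {m n : ℕ} (h : m ≤ n) : chord m ≤ chord n := by
  obtain ⟨i, rfl⟩ := Nat.exists_eq_add_of_le h
  have h_gap := chord_add_le_chord m i
  have h_pos := one_le_triRoot m
  zify at h_pos ⊢
  nlinarith

theorem three_mul_chord_le (n : ℕ) : 3 * (chord n : ℤ) ≤ 2 * n * (triRoot n - 1) := by
  have h_pos := one_le_triRoot n
  have h_high := le_triRoot_mul_add_one n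
  zify at h_pos
  nlinarith [six_mul_chord n]

theorem two_mul_extremal (n : ℕ) :
    2 * (extremal n : ℤ) = chord n - triRem n * (triRoot n - triRem n) := by
  rw [extremal, chord]
  push_cast [one_le_triRoot n]
  linear_combination two_mul_cast_choose_two (triRem n)

theorem two_mul_extremal_le_chord (n : ℕ) : 2 * extremal n ≤ chord n := by
  have h := two_mul_extremal n
  have h_lt := triRem_lt_triRoot n
  zify at h_lt ⊢
  nlinarith

theorem choose_two_add (i j : ℕ) : (i + j).choose 2 = i.choose 2 + j.choose 2 + i * j := by
  have h := two_mul_cast_choose_two (i + j)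
  zify
  push_cast at h
  linarith [two_mul_cast_choose_two i, two_mul_cast_choose_two j]

theorem extremal_add_of_le_triRem {m n : ℕ} (h : m ≤ triRem (n + m)) :
    extremal n + m.choose 2 + m * (triRem (n + m) - m) = extremal (n + m) := by
  have h_sum := choose_triRoot_add_triRem (n + m)
  have h_rem := triRem_lt_triRoot (n + m)
  have h_ext : extremal (n + m) = (triRoot (n + m)).choose 3 + (triRem (n + m)).choose 2 := rfl
  rw [h_ext]
  generalize triRoot (n + m) = c at *
  generalize triRem (n + m) = k at *
  obtain ⟨i, rfl⟩ := Nat.exists_eq_add_of_le h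
  obtain rfl : n = c.choose 2 + i := by omega
  rw [extremal_choose_two_add (by omega), Nat.add_sub_cancel_left, choose_two_add m i]
  ring

theorem extremal_add_of_triRem_lt {m n : ℕ} (h : triRem (n + m) < m) (hm : m < triRoot (n + m)) :
    extremal n + m.choose 2 + (m - triRem (n + m)) * (triRoot (n + m) - 1 - m) =
      extremal (n + m) := by
  have h_sum := choose_triRoot_add_triRem (n + m)
  have h_ext : extremal (n + m) = (triRoot (n + m)).choose 3 + (triRem (n + m)).choose 2 := rfl
  rw [h_ext]
  generalize triRoot (n + m) = c at *
  generalize triRem (n + m) = k at *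
  obtain ⟨y, rfl⟩ := Nat.exists_eq_add_of_le h.le
  obtain ⟨i, rfl⟩ := Nat.exists_eq_add_of_lt hm
  rw [choose_two_succ] at h_sum
  obtain rfl : n = (k + y + i).choose 2 + (k + i) := by omega
  rw [extremal_choose_two_add (by omega), Nat.choose_succ_succ' (k + y + i) 2, choose_two_add k i,
    choose_two_add (k + y) i, choose_two_add k y, Nat.add_sub_cancel_left,
    show k + y + i + 1 - 1 - (k + y) = i by omega]
  ring

theorem extremal_add_choose_two_le {m n : ℕ} (h : m < triRoot (n + m)) :
    extremal n + m.choose 2 ≤ extremal (n + m) := by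
  rcases le_or_gt m (triRem (n + m)) with hm | hm
  · exact (Nat.le_add_right _ _).trans (extremal_add_of_le_triRem hm).le
  · exact (Nat.le_add_right _ _).trans (extremal_add_of_triRem_lt hm h).le

/-- The upper bound carried through the induction. The induction does not close for `extremal`
itself at small sizes, so below `300 = C(25, 2)` it is replaced by the interpolation. -/
def sizeBound (n : ℕ) : ℕ := if n < 300 then chord n / 2 else extremal n

theorem sizeBound_of_le {n : ℕ} (h : 300 ≤ n) : sizeBound n = extremal n :=
  if_neg h.not_gt

theorem le_sizeBound_iff_of_lt {a n : ℕ} (h : n < 300) : a ≤ sizeBound n ↔ 2 * a ≤ chord n := by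
  rw [sizeBound, if_pos h]
  omega

theorem extremal_le_sizeBound (n : ℕ) : extremal n ≤ sizeBound n := by
  have h := two_mul_extremal_le_chord n
  unfold sizeBound
  split_ifs <;> omega

theorem two_mul_sizeBound_le_chord (n : ℕ) : 2 * sizeBound n ≤ chord n := by
  have h := two_mul_extremal_le_chord n
  unfold sizeBound
  split_ifs <;> omega

theorem extremal_le_extremal_add (n i : ℕ) : extremal n ≤ extremal (n + i) := by
  induction i with
  | zero => rfl
  | succ i ih =>
    rcases (one_le_triRoot (n + i + 1)).eq_or_lt with h | h
    · have h_zero : n + i + 1 < (2 : ℕ).choose 2 := triRoot_lt_iff.1 (by omega)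
      simp at h_zero
    · exact ih.trans (extremal_add_choose_two_le h)

theorem sizeBound_mono {m n : ℕ} (h : m ≤ n) : sizeBound m ≤ sizeBound n := by
  rcases lt_or_ge n 300 with hn | hn
  · rw [le_sizeBound_iff_of_lt hn]
    exact (two_mul_sizeBound_le_chord m).trans (chord_mono h)
  rcases lt_or_ge m 300 with hm | hm
  · obtain ⟨i, rfl⟩ := Nat.exists_eq_add_of_le hn
    have h_300 : chord 300 = 2 * extremal 300 := by decide +kernel
    have h_low := (two_mul_sizeBound_le_chord m).trans (chord_mono hm.le)
    have h_high := extremal_le_extremal_add 300 i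
    rw [sizeBound_of_le hn]
    omega
  · rw [sizeBound_of_le hm, sizeBound_of_le hn]
    obtain ⟨i, rfl⟩ := Nat.exists_eq_add_of_le h
    exact extremal_le_extremal_add m i

end Bounds

section Inequalities

-- In use, `c`, `A` and `d` are the triangular roots of `m + M`, of `M` and of `m`.
variable {c d A m M : ℤ}

theorem three_mul_sq_le (hc : 25 ≤ c) (h_sum : c * (c - 1) ≤ 2 * (m + M))
    (hA : 2 * M + 2 ≤ A * (A + 1)) (hd : d * (d - 1) ≤ 2 * m) (hA_pos : 1 ≤ A) (hdA : d ≤ A)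
    (h_le : m ≤ M) (hm : c ≤ m) : 3 * c ^ 2 ≤ 4 * m * (3 * A - 2 * d - 7) := by
  rcases lt_or_ge m (2 * c) with h | h
  · have hA' : c - 3 ≤ A := by nlinarith
    have hd' : 2 * d ≤ c := by nlinarith
    nlinarith
  · have hA' : 2 * c ≤ 3 * A := by nlinarith
    nlinarith

theorem fifteen_mul_sq_le (hc : 25 ≤ c) (h_sum : c * (c - 1) ≤ 2 * (m + M))
    (hA : 2 * M + 2 ≤ A * (A + 1)) (hd : d * (d - 1) ≤ 2 * m) (hA_pos : 1 ≤ A) (hdA : d ≤ A)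
    (h_le : m ≤ M) (hm : 2 * c - 2 ≤ m) :
    15 * c ^ 2 + 12 ≤ 4 * m * (3 * A - 2 * d + 5) := by
  rcases lt_or_ge (5 * m) (11 * c) with h₁ | h₁
  · have hA' : c - 3 ≤ A := by nlinarith
    have hd' : 5 * d ≤ 2 * c + 5 := by nlinarith
    nlinarith
  rcases lt_or_ge (10 * m) (27 * c) with h₂ | h₂
  · have hA' : c - 3 ≤ A := by nlinarith
    have hd' : 5 * d ≤ 2 * c + 10 := by nlinarith
    nlinarith
  rcases lt_or_ge m (4 * c) with h₃ | h₃
  · have hA' : c - 5 ≤ A := by nlinarith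
    have hd' : 5 * d ≤ 2 * c + 25 := by nlinarith
    nlinarith
  rcases lt_or_ge (10 * m) (57 * c) with h₄ | h₄
  · have hA' : c - 7 ≤ A := by nlinarith
    have hd' : 2 * d ≤ c + 10 := by nlinarith
    nlinarith
  · have hA' : 2 * c ≤ 3 * A := by nlinarith
    nlinarith

theorem six_mul_le_mul_of_lt (hd : 10 ≤ d) (hdA : d ≤ A) (hAd : 3 * A < 8 * d - 5)
    (hA : 2 * M + 2 ≤ A * (A + 1)) (hm : d * (d - 1) ≤ 2 * m) :
    6 * M ≤ m * (3 * A - 2 * d - 1) := by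
  have h_concave : 0 ≤ (A - d) * (8 * d - 6 - 3 * A) := mul_nonneg (by linarith) (by linarith)
  have h_linear : 0 ≤ (A - d) * (3 * d ^ 2 - 25 * d + 6) :=
    mul_nonneg (by linarith) (by nlinarith)
  have h_fac : d * (d - 1) * (3 * A - 2 * d - 1) ≤ 2 * m * (3 * A - 2 * d - 1) :=
    mul_le_mul_of_nonneg_right hm (by linarith)
  nlinarith

theorem mul_le_choose_sum {s v : ℤ} (hc : 29 ≤ c) (hcs : 4 * c ≤ 3 * s + 6) (hsc : s + 3 ≤ 2 * c)
    (hv : 1 ≤ v) (hvs : v ^ 2 < 2 * s) :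
    s * (8 * v - 6) ≤ 3 * (c - 1) * (c - 2) + 3 * (s + 1 - c) * (s - c) := by
  rcases le_or_gt 55 s with hs | hs
  · have h_v : 16 * v ≤ 3 * s + 6 := by nlinarith
    nlinarith [sq_nonneg (2 * c - s - 3)]
  · have h_mono : 3 * s ^ 2 - 171 * s + 4704 ≤
        3 * (c - 1) * (c - 2) + 3 * (s + 1 - c) * (s - c) := by nlinarith
    have h_v : v ≤ 10 := by nlinarith
    rcases h_v.eq_or_lt with rfl | h_v
    · have h_s : 51 ≤ s := by linarith
      nlinarith [mul_nonneg (sub_nonneg.2 h_s) (show 0 ≤ 3 * s - 92 by linarith)]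
    rcases (Int.le_sub_one_of_lt h_v).eq_or_lt with rfl | h_v
    · nlinarith
    · nlinarith

end Inequalities

theorem four_mul_triRem_mul_le (n : ℕ) :
    4 * (triRem n * ((triRoot n : ℤ) - triRem n)) ≤ (triRoot n : ℤ) ^ 2 := by
  nlinarith [sq_nonneg ((triRoot n : ℤ) - 2 * triRem n)]

theorem le_sizeBound_of_chord {a n : ℕ}
    (h : 6 * (a : ℤ) + 3 * (triRem n * (triRoot n - triRem n)) ≤ 3 * chord n) :
    a ≤ sizeBound n := by
  refine le_trans ?_ (extremal_le_sizeBound n)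
  zify
  linarith [two_mul_extremal n]

section Step

/-- The numerical data of the induction step at a vertex of degree `s`, where `t` members of the
lower family avoid the vertex. The family of size `a` is split into the sets avoiding the vertex
(`x` of them) and the sets containing it, the latter according to whether their link has at least
three (`p`) or exactly two (`e`) facets in the link of the lower family. -/
structure StepEstimates (s t a x p e : ℕ) : Prop where
  one_le : 1 ≤ s
  averaging : 4 * a ≤ (s + t) * (s - 1)
  split : a ≤ x + p + e
  x_le : x ≤ sizeBound t
  add_le : ∀ i ≤ e, p + i ≤ sizeBound (s + i)
  pairs : 6 * p + 2 * e ≤ s * (s - 1)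
  e_le : e ≤ t
  e_le_mul : ∀ z, 2 * s ≤ (z + 2) ^ 2 → e ≤ s * z

/-- What the pure arithmetic of `StepEstimates` yields for concrete values of `s` and `b = s + t`;
here `Nat.sqrt (2 * s - 1) - 1` is the smallest `z` admitted by `StepEstimates.e_le_mul`. -/
def FiniteBound (b s : ℕ) : Prop :=
  b * (s - 1) / 4 ≤ sizeBound b ∨
    sizeBound (b - s) + min (sizeBound s + min (b - s) (s * (Nat.sqrt (2 * s - 1) - 1)))
      ((s * (s - 1) + 4 * min (b - s) (s * (Nat.sqrt (2 * s - 1) - 1))) / 6) ≤ sizeBound b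

instance (b s : ℕ) : Decidable (FiniteBound b s) := inferInstanceAs (Decidable (_ ∨ _))

set_option maxRecDepth 100000 in
theorem finiteBound_of_lt_of_lt : ∀ b < 406, ∀ s < 54, s ≤ b → FiniteBound b s := by
  decide +kernel

set_option maxRecDepth 100000 in
theorem finiteBound_of_lt_add : ∀ b < 325, 300 ≤ b → ∀ s < 300, b < s + 25 → FiniteBound b s := by
  decide +kernel

namespace StepEstimates

variable {s t a x p e : ℕ}

theorem p_le (h : StepEstimates s t a x p e) : p ≤ sizeBound s :=
  h.add_le 0 e.zero_le

theorem one_le_sqrt (h : StepEstimates s t a x p e) : 1 ≤ Nat.sqrt (2 * s - 1) :=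
  have h_one := h.one_le
  Nat.le_sqrt.2 (by omega)

theorem e_le_mul_sqrt (h : StepEstimates s t a x p e) :
    e ≤ s * (Nat.sqrt (2 * s - 1) - 1) := by
  have h_pos := h.one_le_sqrt
  have h_lt : 2 * s - 1 < (Nat.sqrt (2 * s - 1) + 1) ^ 2 := Nat.lt_succ_sqrt' _
  apply h.e_le_mul
  rw [show Nat.sqrt (2 * s - 1) - 1 + 2 = Nat.sqrt (2 * s - 1) + 1 by omega]
  omega

theorem le_sizeBound_of_finiteBound (h : StepEstimates s t a x p e)
    (h_fin : FiniteBound (s + t) s) : a ≤ sizeBound (s + t) := by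
  have h_e : e ≤ min t (s * (Nat.sqrt (2 * s - 1) - 1)) := le_min h.e_le h.e_le_mul_sqrt
  rw [FiniteBound, Nat.add_sub_cancel_left] at h_fin
  rcases h_fin with h_avg | h_split
  · have := h.averaging
    omega
  · have := h.p_le
    have := h.pairs
    have := h.split
    have := h.x_le
    omega

theorem le_sizeBound_of_t_eq_three (h : StepEstimates s 3 a x p e) (h_large : 300 ≤ s) :
    a ≤ sizeBound (s + 3) := by
  have h_x : x ≤ 1 := h.x_le.trans (by decide +kernel)
  have h_split := h.split
  have h_e := h.e_le
  have h_root : 25 ≤ triRoot (s + 3) := le_triRoot_iff.2 (by norm_num [Nat.choose]; omega)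
  rw [sizeBound_of_le (by omega)]
  rcases lt_or_ge (triRem (s + 3)) 3 with h_rem | h_rem
  · have h_p := h.p_le
    rw [sizeBound_of_le h_large] at h_p
    have h_gap := extremal_add_of_triRem_lt h_rem (by omega)
    have h_pos : 1 ≤ (3 - triRem (s + 3)) * (triRoot (s + 3) - 1 - 3) :=
      Nat.mul_pos (by omega) (by omega)
    rw [show (3 : ℕ).choose 2 = 3 from rfl] at h_gap
    omega
  · have h_p := h.add_le (min e 2) (min_le_left _ _)
    have h_mono : sizeBound (s + min e 2) ≤ sizeBound (s + 2) := sizeBound_mono (by omega)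
    rw [sizeBound_of_le (show 300 ≤ s + 2 by omega)] at h_mono
    have h_gap := extremal_add_of_le_triRem (m := 1) (n := s + 2) (show 1 ≤ triRem (s + 3) by omega)
    rw [show s + 2 + 1 = s + 3 from rfl, show (1 : ℕ).choose 2 = 0 from rfl] at h_gap
    omega

theorem le_sizeBound_of_lt_triRoot (h : StepEstimates s t a x p e) (h_large : 300 ≤ s + t)
    (h_t : t < triRoot (s + t)) : a ≤ sizeBound (s + t) := by
  have h_low := triRoot_mul_sub_one_le (s + t)
  rcases lt_or_ge s 300 with h_s | h_s
  · have h_root : triRoot (s + t) ≤ 25 := by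
      by_contra! h_root
      push_cast at h_low
      zify at *
      nlinarith
    exact h.le_sizeBound_of_finiteBound
      (finiteBound_of_lt_add _ (by omega) h_large _ h_s (by omega))
  have h_split := h.split
  have h_e := h.e_le
  have h_x := h.x_le
  rcases lt_or_ge t 3 with h_small | h_three
  · have h_zero : sizeBound t ≤ sizeBound 2 := sizeBound_mono (by omega)
    rw [show sizeBound 2 = 0 by decide +kernel] at h_zero
    have h_p := (h.add_le e le_rfl).trans (sizeBound_mono (Nat.add_le_add_left h_e s))
    omega
  rcases h_three.eq_or_lt with rfl | h_four
  · exact h.le_sizeBound_of_t_eq_three h_s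
  have h_window := extremal_add_choose_two_le h_t
  have h_p := h.p_le
  rw [sizeBound_of_le h_s] at h_p
  rw [sizeBound_of_le h_large]
  suffices x + t ≤ t.choose 2 by omega
  rcases (show 4 ≤ t from h_four).eq_or_lt with rfl | h_five
  · exact Nat.add_le_add_right (h_x.trans (show sizeBound 4 ≤ 2 by decide +kernel)) 4
  have h_chord := three_mul_chord_le t
  have h_root := triRoot_mul_sub_one_le t
  have h_two := two_mul_sizeBound_le_chord t
  have h_lin : 2 * (triRoot t : ℤ) + 7 ≤ 3 * t := by
    zify at h_five
    nlinarith
  zify at h_two h_x ⊢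
  nlinarith [two_mul_cast_choose_two t]

theorem six_mul_le_of_two_blocks (h : StepEstimates s t a x p e) :
    6 * (a : ℤ) ≤ 3 * chord s + 3 * chord t + 6 * e := by
  have h_s := two_mul_sizeBound_le_chord s
  have h_t := two_mul_sizeBound_le_chord t
  have h_split := h.split
  have h_x := h.x_le
  have h_p := h.p_le
  omega

theorem six_mul_add_le_of_t (h : StepEstimates s t a x p e) :
    6 * (a : ℤ) + t * (3 * triRoot s - 2 * triRoot t - 7) ≤ 3 * chord (s + t) := by
  have h_e := h.e_le
  zify at h_e
  linarith [h.six_mul_le_of_two_blocks, chord_add_le_chord s t, three_mul_chord_le t]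

theorem six_mul_add_le_of_s (h : StepEstimates s t a x p e) :
    6 * (a : ℤ) + s * (3 * triRoot t - 2 * triRoot s - 1) ≤ 3 * chord (s + t) + 6 * e := by
  have h_chord := chord_add_le_chord t s
  rw [add_comm t s] at h_chord
  linarith [h.six_mul_le_of_two_blocks, three_mul_chord_le s]

theorem le_sizeBound_of_three_mul_add_le (h : StepEstimates s t a x p e)
    (h_s : 3 * s + 7 ≤ 4 * triRoot (s + t)) : a ≤ sizeBound (s + t) := by
  apply le_sizeBound_of_chord
  have h_avg := h.averaging
  have h_one := h.one_le
  have h_chord := six_mul_chord (s + t)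
  have h_rem := two_mul_eq_triRoot_add_triRem (s + t)
  have h_root := one_le_triRoot (s + t)
  zify [h_one] at h_avg h_s h_root
  push_cast at h_chord h_rem
  generalize (triRoot (s + t) : ℤ) = c at *
  generalize (triRem (s + t) : ℤ) = k at *
  have h_size : 6 * (a : ℤ) ≤ (s + t) * (2 * c - 5) := by nlinarith
  have h_square : 0 ≤ c ^ 2 - c - 4 * (c - 1) * k + 6 * k ^ 2 := by
    nlinarith [sq_nonneg (3 * k - (c - 1))]
  nlinarith

theorem le_sizeBound_of_lt_300 (h : StepEstimates s t a x p e) (h_b : s + t < 300)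
    (h_s : 54 ≤ s) : a ≤ sizeBound (s + t) := by
  rw [le_sizeBound_iff_of_lt h_b]
  suffices 6 * (a : ℤ) ≤ 3 * chord (s + t) by omega
  have h_root : 10 ≤ triRoot s := le_triRoot_iff.2 (by norm_num [Nat.choose]; omega)
  zify at h_root
  rcases le_total t s with h_le | h_le
  · have h_mono := triRoot_mono h_le
    zify at h_mono
    nlinarith [h.six_mul_add_le_of_t]
  have h_mono := triRoot_mono h_le
  zify at h_mono
  refine le_of_add_le_add_right ((add_le_add_right ?_ _).trans h.six_mul_add_le_of_s)
  rcases lt_or_ge (3 * (triRoot t : ℤ)) (8 * triRoot s - 5) with h_close | h_far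
  · have h_e := h.e_le
    zify at h_e
    linarith [six_mul_le_mul_of_lt h_root h_mono h_close (le_triRoot_mul_add_one t)
      (triRoot_mul_sub_one_le s)]
  · have h_e : e ≤ s * (triRoot s - 1) := by
      apply h.e_le_mul
      have h_high := le_triRoot_mul_add_one s
      zify [one_le_triRoot s]
      nlinarith
    zify [one_le_triRoot s] at h_e
    nlinarith

theorem le_sizeBound_of_balanced (h : StepEstimates s t a x p e)
    (h_root : 25 ≤ triRoot (s + t)) (h_t : triRoot (s + t) ≤ t)
    (h_s : 2 * triRoot (s + t) ≤ s + 2) : a ≤ sizeBound (s + t) := by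
  apply le_sizeBound_of_chord
  have h_low := triRoot_mul_sub_one_le (s + t)
  have h_defect := four_mul_triRem_mul_le (s + t)
  have h_rem := two_mul_eq_triRoot_add_triRem (s + t)
  zify at h_root h_t h_s
  push_cast at h_low h_rem
  rcases le_total t s with h_le | h_le
  · have h_mono := triRoot_mono h_le
    have h_pos := one_le_triRoot s
    zify at h_mono h_pos h_le
    have h_gain := three_mul_sq_le h_root (by linarith) (le_triRoot_mul_add_one s)
      (triRoot_mul_sub_one_le t) h_pos h_mono h_le h_t
    linarith [h.six_mul_add_le_of_t]
  · have h_mono := triRoot_mono h_le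
    have h_pos := one_le_triRoot t
    have h_e := h.e_le
    zify at h_mono h_pos h_le h_e
    have h_gain := fifteen_mul_sq_le h_root h_low (le_triRoot_mul_add_one t)
      (triRoot_mul_sub_one_le s) h_pos h_mono h_le (by linarith)
    nlinarith [h.six_mul_add_le_of_s, sq_nonneg ((triRoot (s + t) : ℤ) + 2 - 2 * triRem (s + t))]

theorem six_mul_add_le_mul (h : StepEstimates s t a x p e) :
    ∃ v : ℤ, 1 ≤ v ∧ v ^ 2 < 2 * s ∧ 6 * ((p : ℤ) + e) ≤ s * (8 * v - 6) := by
  have h_one := h.one_le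
  have h_pos := h.one_le_sqrt
  have h_e := h.e_le_mul_sqrt
  have h_lt : 2 * s - 1 < (Nat.sqrt (2 * s - 1) + 1) ^ 2 := Nat.lt_succ_sqrt' _
  have h_le : Nat.sqrt (2 * s - 1) ^ 2 ≤ 2 * s - 1 := Nat.sqrt_le' _
  generalize Nat.sqrt (2 * s - 1) = v at *
  refine ⟨v, by exact_mod_cast h_pos, by zify [show 1 ≤ 2 * s by omega] at h_le; linarith, ?_⟩
  have h_root : (triRoot s : ℤ) ≤ v + 1 := by
    have h_low := triRoot_mul_sub_one_le s
    zify [show 1 ≤ 2 * s by omega] at h_lt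
    nlinarith
  have h_p := h.p_le
  have h_size := two_mul_sizeBound_le_chord s
  zify [h_pos] at h_e h_p h_size
  nlinarith [three_mul_chord_le s]

theorem le_sizeBound_of_window (h : StepEstimates s t a x p e)
    (h_root : 29 ≤ triRoot (s + t)) (h_s : 4 * triRoot (s + t) ≤ 3 * s + 6)
    (h_s' : s + 3 ≤ 2 * triRoot (s + t)) : a ≤ sizeBound (s + t) := by
  have h_low : (triRoot (s + t)).choose 2 ≤ s + t := le_triRoot_iff.1 le_rfl
  obtain ⟨v, hv, hvs, h_pe⟩ := h.six_mul_add_le_mul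
  have h_split := h.split
  have h_x := h.x_le
  generalize hc : triRoot (s + t) = c at *
  obtain ⟨w, rfl⟩ := Nat.exists_eq_add_of_le' (show 1 ≤ c by omega)
  obtain ⟨i, rfl⟩ := Nat.exists_eq_add_of_le (show w ≤ s by omega)
  rw [choose_two_succ] at h_low
  have h_w := two_mul_cast_choose_two w
  have h_t : 300 ≤ t := by
    zify at *
    nlinarith
  rw [show w + i + t = t + i + w by ring] at hc ⊢
  have h_outer : extremal (t + i) + w.choose 2 ≤ extremal (t + i + w) :=
    extremal_add_choose_two_le (by omega)
  have h_inner : extremal t + i.choose 2 ≤ extremal (t + i) := by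
    have h_root' : w ≤ triRoot (t + i) := le_triRoot_iff.2 (by omega)
    exact extremal_add_choose_two_le (by omega)
  have h_block : p + e ≤ w.choose 2 + i.choose 2 := by
    zify at *
    linarith [mul_le_choose_sum h_root h_s h_s' hv hvs, two_mul_cast_choose_two i]
  rw [sizeBound_of_le h_t] at h_x
  rw [sizeBound_of_le (by omega)]
  omega

theorem le_sizeBound (h : StepEstimates s t a x p e) : a ≤ sizeBound (s + t) := by
  by_cases h_finite : s + t < 406 ∧ s < 54
  · exact h.le_sizeBound_of_finiteBound
      (finiteBound_of_lt_of_lt _ h_finite.1 _ h_finite.2 (Nat.le_add_right s t))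
  rcases lt_or_ge (s + t) 300 with h_b | h_b
  · exact h.le_sizeBound_of_lt_300 h_b (by omega)
  rcases lt_or_ge t (triRoot (s + t)) with h_t | h_t
  · exact h.le_sizeBound_of_lt_triRoot h_b h_t
  have h_root : 25 ≤ triRoot (s + t) := le_triRoot_iff.2 (by norm_num [Nat.choose]; omega)
  rcases le_or_gt (2 * triRoot (s + t)) (s + 2) with h_s | h_s
  · exact h.le_sizeBound_of_balanced h_root h_t h_s
  rcases le_or_gt (3 * s + 7) (4 * triRoot (s + t)) with h_low | h_low
  · exact h.le_sizeBound_of_three_mul_add_le h_low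
  refine h.le_sizeBound_of_window ?_ (by omega) (by omega)
  by_contra! h_small
  have h_lt : s + t < (29 : ℕ).choose 2 := triRoot_lt_iff.1 h_small
  norm_num [Nat.choose] at h_lt
  omega

end StepEstimates

end Step

open Finset

section DoubleCounting

variable {α ι : Type*} [DecidableEq α] {𝒜 ℬ : Finset (Finset α)} {A B B' : Finset α} {k s : ℕ}

theorem union_eq_of_card_le_add_one (hB : B ⊆ A) (hB' : B' ⊆ A) (h : #A ≤ #B + 1)
    (h' : #A ≤ #B' + 1) (hne : B ≠ B') : B ∪ B' = A := by
  refine eq_of_subset_of_card_le (union_subset hB hB') ?_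
  by_contra! h_lt
  refine hne ?_
  rw [eq_of_subset_of_card_le (subset_union_left (s₁ := B) (s₂ := B')) (by omega),
    ← eq_of_subset_of_card_le (subset_union_right (s₁ := B) (s₂ := B')) (by omega)]

theorem card_le_card_inter_add_two (hB : B ⊆ A) (hB' : B' ⊆ A) (h : #A ≤ #B + 1)
    (h' : #A ≤ #B' + 1) (hne : B ≠ B') : #A ≤ #(B ∩ B') + 2 := by
  have h_card := card_union_add_card_inter B B'
  rw [union_eq_of_card_le_add_one hB hB' h h' hne] at h_card
  omega

theorem card_offDiag_eq_mul_sub_one (S : Finset ι) : #S.offDiag = #S * (#S - 1) := by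
  rw [offDiag_card, Nat.mul_sub_one]

theorem mul_sub_one_le_card_offDiag {S : Finset ι} (h : k ≤ #S) :
    k * (k - 1) ≤ #S.offDiag := by
  rw [card_offDiag_eq_mul_sub_one]
  exact Nat.mul_le_mul h (Nat.sub_le_sub_right h 1)

-- Two distinct facets of a set determine it as their union, so no pair is counted twice.
theorem sum_offDiag_filter_subset_le (h : ∀ A ∈ 𝒜, ∀ B ∈ ℬ, #A ≤ #B + 1)
    (w : Finset α × Finset α → ℕ) :
    ∑ A ∈ 𝒜, ∑ p ∈ {B ∈ ℬ | B ⊆ A}.offDiag, w p ≤ ∑ p ∈ ℬ.offDiag, w p := by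
  have h_union : ∀ A ∈ 𝒜, ∀ p ∈ {B ∈ ℬ | B ⊆ A}.offDiag, p.1 ∪ p.2 = A := by
    intro A hA p hp
    simp only [mem_offDiag, mem_filter] at hp
    obtain ⟨⟨h₁, hs₁⟩, ⟨h₂, hs₂⟩, hne⟩ := hp
    exact union_eq_of_card_le_add_one hs₁ hs₂ (h A hA _ h₁) (h A hA _ h₂) hne
  rw [← sum_biUnion]
  · refine sum_le_sum_of_subset (biUnion_subset.2 fun A _ => ?_)
    exact offDiag_mono (filter_subset _ _)
  · intro A hA A' hA' hne
    refine disjoint_left.2 fun p hp hp' => hne ?_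
    rw [← h_union A hA p hp, h_union A' hA' p hp']

theorem mul_card_le_of_forall_le_card_filter_subset (h : ∀ A ∈ 𝒜, ∀ B ∈ ℬ, #A ≤ #B + 1)
    (hk : ∀ A ∈ 𝒜, k ≤ #{B ∈ ℬ | B ⊆ A}) : k * (k - 1) * #𝒜 ≤ #ℬ * (#ℬ - 1) := by
  have h_sum := sum_offDiag_filter_subset_le h 1
  simp only [Pi.one_apply, sum_const, smul_eq_mul, mul_one] at h_sum
  rw [mul_comm, ← smul_eq_mul, ← card_offDiag_eq_mul_sub_one]
  exact (card_nsmul_le_sum _ _ _ fun A hA => mul_sub_one_le_card_offDiag (hk A hA)).trans h_sum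

theorem card_le_card_filter_two_le_add_two (hA : ∀ B ∈ ℬ, #A ≤ #B + 1)
    (h : 2 ≤ #{B ∈ ℬ | B ⊆ A}) :
    #A ≤ #{y ∈ A | 2 ≤ #{B ∈ {B ∈ ℬ | y ∈ B} | B ⊆ A}} + 2 := by
  obtain ⟨B, hB, B', hB', hne⟩ := one_lt_card.1 h
  have hB_mem := mem_filter.1 hB
  have hB'_mem := mem_filter.1 hB'
  refine (card_le_card_inter_add_two hB_mem.2 hB'_mem.2 (hA B hB_mem.1) (hA B' hB'_mem.1)
    hne).trans (Nat.add_le_add_right (card_le_card fun y hy => ?_) 2)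
  obtain ⟨hy, hy'⟩ := mem_inter.1 hy
  refine mem_filter.2 ⟨hB_mem.2 hy, one_lt_card.2 ⟨B, ?_, B', ?_, hne⟩⟩
  · simp only [mem_filter, hB_mem, hy, and_self]
  · simp only [mem_filter, hB'_mem, hy', and_self]

theorem sum_card_eq_sum_card_filter_mem {S : Finset ι} {g : ι → Finset α} {Y : Finset α}
    (h : ∀ i ∈ S, g i ⊆ Y) : ∑ i ∈ S, #(g i) = ∑ y ∈ Y, #{i ∈ S | y ∈ g i} := by
  refine Eq.trans (sum_congr rfl fun i hi => ?_)
    (sum_card_bipartiteAbove_eq_sum_card_bipartiteBelow fun i y => y ∈ g i)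
  rw [bipartiteAbove, filter_mem_eq_inter, inter_eq_right.2 (h i hi)]

theorem sum_card_eq_sum_card_filter_mem_biUnion (ℬ : Finset (Finset α)) :
    ∑ B ∈ ℬ, #B = ∑ y ∈ ℬ.biUnion id, #{B ∈ ℬ | y ∈ B} :=
  sum_card_eq_sum_card_filter_mem fun _ hB => subset_biUnion_of_mem id hB

theorem sum_card_inter_offDiag_le (h : ∀ y, #{B ∈ ℬ | y ∈ B} ≤ s) :
    ∑ p ∈ ℬ.offDiag, #(p.1 ∩ p.2) ≤ (∑ B ∈ ℬ, #B) * (s - 1) := by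
  have h_sub : ∀ p ∈ ℬ.offDiag, p.1 ∩ p.2 ⊆ ℬ.biUnion id := fun p hp =>
    inter_subset_left.trans (subset_biUnion_of_mem id (mem_offDiag.1 hp).1)
  rw [sum_card_eq_sum_card_filter_mem h_sub, sum_card_eq_sum_card_filter_mem_biUnion, sum_mul]
  refine sum_le_sum fun y _ => ?_
  have h_pairs : {p ∈ ℬ.offDiag | y ∈ p.1 ∩ p.2} = {B ∈ ℬ | y ∈ B}.offDiag := by
    ext p
    simp only [mem_filter, mem_offDiag, mem_inter]
    tauto
  rw [h_pairs, card_offDiag_eq_mul_sub_one]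
  exact Nat.mul_le_mul_left _ (Nat.sub_le_sub_right (h y) 1)

theorem card_memberSubfamily (a : α) (𝒜 : Finset (Finset α)) :
    #(𝒜.memberSubfamily a) = #{A ∈ 𝒜 | a ∈ A} := by
  rw [← image_insert_memberSubfamily, card_image_of_injOn]
  exact insert_erase_invOn.2.injOn.mono fun A hA => (mem_memberSubfamily.1 hA).2

theorem card_filter_mem_memberSubfamily_add_le (ℬ : Finset (Finset α)) (x y : α) :
    #{B ∈ ℬ.memberSubfamily x | y ∈ B} + #{B ∈ ℬ.nonMemberSubfamily x | y ∈ B} ≤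
      #{B ∈ ℬ | y ∈ B} := by
  rw [← card_memberSubfamily_add_card_nonMemberSubfamily x {B ∈ ℬ | y ∈ B}]
  refine Nat.add_le_add (card_le_card fun B => ?_) (card_le_card fun B => ?_)
  · simp only [mem_filter, mem_memberSubfamily, mem_insert]
    tauto
  · simp only [mem_filter, mem_nonMemberSubfamily]
    tauto

theorem card_filter_subset_insert {x : α} (hx : x ∉ A) :
    #{B ∈ ℬ | B ⊆ insert x A} =
      #{B ∈ ℬ.memberSubfamily x | B ⊆ A} + #{B ∈ ℬ | B ⊆ A} := by
  rw [← card_memberSubfamily_add_card_nonMemberSubfamily x]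
  congr 2 <;> ext B
  · simp only [mem_filter, mem_memberSubfamily]
    constructor
    · rintro ⟨⟨hB, h_sub⟩, hxB⟩
      exact ⟨⟨hB, hxB⟩, (insert_subset_insert_iff hxB).1 h_sub⟩
    · rintro ⟨⟨hB, hxB⟩, h_sub⟩
      exact ⟨⟨hB, insert_subset_insert x h_sub⟩, hxB⟩
  · simp only [mem_filter, mem_nonMemberSubfamily]
    constructor
    · rintro ⟨⟨hB, h_sub⟩, hxB⟩
      exact ⟨hB, (subset_insert_iff_of_notMem hxB).1 h_sub⟩
    · rintro ⟨hB, h_sub⟩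
      exact ⟨⟨hB, h_sub.trans (subset_insert x A)⟩, fun hxB => hx (h_sub hxB)⟩

theorem card_filter_mem_pos_iff {y : α} : 0 < #{B ∈ ℬ | y ∈ B} ↔ y ∈ ℬ.biUnion id := by
  rw [card_pos, filter_nonempty_iff, mem_biUnion]
  rfl

theorem exists_forall_card_filter_mem_le (h : (ℬ.biUnion id).Nonempty) :
    ∃ x, 0 < #{B ∈ ℬ | x ∈ B} ∧ ∀ y, #{B ∈ ℬ | y ∈ B} ≤ #{B ∈ ℬ | x ∈ B} := by
  obtain ⟨x, hx, h_max⟩ := exists_max_image (ℬ.biUnion id) (fun y => #{B ∈ ℬ | y ∈ B}) h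
  refine ⟨x, card_filter_mem_pos_iff.2 hx, fun y => ?_⟩
  rcases Nat.eq_zero_or_pos #{B ∈ ℬ | y ∈ B} with hy | hy
  · exact hy.trans_le (Nat.zero_le _)
  · exact h_max y (card_filter_mem_pos_iff.1 hy)

theorem card_filter_mem_lt_card_biUnion {y : α} (h : ∀ B ∈ ℬ, #B = 2) (hy : y ∈ ℬ.biUnion id) :
    #{B ∈ ℬ | y ∈ B} < #(ℬ.biUnion id) := by
  have h_link : ℬ.memberSubfamily y ⊆ ((ℬ.biUnion id).erase y).powersetCard 1 := by
    intro B hB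
    obtain ⟨hB, hyB⟩ := mem_memberSubfamily.1 hB
    have h_card := h _ hB
    rw [card_insert_of_notMem hyB] at h_card
    refine mem_powersetCard.2 ⟨subset_erase.2 ⟨?_, hyB⟩, by omega⟩
    exact (subset_insert y B).trans (subset_biUnion_of_mem id hB)
  refine lt_of_le_of_lt ?_ (card_erase_lt_of_mem hy)
  simpa only [card_memberSubfamily, card_powersetCard, Nat.choose_one_right]
    using card_le_card h_link

theorem exists_card_filter_mem_lt_triRoot (h : ∀ B ∈ ℬ, #B = 2) (hne : ℬ.Nonempty) :
    ∃ y, 0 < #{B ∈ ℬ | y ∈ B} ∧ #{B ∈ ℬ | y ∈ B} < triRoot #ℬ := by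
  by_contra! h_deg
  have h_root : ∀ y ∈ ℬ.biUnion id, triRoot #ℬ ≤ #{B ∈ ℬ | y ∈ B} :=
    fun y hy => h_deg y (card_filter_mem_pos_iff.2 hy)
  have h_sum : #(ℬ.biUnion id) * triRoot #ℬ ≤ 2 * #ℬ := by
    calc #(ℬ.biUnion id) * triRoot #ℬ ≤ ∑ y ∈ ℬ.biUnion id, #{B ∈ ℬ | y ∈ B} :=
          card_nsmul_le_sum _ _ _ h_root
      _ = ∑ B ∈ ℬ, #B := (sum_card_eq_sum_card_filter_mem_biUnion ℬ).symm
      _ = 2 * #ℬ := by rw [sum_congr rfl h, sum_const, smul_eq_mul, mul_comm]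
  obtain ⟨B, hB⟩ := hne
  obtain ⟨y, hyB⟩ := card_pos.1 (by rw [h B hB]; exact two_pos)
  have hy : y ∈ ℬ.biUnion id := mem_biUnion.2 ⟨B, hB, hyB⟩
  have h_card := (h_root y hy).trans_lt (card_filter_mem_lt_card_biUnion h hy)
  have h_tri := le_triRoot_mul_add_one #ℬ
  zify at h_sum h_card
  nlinarith

end DoubleCounting

namespace ValidPair

variable {r k s x : ℕ} {𝒜 𝒜' ℬ : Finset (Finset ℕ)} {A : Finset ℕ}

theorem card_le_card_add_one (h : ValidPair r k 𝒜 ℬ) : ∀ A ∈ 𝒜, ∀ B ∈ ℬ, #A ≤ #B + 1 := by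
  intro A hA B hB
  rw [h.1 A hA, h.2.1 B hB]
  omega

theorem subfamily (h : ValidPair r k 𝒜 ℬ) (h_sub : 𝒜' ⊆ 𝒜) : ValidPair r k 𝒜' ℬ :=
  ⟨fun A hA => h.1 A (h_sub hA), h.2.1, fun A hA => h.2.2 A (h_sub hA)⟩

theorem mul_card_le (h : ValidPair r k 𝒜 ℬ) : k * (k - 1) * #𝒜 ≤ #ℬ * (#ℬ - 1) :=
  mul_card_le_of_forall_le_card_filter_subset h.card_le_card_add_one h.2.2

theorem six_mul_card_filter_add_le (h : ValidPair r 2 𝒜 ℬ) :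
    6 * #{A ∈ 𝒜 | 3 ≤ #{B ∈ ℬ | B ⊆ A}} + 2 * #{A ∈ 𝒜 | ¬ 3 ≤ #{B ∈ ℬ | B ⊆ A}} ≤
      #ℬ * (#ℬ - 1) := by
  have h_sum := sum_offDiag_filter_subset_le h.card_le_card_add_one 1
  simp only [Pi.one_apply, sum_const, smul_eq_mul, mul_one] at h_sum
  rw [← sum_filter_add_sum_filter_not 𝒜 fun A => 3 ≤ #{B ∈ ℬ | B ⊆ A},
    card_offDiag_eq_mul_sub_one] at h_sum
  refine le_trans (Nat.add_le_add ?_ ?_) h_sum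
  · rw [mul_comm]
    exact card_nsmul_le_sum _ _ 6 fun A hA => mul_sub_one_le_card_offDiag (mem_filter.1 hA).2
  · rw [mul_comm]
    exact card_nsmul_le_sum _ _ 2 fun A hA =>
      mul_sub_one_le_card_offDiag (h.2.2 A (mem_filter.1 hA).1)

theorem mul_card_le_of_degree_le (h : ValidPair r k 𝒜 ℬ) (h_deg : ∀ y, #{B ∈ ℬ | y ∈ B} ≤ s) :
    k * (k - 1) * (r - 2) * #𝒜 ≤ #ℬ * (r - 1) * (s - 1) := by
  have h_inter : ∀ A ∈ 𝒜, k * (k - 1) * (r - 2) ≤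
      ∑ p ∈ {B ∈ ℬ | B ⊆ A}.offDiag, #(p.1 ∩ p.2) := by
    intro A hA
    refine (Nat.mul_le_mul_right _ (mul_sub_one_le_card_offDiag (h.2.2 A hA))).trans
      (card_nsmul_le_sum _ _ _ fun p hp => ?_)
    simp only [mem_offDiag, mem_filter] at hp
    obtain ⟨⟨h₁, hs₁⟩, ⟨h₂, hs₂⟩, hne⟩ := hp
    have h_card := card_le_card_inter_add_two hs₁ hs₂ (h.card_le_card_add_one A hA _ h₁)
      (h.card_le_card_add_one A hA _ h₂) hne
    rw [h.1 A hA] at h_card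
    omega
  calc k * (k - 1) * (r - 2) * #𝒜
      ≤ ∑ A ∈ 𝒜, ∑ p ∈ {B ∈ ℬ | B ⊆ A}.offDiag, #(p.1 ∩ p.2) := by
        rw [mul_comm]
        exact card_nsmul_le_sum _ _ _ h_inter
    _ ≤ ∑ p ∈ ℬ.offDiag, #(p.1 ∩ p.2) := sum_offDiag_filter_subset_le h.card_le_card_add_one _
    _ ≤ (∑ B ∈ ℬ, #B) * (s - 1) := sum_card_inter_offDiag_le h_deg
    _ = #ℬ * (r - 1) * (s - 1) := by rw [sum_congr rfl h.2.1, sum_const, smul_eq_mul]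

theorem four_mul_card_le_of_degree_le (h : ValidPair r 3 𝒜 ℬ) (hr : 4 ≤ r)
    (h_deg : ∀ y, #{B ∈ ℬ | y ∈ B} ≤ s) : 4 * #𝒜 ≤ #ℬ * (s - 1) := by
  have h_avg := h.mul_card_le_of_degree_le h_deg
  have h_four : (r - 1) * 4 ≤ 3 * (3 - 1) * (r - 2) := by omega
  refine Nat.le_of_mul_le_mul_left (c := r - 1) ?_ (by omega)
  calc (r - 1) * (4 * #𝒜) = (r - 1) * 4 * #𝒜 := by ring
    _ ≤ 3 * (3 - 1) * (r - 2) * #𝒜 := Nat.mul_le_mul_right _ h_four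
    _ ≤ #ℬ * (r - 1) * (s - 1) := h_avg
    _ = (r - 1) * (#ℬ * (s - 1)) := by ring

theorem two_mul_card_filter_le_of_degree_add_le {y z : ℕ} (h : ValidPair r k 𝒜 ℬ)
    (h_deg : #{B ∈ ℬ | y ∈ B} + #{A ∈ 𝒜 | y ∈ A} ≤ s) (hz : 2 * s ≤ (z + 2) ^ 2) :
    2 * #{A ∈ 𝒜 | y ∈ A ∧ 2 ≤ #{B ∈ {B ∈ ℬ | y ∈ B} | B ⊆ A}} ≤ #{B ∈ ℬ | y ∈ B} * z := by
  have h_pairs := mul_card_le_of_forall_le_card_filter_subset (k := 2)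
    (𝒜 := {A ∈ 𝒜 | y ∈ A ∧ 2 ≤ #{B ∈ {B ∈ ℬ | y ∈ B} | B ⊆ A}}) (ℬ := {B ∈ ℬ | y ∈ B})
    (fun A hA B hB => h.card_le_card_add_one A (mem_filter.1 hA).1 B (mem_filter.1 hB).1)
    (fun A hA => (mem_filter.1 hA).2.2)
  have h_mono : #{A ∈ 𝒜 | y ∈ A ∧ 2 ≤ #{B ∈ {B ∈ ℬ | y ∈ B} | B ⊆ A}} ≤ #{A ∈ 𝒜 | y ∈ A} :=
    card_le_card (monotone_filter_right 𝒜 fun _ _ hA => hA.1)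
  rcases lt_or_ge #{B ∈ ℬ | y ∈ B} (z + 2) with h_lt | h_ge
  · exact h_pairs.trans (Nat.mul_le_mul_left _ (by omega))
  · nlinarith

theorem card_le_mul_of_degree_add_le {z : ℕ} (h : ValidPair r 2 𝒜 ℬ) (hr : 3 ≤ r)
    (h_deg : ∀ y, #{B ∈ ℬ | y ∈ B} + #{A ∈ 𝒜 | y ∈ A} ≤ s) (hz : 2 * s ≤ (z + 2) ^ 2) :
    #𝒜 ≤ #ℬ * z := by
  let g (A : Finset ℕ) : Finset ℕ := {y ∈ A | 2 ≤ #{B ∈ {B ∈ ℬ | y ∈ B} | B ⊆ A}}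
  have h_low : ∀ A ∈ 𝒜, r - 2 ≤ #(g A) := by
    intro A hA
    have h_card := card_le_card_filter_two_le_add_two (h.card_le_card_add_one A hA) (h.2.2 A hA)
    rw [h.1 A hA] at h_card
    exact Nat.sub_le_of_le_add h_card
  have h_sub : ∀ A ∈ 𝒜, g A ⊆ ℬ.biUnion id := by
    intro A _ y hy
    obtain ⟨B, hB⟩ := card_pos.1 (two_pos.trans_le (mem_filter.1 hy).2)
    obtain ⟨hB, hyB⟩ := mem_filter.1 (mem_filter.1 hB).1
    exact mem_biUnion.2 ⟨B, hB, hyB⟩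
  have h_sum : 2 * (#𝒜 * (r - 2)) ≤ #ℬ * (r - 1) * z := by
    calc 2 * (#𝒜 * (r - 2)) ≤ 2 * ∑ A ∈ 𝒜, #(g A) :=
          Nat.mul_le_mul_left _ (card_nsmul_le_sum _ _ _ h_low)
      _ = ∑ y ∈ ℬ.biUnion id, 2 * #{A ∈ 𝒜 | y ∈ g A} := by
          rw [sum_card_eq_sum_card_filter_mem h_sub, mul_sum]
      _ ≤ ∑ y ∈ ℬ.biUnion id, #{B ∈ ℬ | y ∈ B} * z := by
          refine sum_le_sum fun y _ => ?_
          simp only [g, mem_filter]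
          exact h.two_mul_card_filter_le_of_degree_add_le (h_deg y) hz
      _ = #ℬ * (r - 1) * z := by
          rw [← sum_mul, ← sum_card_eq_sum_card_filter_mem_biUnion, sum_congr rfl h.2.1,
            sum_const, smul_eq_mul]
  refine Nat.le_of_mul_le_mul_left (c := r - 1) ?_ (by omega)
  have h_two : r - 1 ≤ 2 * (r - 2) := by omega
  nlinarith

theorem nonMemberSubfamily (h : ValidPair r k 𝒜 ℬ) (x : ℕ) :
    ValidPair r k (𝒜.nonMemberSubfamily x) (ℬ.nonMemberSubfamily x) := by
  refine ⟨fun A hA => h.1 A (mem_nonMemberSubfamily.1 hA).1,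
    fun B hB => h.2.1 B (mem_nonMemberSubfamily.1 hB).1, fun A hA => ?_⟩
  obtain ⟨hA, hxA⟩ := mem_nonMemberSubfamily.1 hA
  refine (h.2.2 A hA).trans (card_le_card fun B hB => ?_)
  obtain ⟨hB, h_sub⟩ := mem_filter.1 hB
  exact mem_filter.2 ⟨mem_nonMemberSubfamily.2 ⟨hB, fun hxB => hxA (h_sub hxB)⟩, h_sub⟩

theorem card_of_mem_memberSubfamily (h : ValidPair (r + 1) k 𝒜 ℬ)
    (hA : A ∈ 𝒜.memberSubfamily x) : #A = r := by
  obtain ⟨hA, hxA⟩ := mem_memberSubfamily.1 hA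
  have h_card := h.1 _ hA
  rw [card_insert_of_notMem hxA] at h_card
  omega

theorem filter_subset_subset_singleton (h : ValidPair (r + 1) k 𝒜 ℬ)
    (hA : A ∈ 𝒜.memberSubfamily x) : {B ∈ ℬ | B ⊆ A} ⊆ {A} := by
  intro B hB
  obtain ⟨hB, h_sub⟩ := mem_filter.1 hB
  refine mem_singleton.2 (eq_of_subset_of_card_le h_sub ?_)
  rw [h.card_of_mem_memberSubfamily hA, h.2.1 B hB, Nat.add_sub_cancel]

theorem memberSubfamily (h : ValidPair (r + 1) (k + 1) 𝒜 ℬ) (x : ℕ) :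
    ValidPair r k (𝒜.memberSubfamily x) (ℬ.memberSubfamily x) := by
  refine ⟨fun A hA => h.card_of_mem_memberSubfamily hA, fun B hB => ?_, fun A hA => ?_⟩
  · obtain ⟨hB, hxB⟩ := mem_memberSubfamily.1 hB
    have h_card := h.2.1 _ hB
    rw [card_insert_of_notMem hxB] at h_card
    omega
  · have h_single := card_le_card (h.filter_subset_subset_singleton hA)
    obtain ⟨hA, hxA⟩ := mem_memberSubfamily.1 hA
    have h_card := h.2.2 _ hA
    rw [card_filter_subset_insert hxA] at h_card
    rw [card_singleton] at h_single
    omega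

theorem mem_of_mem_memberSubfamily (h : ValidPair (r + 1) (k + 1) 𝒜 ℬ)
    (hA : A ∈ 𝒜.memberSubfamily x) (h_le : #{B ∈ ℬ.memberSubfamily x | B ⊆ A} ≤ k) : A ∈ ℬ := by
  have h_card := h.2.2 _ (mem_memberSubfamily.1 hA).1
  rw [card_filter_subset_insert (mem_memberSubfamily.1 hA).2] at h_card
  obtain ⟨B, hB⟩ : {B ∈ ℬ | B ⊆ A}.Nonempty := card_pos.1 (by omega)
  rw [← mem_singleton.1 (h.filter_subset_subset_singleton hA hB)]
  exact (mem_filter.1 hB).1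

theorem exists_le_card_filter_insert (hA : #A = r) (hk : k < r)
    (h : k ≤ #{B ∈ ℬ | B ⊆ A}) :
    ∃ B, #B = r - 1 ∧ k + 1 ≤ #{B' ∈ insert B ℬ | B' ⊆ A} := by
  by_cases h_sub : A.powersetCard (r - 1) ⊆ ℬ
  · obtain ⟨B, -, hB_card⟩ := exists_subset_card_eq (hA.symm ▸ Nat.sub_le r 1 : r - 1 ≤ #A)
    refine ⟨B, hB_card, ?_⟩
    calc k + 1 ≤ #(A.powersetCard (r - 1)) := by
          obtain ⟨m, rfl⟩ := Nat.exists_eq_add_of_lt hk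
          rw [card_powersetCard, hA, Nat.add_sub_cancel, Nat.choose_succ_self_right]
          omega
      _ ≤ #{B' ∈ insert B ℬ | B' ⊆ A} := card_le_card fun B' hB' =>
          mem_filter.2 ⟨mem_insert_of_mem (h_sub hB'), (mem_powersetCard.1 hB').1⟩
  · obtain ⟨B, hB, hBℬ⟩ := not_subset.1 h_sub
    obtain ⟨hBA, hB_card⟩ := mem_powersetCard.1 hB
    refine ⟨B, hB_card, ?_⟩
    rw [filter_insert, if_pos hBA, card_insert_of_notMem fun h => hBℬ (mem_filter.1 h).1]
    omega

theorem exists_union_validPair {𝒮 : Finset (Finset ℕ)} (h : ValidPair r (k + 1) 𝒜 ℬ)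
    (h𝒮 : ValidPair r k 𝒮 ℬ) (hk : k < r) :
    ∃ ℬ', #ℬ' ≤ #ℬ + #𝒮 ∧ ValidPair r (k + 1) (𝒜 ∪ 𝒮) ℬ' := by
  have h_facet : ∀ A ∈ 𝒮, ∃ B, #B = r - 1 ∧ k + 1 ≤ #{B' ∈ insert B ℬ | B' ⊆ A} :=
    fun A hA => exists_le_card_filter_insert (h𝒮.1 A hA) hk (h𝒮.2.2 A hA)
  choose! g hg_card hg using h_facet
  refine ⟨ℬ ∪ 𝒮.image g, (card_union_le _ _).trans (Nat.add_le_add_left card_image_le _),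
    fun A hA => (mem_union.1 hA).elim (h.1 A) (h𝒮.1 A), fun B hB => ?_, fun A hA => ?_⟩
  · rcases mem_union.1 hB with hB | hB
    · exact h.2.1 B hB
    · obtain ⟨A, hA, rfl⟩ := mem_image.1 hB
      exact hg_card A hA
  · rcases mem_union.1 hA with hA | hA
    · exact (h.2.2 A hA).trans (card_le_card (filter_subset_filter _ subset_union_left))
    · refine (hg A hA).trans (card_le_card (filter_subset_filter _ ?_))
      exact insert_subset (mem_union_right _ (mem_image_of_mem g hA)) subset_union_left

theorem card_le_extremal (h : ValidPair 3 3 𝒜 ℬ) : #𝒜 ≤ extremal #ℬ := by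
  induction hn : #ℬ using Nat.strong_induction_on generalizing 𝒜 ℬ with
  | h n ih =>
    subst hn
    rcases ℬ.eq_empty_or_nonempty with rfl | hne
    · have h_zero := h.mul_card_le
      rw [card_empty] at h_zero ⊢
      omega
    obtain ⟨x, h_pos, h_lt⟩ := exists_card_filter_mem_lt_triRoot h.2.1 hne
    rw [← card_memberSubfamily] at h_pos h_lt
    have h_split := card_memberSubfamily_add_card_nonMemberSubfamily x 𝒜
    have h_split' := card_memberSubfamily_add_card_nonMemberSubfamily x ℬ
    have h_link := (h.memberSubfamily x).mul_card_le
    have h_rest := ih _ (by omega) (h.nonMemberSubfamily x) rfl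
    rw [add_comm] at h_split'
    rw [← h_split'] at h_lt
    have h_step := extremal_add_choose_two_le h_lt
    rw [h_split', Nat.choose_two_right] at h_step
    omega

theorem filter_not_subset_nonMemberSubfamily (h : ValidPair (r + 1) 3 𝒜 ℬ) (x : ℕ) :
    {A ∈ 𝒜.memberSubfamily x | ¬ 3 ≤ #{B ∈ ℬ.memberSubfamily x | B ⊆ A}} ⊆
      ℬ.nonMemberSubfamily x := by
  intro A hA
  obtain ⟨hA, h_lt⟩ := mem_filter.1 hA
  exact mem_nonMemberSubfamily.2
    ⟨h.mem_of_mem_memberSubfamily hA (by omega), (mem_memberSubfamily.1 hA).2⟩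

theorem card_filter_add_le_sizeBound {i : ℕ} (h : ValidPair r 2 𝒜 ℬ) (hr : 3 ≤ r)
    (ih : ∀ ℛ ℒ, ValidPair r 3 ℛ ℒ → #ℛ ≤ sizeBound #ℒ)
    (hi : i ≤ #{A ∈ 𝒜 | ¬ 3 ≤ #{B ∈ ℬ | B ⊆ A}}) :
    #{A ∈ 𝒜 | 3 ≤ #{B ∈ ℬ | B ⊆ A}} + i ≤ sizeBound (#ℬ + i) := by
  obtain ⟨𝒮, h𝒮, rfl⟩ := exists_subset_card_eq hi
  have h_rich : ValidPair r 3 {A ∈ 𝒜 | 3 ≤ #{B ∈ ℬ | B ⊆ A}} ℬ :=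
    ⟨fun A hA => h.1 A (mem_filter.1 hA).1, h.2.1, fun A hA => (mem_filter.1 hA).2⟩
  obtain ⟨ℬ', h_card, h_valid⟩ :=
    h_rich.exists_union_validPair (h.subfamily (h𝒮.trans (filter_subset _ _))) hr
  rw [← card_union_of_disjoint ((disjoint_filter_filter_not 𝒜 𝒜 _).mono_right h𝒮)]
  exact (ih _ _ h_valid).trans (sizeBound_mono h_card)

theorem stepEstimates (h : ValidPair (r + 1) 3 𝒜 ℬ) (hr : 3 ≤ r)
    (ih : ∀ ℛ ℒ, ValidPair r 3 ℛ ℒ → #ℛ ≤ sizeBound #ℒ)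
    (ih_rest : #(𝒜.nonMemberSubfamily x) ≤ sizeBound #(ℬ.nonMemberSubfamily x))
    (h_pos : 0 < #{B ∈ ℬ | x ∈ B}) (h_max : ∀ y, #{B ∈ ℬ | y ∈ B} ≤ #{B ∈ ℬ | x ∈ B}) :
    StepEstimates #(ℬ.memberSubfamily x) #(ℬ.nonMemberSubfamily x) #𝒜 #(𝒜.nonMemberSubfamily x)
      #{A ∈ 𝒜.memberSubfamily x | 3 ≤ #{B ∈ ℬ.memberSubfamily x | B ⊆ A}}
      #{A ∈ 𝒜.memberSubfamily x | ¬ 3 ≤ #{B ∈ ℬ.memberSubfamily x | B ⊆ A}} := by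
  have h_link : ValidPair r 2 (𝒜.memberSubfamily x) (ℬ.memberSubfamily x) := h.memberSubfamily x
  have h_poor := h.filter_not_subset_nonMemberSubfamily x
  rw [← card_memberSubfamily] at h_pos h_max
  refine ⟨h_pos, ?_, ?_, ih_rest, fun i hi => h_link.card_filter_add_le_sizeBound hr ih hi,
    h_link.six_mul_card_filter_add_le, card_le_card h_poor, fun z hz => ?_⟩
  · rw [card_memberSubfamily_add_card_nonMemberSubfamily]
    exact h.four_mul_card_le_of_degree_le (by omega) h_max
  · rw [add_assoc, card_filter_add_card_filter_not, add_comm,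
      card_memberSubfamily_add_card_nonMemberSubfamily]
  · refine (h_link.subfamily (filter_subset _ _)).card_le_mul_of_degree_add_le hr
      (fun y => ?_) hz
    calc _ ≤ #{B ∈ ℬ.memberSubfamily x | y ∈ B} + #{B ∈ ℬ.nonMemberSubfamily x | y ∈ B} :=
          Nat.add_le_add_left (card_le_card (filter_subset_filter _ h_poor)) _
      _ ≤ #{B ∈ ℬ | y ∈ B} := card_filter_mem_memberSubfamily_add_le ℬ x y
      _ ≤ #(ℬ.memberSubfamily x) := h_max y

theorem card_le_sizeBound_of_forall (h : ValidPair (r + 1) 3 𝒜 ℬ) (hr : 3 ≤ r)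
    (ih : ∀ ℛ ℒ, ValidPair r 3 ℛ ℒ → #ℛ ≤ sizeBound #ℒ) : #𝒜 ≤ sizeBound #ℬ := by
  induction hn : #ℬ using Nat.strong_induction_on generalizing 𝒜 ℬ with
  | h n ih_card =>
    subst hn
    rcases ℬ.eq_empty_or_nonempty with rfl | ⟨B, hB⟩
    · have h_zero := h.mul_card_le
      rw [card_empty] at h_zero ⊢
      omega
    obtain ⟨y, hyB⟩ : B.Nonempty := card_pos.1 (by rw [h.2.1 B hB]; omega)
    obtain ⟨x, h_pos, h_max⟩ := exists_forall_card_filter_mem_le ⟨y, mem_biUnion.2 ⟨B, hB, hyB⟩⟩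
    have h_split := card_memberSubfamily_add_card_nonMemberSubfamily x ℬ
    have h_lt : #(ℬ.nonMemberSubfamily x) < #ℬ := by
      rw [card_memberSubfamily] at h_split
      omega
    have h_rest := ih_card _ h_lt (h.nonMemberSubfamily x) rfl
    rw [← h_split]
    exact (h.stepEstimates hr ih h_rest h_pos h_max).le_sizeBound

theorem card_le_sizeBound (h : ValidPair r 3 𝒜 ℬ) (hr : 3 ≤ r) : #𝒜 ≤ sizeBound #ℬ := by
  induction r, hr using Nat.le_induction generalizing 𝒜 ℬ with
  | base => exact h.card_le_extremal.trans (extremal_le_sizeBound _)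
  | succ r hr ih => exact h.card_le_sizeBound_of_forall hr fun _ _ h => ih h

end ValidPair

section Construction

variable {c j k : ℕ}

/-- The initial segment of size `C(c, j + 1) + C(k, j)` of the colexicographic order on
`(j + 1)`-sets, where `k ≤ c`: all `(j + 1)`-sets below `c`, and the sets consisting of `c` and
`j` elements below `k`. -/
def colexSegment (c k j : ℕ) : Finset (Finset ℕ) :=
  powersetCard (j + 1) (range c) ∪ (powersetCard j (range k)).image (insert c)

theorem notMem_of_mem_powersetCard_range {S : Finset ℕ} (hk : k ≤ c)
    (hS : S ∈ powersetCard j (range k)) : c ∉ S :=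
  notMem_mono (mem_powersetCard.1 hS).1 fun hc => (mem_range.1 hc).not_ge hk

theorem card_colexSegment (hk : k ≤ c) :
    #(colexSegment c k j) = c.choose (j + 1) + k.choose j := by
  rw [colexSegment, card_union_of_disjoint, card_image_of_injOn]
  · simp only [card_powersetCard, card_range]
  · exact insert_erase_invOn.2.injOn.mono fun S => notMem_of_mem_powersetCard_range hk
  · refine disjoint_left.2 fun S hS hS' => ?_
    obtain ⟨S', -, rfl⟩ := mem_image.1 hS'
    exact notMem_of_mem_powersetCard_range le_rfl hS (mem_insert_self c S')

theorem subset_and_card_of_mem_colexSegment {S : Finset ℕ} (hk : k ≤ c)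
    (hS : S ∈ colexSegment c k j) : S ⊆ range (c + 1) ∧ #S = j + 1 := by
  rcases mem_union.1 hS with hS | hS
  · obtain ⟨h_sub, h_card⟩ := mem_powersetCard.1 hS
    exact ⟨h_sub.trans (range_subset_range.2 c.le_succ), h_card⟩
  · obtain ⟨T, hT, rfl⟩ := mem_image.1 hS
    obtain ⟨h_sub, h_card⟩ := mem_powersetCard.1 hT
    refine ⟨insert_subset (self_mem_range_succ c) ?_, ?_⟩
    · exact h_sub.trans (range_subset_range.2 (hk.trans c.le_succ))
    · rw [card_insert_of_notMem (notMem_of_mem_powersetCard_range hk hT), h_card]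

theorem powersetCard_subset_colexSegment {S : Finset ℕ} (hk : k ≤ c)
    (hS : S ∈ colexSegment c k (j + 1)) : powersetCard (j + 1) S ⊆ colexSegment c k j := by
  intro T hT
  obtain ⟨hTS, hT_card⟩ := mem_powersetCard.1 hT
  rcases mem_union.1 hS with hS | hS
  · exact mem_union_left _ (mem_powersetCard.2 ⟨hTS.trans (mem_powersetCard.1 hS).1, hT_card⟩)
  obtain ⟨U, hU, rfl⟩ := mem_image.1 hS
  have hU_sub := (mem_powersetCard.1 hU).1
  by_cases hcT : c ∈ T
  · refine mem_union_right _ (mem_image.2 ⟨T.erase c, mem_powersetCard.2 ⟨?_, ?_⟩,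
      insert_erase hcT⟩)
    · exact (subset_insert_iff.1 hTS).trans hU_sub
    · rw [card_erase_of_mem hcT, hT_card, Nat.add_sub_cancel]
  · refine mem_union_left _ (mem_powersetCard.2 ⟨?_, hT_card⟩)
    exact ((subset_insert_iff_of_notMem hcT).1 hTS).trans
      (hU_sub.trans (range_subset_range.2 hk))

theorem validPair_colexSegment (hk : k ≤ c) :
    ValidPair (j + 2) (j + 2) (colexSegment c k (j + 1)) (colexSegment c k j) := by
  refine ⟨fun A hA => (subset_and_card_of_mem_colexSegment hk hA).2,
    fun B hB => (subset_and_card_of_mem_colexSegment hk hB).2, fun A hA => ?_⟩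
  have h_card : #(A.powersetCard (j + 1)) = j + 2 := by
    rw [card_powersetCard, (subset_and_card_of_mem_colexSegment hk hA).2,
      Nat.choose_succ_self_right]
  rw [← h_card]
  exact card_le_card fun B hB => mem_filter.2
    ⟨powersetCard_subset_colexSegment hk hA hB, (mem_powersetCard.1 hB).1⟩

theorem injOn_union_left {α : Type*} [DecidableEq α] (D : Finset α) :
    Set.InjOn (D ∪ ·) {S | Disjoint D S} := by
  intro S hS T hT h
  rw [← union_sdiff_cancel_left hS, ← union_sdiff_cancel_left hT]
  exact congrArg (· \ D) h

theorem ValidPair.image_union {r : ℕ} {𝒜 ℬ : Finset (Finset ℕ)} {D : Finset ℕ}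
    (h : ValidPair (r + 1) k 𝒜 ℬ) (h𝒜 : ∀ A ∈ 𝒜, Disjoint D A) (hℬ : ∀ B ∈ ℬ, Disjoint D B) :
    ValidPair (r + 1 + #D) k (𝒜.image (D ∪ ·)) (ℬ.image (D ∪ ·)) := by
  refine ⟨forall_mem_image.2 fun A hA => ?_, forall_mem_image.2 fun B hB => ?_,
    forall_mem_image.2 fun A hA => ?_⟩
  · rw [card_union_of_disjoint (h𝒜 A hA), h.1 A hA, add_comm]
  · rw [card_union_of_disjoint (hℬ B hB), h.2.1 B hB]
    omega
  · refine (h.2.2 A hA).trans ?_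
    rw [← card_image_of_injOn ((injOn_union_left D).mono fun B hB => hℬ B (mem_filter.1 hB).1)]
    refine card_le_card (image_subset_iff.2 fun B hB => mem_filter.2 ⟨?_, ?_⟩)
    · exact mem_image_of_mem _ (mem_filter.1 hB).1
    · exact union_subset_union_right (mem_filter.1 hB).2

theorem exists_validPair {r : ℕ} (hr : 3 ≤ r) (hk : k ≤ c) : ∃ 𝒜 ℬ : Finset (Finset ℕ),
    ValidPair r 3 𝒜 ℬ ∧ #ℬ = c.choose 2 + k ∧ #𝒜 = c.choose 3 + k.choose 2 := by
  let D := Ico (c + 1) (c + 1 + (r - 3))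
  have h_disj : ∀ j, ∀ S ∈ colexSegment c k j, Disjoint D S := by
    intro j S hS
    refine disjoint_left.2 fun i hiD hiS => (mem_Ico.1 hiD).1.not_gt ?_
    exact mem_range.1 ((subset_and_card_of_mem_colexSegment hk hS).1 hiS)
  have h_card : ∀ j, #((colexSegment c k j).image (D ∪ ·)) = c.choose (j + 1) + k.choose j :=
    fun j => by rw [card_image_of_injOn ((injOn_union_left D).mono (h_disj j)),
      card_colexSegment hk]
  have h_valid := (validPair_colexSegment (j := 1) hk).image_union (h_disj 2) (h_disj 1)
  rw [Nat.card_Ico, Nat.add_sub_cancel_left, Nat.add_sub_cancel' hr] at h_valid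
  exact ⟨_, _, h_valid, by rw [h_card, Nat.choose_one_right], h_card 2⟩

end Construction

theorem stmt_2_general (r c₂ c₁ : ℕ) (hr : 3 ≤ r) (hc : c₁ < c₂) (hc₂ : 25 ≤ c₂) :
    f r 3 (c₂.choose 2 + c₁) = c₂.choose 3 + c₁.choose 2 := by
  have h_large : 300 ≤ c₂.choose 2 + c₁ :=
    (Nat.choose_le_choose 2 hc₂).trans (Nat.le_add_right _ _)
  have h_greatest : IsGreatest {a : ℕ | ∃ 𝒜 ℬ : Finset (Finset ℕ), ValidPair r 3 𝒜 ℬ ∧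
      #ℬ = c₂.choose 2 + c₁ ∧ #𝒜 = a} (c₂.choose 3 + c₁.choose 2) := by
    refine ⟨exists_validPair hr hc.le, ?_⟩
    rintro _ ⟨𝒜, ℬ, h_valid, h_card, rfl⟩
    rw [← extremal_choose_two_add hc, ← sizeBound_of_le h_large, ← h_card]
    exact h_valid.card_le_sizeBound hr
  exact h_greatest.csSup_eq

theorem stmt_2 (r c₂ c₁ : ℕ) (hr : 3 ≤ r) (hc : c₁ < c₂) (hc₂ : 29 ≤ c₂) :
    f r 3 (c₂.choose 2 + c₁) = c₂.choose 3 + c₁.choose 2 :=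
  stmt_2_general r c₂ c₁ hr hc (by omega)
end

section
/- For all integers r ≥ 2 and b ≥ 0, one has f(r, 2, b) = C(b, 2); that is, every 2-valid pair (𝒜, ℬ) with |ℬ| = b satisfies |𝒜| ≤ C(b,2), and there is a 2-valid pair with |ℬ| = b and |𝒜| = C(b,2). -/
/-!
Two distinct `(r - 1)`-subsets of an `r`-set have that set as their union, so in a `2`-valid pair
every member of `𝒜` is the union of some pair of members of `ℬ`; this gives the upper bound.
For the lower bound, the `k`-subsets and `(k - 1)`-subsets of an `m`-set form a `k`-valid pair, and
adjoining the same `r - k` new points to every set raises the uniformity from `k` to `r`.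
-/

open Finset

section Union

variable {α : Type*}

lemma wcovBy_of_subset_of_card_le_card_add_one {s t : Finset α} (hst : s ⊆ t)
    (hcard : #t ≤ #s + 1) : s ⩿ t := by
  refine ⟨hst, fun u hsu hut ↦ ?_⟩
  have hsu_card : #s < #u := card_lt_card hsu
  have hut_card : #u < #t := card_lt_card hut
  lia

lemma card_le_choose_two_of_forall_exists_union_eq [DecidableEq α] {𝒜 ℬ : Finset (Finset α)}
    (h : ∀ A ∈ 𝒜, ∃ X ∈ ℬ, ∃ Y ∈ ℬ, X ≠ Y ∧ X ∪ Y = A) : #𝒜 ≤ (#ℬ).choose 2 := by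
  have h𝒜 : 𝒜 ⊆ (ℬ.powersetCard 2).image fun P ↦ P.sup id := by
    intro A hA
    obtain ⟨X, hX, Y, hY, hXY, rfl⟩ := h A hA
    refine mem_image.2 ⟨{X, Y}, mem_powersetCard.2 ⟨?_, card_pair hXY⟩, by simp⟩
    exact insert_subset hX (singleton_subset_iff.2 hY)
  calc
    #𝒜 ≤ #((ℬ.powersetCard 2).image fun P ↦ P.sup id) := card_le_card h𝒜
    _ ≤ #(ℬ.powersetCard 2) := card_image_le
    _ = (#ℬ).choose 2 := card_powersetCard 2 ℬ

lemma card_image_union_powersetCard [DecidableEq α] {s C : Finset α}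
    (h : Disjoint C s) (n : ℕ) : #((s.powersetCard n).image (· ∪ C)) = (#s).choose n := by
  have hinj : Set.InjOn (· ∪ C) (s.powersetCard n : Set (Finset α)) :=
    (disjoint_injOn_union_left C).mono fun A hA ↦ h.mono_right (mem_powersetCard.1 hA).1
  rw [card_image_of_injOn hinj, card_powersetCard]

end Union

namespace ValidPair

variable {r k : ℕ} {𝒜 ℬ : Finset (Finset ℕ)}

lemma exists_union_eq (h : ValidPair r 2 𝒜 ℬ) {A : Finset ℕ} (hA : A ∈ 𝒜) :
    ∃ X ∈ ℬ, ∃ Y ∈ ℬ, X ≠ Y ∧ X ∪ Y = A := by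
  obtain ⟨h𝒜, hℬ, hle⟩ := h
  have wcovBy {B : Finset ℕ} (hB : B ∈ ℬ) (hBA : B ⊆ A) : B ⩿ A := by
    have hA_card := h𝒜 A hA
    have hB_card := hℬ B hB
    exact wcovBy_of_subset_of_card_le_card_add_one hBA (by lia)
  obtain ⟨X, hX, Y, hY, hXY⟩ := one_lt_card.1 (hle A hA)
  obtain ⟨hXℬ, hXA⟩ := mem_filter.1 hX
  obtain ⟨hYℬ, hYA⟩ := mem_filter.1 hY
  exact ⟨X, hXℬ, Y, hYℬ, hXY, (wcovBy hXℬ hXA).sup_eq (wcovBy hYℬ hYA) hXY⟩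

lemma card_le_choose_two (h : ValidPair r 2 𝒜 ℬ) : #𝒜 ≤ (#ℬ).choose 2 :=
  card_le_choose_two_of_forall_exists_union_eq fun _ ↦ h.exists_union_eq

lemma powersetCard (k : ℕ) (s : Finset ℕ) :
    ValidPair k k (s.powersetCard k) (s.powersetCard (k - 1)) := by
  refine ⟨fun A hA ↦ (mem_powersetCard.1 hA).2, fun B hB ↦ (mem_powersetCard.1 hB).2,
    fun A hA ↦ ?_⟩
  obtain ⟨hAs, hA_card⟩ := mem_powersetCard.1 hA
  have hsub : A.powersetCard (k - 1) ⊆ {B ∈ s.powersetCard (k - 1) | B ⊆ A} := fun B hB ↦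
    mem_filter.2 ⟨powersetCard_mono hAs hB, (mem_powersetCard.1 hB).1⟩
  calc
    k ≤ k.choose (k - 1) := by cases k <;> simp
    _ = #(A.powersetCard (k - 1)) := by rw [card_powersetCard, hA_card]
    _ ≤ #{B ∈ s.powersetCard (k - 1) | B ⊆ A} := card_le_card hsub

lemma image_union_s3 (h : ValidPair r k 𝒜 ℬ) (hr : 1 ≤ r) {C : Finset ℕ}
    (h𝒜C : ∀ A ∈ 𝒜, Disjoint C A) (hℬC : ∀ B ∈ ℬ, Disjoint C B) :
    ValidPair (r + #C) k (𝒜.image (· ∪ C)) (ℬ.image (· ∪ C)) := by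
  obtain ⟨h𝒜, hℬ, hle⟩ := h
  refine ⟨forall_mem_image.2 fun A hA ↦ ?_, forall_mem_image.2 fun B hB ↦ ?_,
    forall_mem_image.2 fun A hA ↦ ?_⟩
  · rw [card_union_of_disjoint (h𝒜C A hA).symm, h𝒜 A hA]
  · rw [card_union_of_disjoint (hℬC B hB).symm, hℬ B hB]
    lia
  · have hinj : Set.InjOn (· ∪ C) ({B ∈ ℬ | B ⊆ A} : Finset (Finset ℕ)) :=
      (disjoint_injOn_union_left C).mono fun B hB ↦ hℬC B (mem_filter.1 hB).1
    have hsub : {B ∈ ℬ | B ⊆ A}.image (· ∪ C) ⊆ {B ∈ ℬ.image (· ∪ C) | B ⊆ A ∪ C} := by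
      refine image_subset_iff.2 fun B hB ↦ ?_
      obtain ⟨hBℬ, hBA⟩ := mem_filter.1 hB
      exact mem_filter.2 ⟨mem_image_of_mem _ hBℬ, union_subset_union_left hBA⟩
    calc
      k ≤ #{B ∈ ℬ | B ⊆ A} := hle A hA
      _ = #({B ∈ ℬ | B ⊆ A}.image (· ∪ C)) := (card_image_of_injOn hinj).symm
      _ ≤ #{B ∈ ℬ.image (· ∪ C) | B ⊆ A ∪ C} := card_le_card hsub

end ValidPair

lemma exists_validPair_card_eq_choose {r k : ℕ} (hk : 1 ≤ k) (hkr : k ≤ r) (m : ℕ) :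
    ∃ 𝒜 ℬ : Finset (Finset ℕ),
      ValidPair r k 𝒜 ℬ ∧ #ℬ = m.choose (k - 1) ∧ #𝒜 = m.choose k := by
  let C := Ico m (m + (r - k))
  have hC_card : k + #C = r := by
    rw [Nat.card_Ico]
    lia
  have hC : Disjoint C (range m) :=
    disjoint_left.2 fun i hi him ↦ (mem_Ico.1 hi).1.not_gt (mem_range.1 him)
  have hC_powersetCard (n : ℕ) : ∀ A ∈ (range m).powersetCard n, Disjoint C A := fun A hA ↦
    hC.mono_right (mem_powersetCard.1 hA).1
  have hvalid := (ValidPair.powersetCard k (range m)).image_union_s3 hk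
    (hC_powersetCard k) (hC_powersetCard (k - 1))
  rw [hC_card] at hvalid
  refine ⟨_, _, hvalid, ?_, ?_⟩ <;> rw [card_image_union_powersetCard hC, card_range]

theorem stmt_3 (r b : ℕ) (hr : 2 ≤ r) :
    f r 2 b = b.choose 2 ∧
    (∀ 𝒜 ℬ : Finset (Finset ℕ), ValidPair r 2 𝒜 ℬ → ℬ.card = b → 𝒜.card ≤ b.choose 2) ∧
    (∃ 𝒜 ℬ : Finset (Finset ℕ), ValidPair r 2 𝒜 ℬ ∧ ℬ.card = b ∧ 𝒜.card = b.choose 2) := by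
  have upper : ∀ 𝒜 ℬ : Finset (Finset ℕ),
      ValidPair r 2 𝒜 ℬ → #ℬ = b → #𝒜 ≤ b.choose 2 := by
    rintro 𝒜 ℬ h rfl
    exact h.card_le_choose_two
  have attained : ∃ 𝒜 ℬ : Finset (Finset ℕ),
      ValidPair r 2 𝒜 ℬ ∧ #ℬ = b ∧ #𝒜 = b.choose 2 := by
    simpa using exists_validPair_card_eq_choose one_le_two hr b
  have greatest : IsGreatest {a : ℕ | ∃ 𝒜 ℬ : Finset (Finset ℕ),
      ValidPair r 2 𝒜 ℬ ∧ #ℬ = b ∧ #𝒜 = a} (b.choose 2) := by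
    refine ⟨attained, ?_⟩
    rintro a ⟨𝒜, ℬ, hvalid, hℬ, rfl⟩
    exact upper 𝒜 ℬ hvalid hℬ
  exact ⟨greatest.csSup_eq, upper, attained⟩
end
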